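/- arXiv:2402.13626 — 5 statements merged into one kernel-verified Lean document; each statement's English description precedes it below -/
import Mathlib

section
/- Let k ≥ 1 be an integer and let W : ℝ → [0,∞) be continuous with W(-1) = W(1) = 0 and W(z) ≥ α_W · min{(z+1)², (z-1)², β_W} for some α_W, β_W > 0. For ε > 0 define F_ε(u) = ∫₀¹ ( (1/ε)·W(u(t)) + ε^{2k-1}·(u^{(k)}(t))² ) dt for u ∈ H^k(0,1). Then the family {F_ε} is equicoercive with respect to convergence in measure: for every sequence ε_j → 0 and every sequence u_j ∈ H^k(0,1) with sup_j F_{ε_j}(u_j) < +∞, there exists a function u ∈ BV((0,1); {-1,1}) (i.e. a piecewise-constant function on (0,1) taking only the values -1 and 1, with finitely many jump points) such that, up to extraction of a subsequence, u_j → u in measure on (0,1). -/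
/-!
The functional is invariant under the blow-up `s ↦ u (a + ε s)`, so an interval of length `ε` may be
treated as the unit interval with energy density `W(g) + (g^{(k)})²`. If the energy on it is less
than a constant `η` depending on `k`, `αW`, `βW`, then `g` is near a well at many separated points
(otherwise the potential term is too large) and `g^{(k-1)}` has small oscillation, so `g` is nearly
a polynomial of degree at most `k - 1`. Mean value arguments, in place of Lagrange interpolation,
then show that `g` is nearly constant on the unit interval, so it has no zero there
(`no_zero_unit`). By continuity `u` keeps its sign on every subinterval of `(0,1)` of energy less
than `η` and length more than `2ε` (`no_zero_of_energy`).

For the compactness, Tychonoff's theorem gives a subsequence along which the energies of all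
intervals with rational endpoints, and the signs of `u_j` at all rational points, converge. The
points all of whose rational neighbourhoods have limiting energy at least `η` are finitely many
(`finite_concentration`). Near any other point the sign of `u_j` is eventually constant in space and
in `j`; the limit sign is the function `v`, which is therefore locally constant off a finite set.
The signs converge almost everywhere, hence in measure, and `u_j` is close to `±1` outside a set of
measure `O(ε_j)` by Chebyshev's inequality (`volume_far_tendsto`), which gives `u_j → v` in measure.
-/

open MeasureTheory Filter Topology Set
open scoped ENNReal NNReal

/-- The scaled one-dimensional Cahn–Hilliard type functional
`F_ε(u) = ∫₀¹ ((1/ε) W(u) + ε^{2k-1} (u^{(k)})²) dt`, with values in `ℝ≥0∞`. -/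
noncomputable def Fe (k : ℕ) (W : ℝ → ℝ) (ε : ℝ) (u : ℝ → ℝ) : ℝ≥0∞ :=
  ∫⁻ t in Set.Ioo (0:ℝ) 1,
    ENNReal.ofReal ((1 / ε) * W (u t) + ε ^ (2 * k - 1) * (iteratedDeriv k u t) ^ 2)

/-- `v ∈ BV((0,1); {-1,1})` with (finite) jump set `S`: on `(0,1)` the function `v`
takes only the values `-1` and `1`, it is locally constant off `S ⊆ (0,1)`, and it
genuinely jumps at each point of `S`. -/
def PMJump (v : ℝ → ℝ) (S : Finset ℝ) : Prop :=
  (↑S ⊆ Set.Ioo (0:ℝ) 1) ∧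
  (∀ t ∈ Set.Ioo (0:ℝ) 1, v t = -1 ∨ v t = 1) ∧
  (∀ t ∈ Set.Ioo (0:ℝ) 1, t ∉ S → ∀ᶠ s in 𝓝 t, v s = v t) ∧
  (∀ t ∈ S, ∀ δ > (0:ℝ), ∃ s ∈ Set.Ioo (0:ℝ) 1, |s - t| < δ ∧ v s ≠ v t)

/-! ### Rigidity on an interval of unit length -/

/-- Quantitative form of the fact that a polynomial of degree at most `n` which is small at
enough separated points is small on all of `[0,1]`; here `f` is only almost such a polynomial,
its `n`-th derivative having oscillation at most `σ`. With `2 ^ n` points, the mean value theorem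
on disjoint pairs of consecutive points yields `2 ^ (n - 1)` points, still `d`-separated, at which
`f'` is small, so that the induction hypothesis applies to `f'` and bounds it. -/
theorem interp_bound (n : ℕ) : ∀ d > (0:ℝ), ∃ C ≥ (0:ℝ), ∀ f : ℝ → ℝ, ContDiff ℝ n f →
    ∀ r σ : ℝ, 0 ≤ r → 0 ≤ σ →
    (∀ s ∈ Icc (0:ℝ) 1, ∀ t ∈ Icc (0:ℝ) 1, |iteratedDeriv n f s - iteratedDeriv n f t| ≤ σ) →
    ∀ x : ℕ → ℝ, (∀ i < 2 ^ n, x i ∈ Icc (0:ℝ) 1 ∧ |f (x i)| ≤ r) →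
    (∀ i, i + 1 < 2 ^ n → x i + d ≤ x (i + 1)) →
    ∀ t ∈ Icc (0:ℝ) 1, |f t| ≤ C * (r + σ) := by
  induction n with
  | zero =>
    intro d _
    refine ⟨1, zero_le_one, fun f _ r σ _ _ hosc x hx _ t ht => ?_⟩
    obtain ⟨h0, h1⟩ := hx 0 (by norm_num)
    have h2 := hosc t ht (x 0) h0
    simp only [iteratedDeriv_zero] at h2
    have h3 := abs_sub_abs_le_abs_sub (f t) (f (x 0))
    linarith
  | succ n ih =>
    intro d hd
    obtain ⟨C, hC, H⟩ := ih d hd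
    refine ⟨1 + C * (2 / d + 1), by positivity, fun f hf r σ hr hσ hosc x hx hsep t ht => ?_⟩
    have hf' := (contDiff_succ_iff_deriv (n := (n : WithTop ℕ∞))).1 (by exact_mod_cast hf)
    have hdiff := hf'.1
    have hpow : 2 ^ (n + 1) = 2 * 2 ^ n := by ring
    have key : ∀ i : ℕ, ∃ ξ : ℝ, i < 2 ^ n →
        ξ ∈ Ioo (x (2 * i)) (x (2 * i + 1)) ∧ |deriv f ξ| ≤ 2 * r / d := by
      intro i
      by_cases hi : i < 2 ^ n
      · have hs := hsep (2 * i) (by omega)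
        obtain ⟨ξ, hξ, he⟩ := exists_deriv_eq_slope f (a := x (2 * i)) (b := x (2 * i + 1))
          (by linarith) hdiff.continuous.continuousOn hdiff.differentiableOn
        refine ⟨ξ, fun _ => ⟨hξ, ?_⟩⟩
        have ha := (hx (2 * i) (by omega)).2
        have hb := (hx (2 * i + 1) (by omega)).2
        rw [he, abs_div, abs_of_pos (by linarith : 0 < x (2 * i + 1) - x (2 * i))]
        have := abs_sub (f (x (2 * i + 1))) (f (x (2 * i)))
        exact div_le_div₀ (by positivity) (by linarith) hd (by linarith)
      · exact ⟨0, fun h => absurd h hi⟩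
    choose ξ hξ using key
    have hd' : ∀ s ∈ Icc (0:ℝ) 1, |deriv f s| ≤ C * (2 * r / d + σ) := by
      refine H (deriv f) hf'.2.2 _ _ (by positivity) hσ ?_ ξ ?_ ?_
      · simpa only [iteratedDeriv_succ'] using hosc
      · intro i hi
        obtain ⟨h1, h2⟩ := hξ i hi
        have ha := (hx (2 * i) (by omega)).1
        have hb := (hx (2 * i + 1) (by omega)).1
        exact ⟨⟨ha.1.trans h1.1.le, h1.2.le.trans hb.2⟩, h2⟩
      · intro i hi
        have h1 := (hξ i (by omega)).1
        have h2 := (hξ (i + 1) hi).1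
        have h3 := hsep (2 * i + 1) (by omega)
        have h4 : 2 * (i + 1) = 2 * i + 1 + 1 := by ring
        rw [h4] at h2
        linarith [h1.2, h2.1]
    obtain ⟨h0, h1⟩ := hx 0 (by positivity)
    have h2 := (convex_Icc (0:ℝ) 1).norm_image_sub_le_of_norm_deriv_le
      (fun y _ => hdiff y) hd' h0 ht
    simp only [Real.norm_eq_abs] at h2
    have h3 : |t - x 0| ≤ 1 := by
      rw [abs_le]; constructor <;> linarith [h0.1, h0.2, ht.1, ht.2]
    have h4 := abs_sub_abs_le_abs_sub (f t) (f (x 0))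
    have h5 : C * (2 * r / d + σ) * |t - x 0| ≤ C * (2 * r / d + σ) :=
      mul_le_of_le_one_right (by positivity) h3
    have h6 : C * (2 * r / d + σ) ≤ C * (2 / d + 1) * (r + σ) := by
      rw [mul_assoc]
      refine mul_le_mul_of_nonneg_left ?_ hC
      have : 0 ≤ 2 / d * σ := by positivity
      have e : 2 * r / d = 2 / d * r := by ring
      rw [e]
      nlinarith
    linarith

/-- If `g` is close to one of the wells `±1`, without saying which, at many separated points and
`iteratedDeriv n g` has small oscillation, then `g` itself has small oscillation. Among any three
points two are near the same well, so each triple produces a point where `g'` is small, and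
`interp_bound` applies to `g'` and bounds it. -/
theorem osc_small (n : ℕ) (d : ℝ) (hd : 0 < d) : ∃ σ > (0:ℝ), σ ≤ 1 / 4 ∧
    ∀ g : ℝ → ℝ, ContDiff ℝ n g →
    (∀ s ∈ Icc (0:ℝ) 1, ∀ t ∈ Icc (0:ℝ) 1, |iteratedDeriv n g s - iteratedDeriv n g t| ≤ σ) →
    ∀ y : ℕ → ℝ, (∀ i < 3 * 2 ^ n, y i ∈ Icc (0:ℝ) 1 ∧ (|g (y i) - 1| ≤ σ ∨ |g (y i) + 1| ≤ σ)) →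
    (∀ i, i + 1 < 3 * 2 ^ n → y i + d ≤ y (i + 1)) →
    ∀ s ∈ Icc (0:ℝ) 1, ∀ t ∈ Icc (0:ℝ) 1, |g s - g t| ≤ 1 / 4 := by
  rcases n with _ | n
  · exact ⟨1 / 4, by norm_num, le_rfl, fun g _ h _ _ _ => by simpa using h⟩
  obtain ⟨C, hC, H⟩ := interp_bound n d hd
  refine ⟨1 / (4 * (C + 1) * (2 / d + 1)), by positivity, ?_, ?_⟩
  · apply one_div_le_one_div_of_le (by norm_num)
    have : 0 < 2 / d := by positivity
    nlinarith [mul_nonneg hC this.le]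
  intro g hg hosc y hy hsep s hs t ht
  set σ := 1 / (4 * (C + 1) * (2 / d + 1)) with hσ
  have hσ0 : 0 < σ := by positivity
  have hg' := (contDiff_succ_iff_deriv (n := (n : WithTop ℕ∞))).1 (by exact_mod_cast hg)
  have hdiff := hg'.1
  have hpow : 2 ^ (n + 1) = 2 * 2 ^ n := by ring
  have mvt : ∀ a b : ℝ, a + d ≤ b → |g b - g a| ≤ 2 * σ →
      ∃ ξ ∈ Ioo a b, |deriv g ξ| ≤ 2 * σ / d := by
    intro a b hab h
    obtain ⟨ξ, hξ, he⟩ := exists_deriv_eq_slope g (a := a) (b := b)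
      (by linarith) hdiff.continuous.continuousOn hdiff.differentiableOn
    refine ⟨ξ, hξ, ?_⟩
    rw [he, abs_div, abs_of_pos (by linarith : 0 < b - a)]
    exact div_le_div₀ (by positivity) h hd (by linarith)
  have key : ∀ i : ℕ, ∃ ξ : ℝ, i < 2 ^ n →
      ξ ∈ Ioo (y (3 * i)) (y (3 * i + 2)) ∧ |deriv g ξ| ≤ 2 * σ / d := by
    intro i
    by_cases hi : i < 2 ^ n
    · have s1 := hsep (3 * i) (by omega)
      have s2 := hsep (3 * i + 1) (by omega)
      have c0 := (hy (3 * i) (by omega)).2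
      have c1 := (hy (3 * i + 1) (by omega)).2
      have c2 := (hy (3 * i + 2) (by omega)).2
      have s2' : y (3 * i + 1) + d ≤ y (3 * i + 2) := s2
      simp only [abs_le] at c0 c1 c2
      -- two of the three points lie near the same well
      have : |g (y (3 * i + 1)) - g (y (3 * i))| ≤ 2 * σ ∨
          |g (y (3 * i + 2)) - g (y (3 * i + 1))| ≤ 2 * σ ∨
          |g (y (3 * i + 2)) - g (y (3 * i))| ≤ 2 * σ := by
        simp only [abs_le]
        rcases c0 with c0 | c0 <;> rcases c1 with c1 | c1 <;> rcases c2 with c2 | c2 <;>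
        first
        | (left; constructor <;> linarith)
        | (right; left; constructor <;> linarith)
        | (right; right; constructor <;> linarith)
      rcases this with h | h | h
      · obtain ⟨ξ, hξ, hb⟩ := mvt _ _ s1 h
        exact ⟨ξ, fun _ => ⟨⟨hξ.1, by linarith [hξ.2]⟩, hb⟩⟩
      · obtain ⟨ξ, hξ, hb⟩ := mvt _ _ s2' h
        exact ⟨ξ, fun _ => ⟨⟨by linarith [hξ.1], hξ.2⟩, hb⟩⟩
      · obtain ⟨ξ, hξ, hb⟩ := mvt _ _ (by linarith) h
        exact ⟨ξ, fun _ => ⟨hξ, hb⟩⟩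
    · exact ⟨0, fun h => absurd h hi⟩
  choose ξ hξ using key
  have hd' : ∀ s ∈ Icc (0:ℝ) 1, |deriv g s| ≤ C * (2 * σ / d + σ) := by
    refine H (deriv g) hg'.2.2 _ _ (by positivity) hσ0.le ?_ ξ ?_ ?_
    · simpa only [iteratedDeriv_succ'] using hosc
    · intro i hi
      obtain ⟨h1, h2⟩ := hξ i hi
      have ha := (hy (3 * i) (by omega)).1
      have hb := (hy (3 * i + 2) (by omega)).1
      exact ⟨⟨ha.1.trans h1.1.le, h1.2.le.trans hb.2⟩, h2⟩
    · intro i hi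
      have h1 := (hξ i (by omega)).1
      have h2 := (hξ (i + 1) hi).1
      have h3 := hsep (3 * i + 2) (by omega)
      have h4 : 3 * (i + 1) = 3 * i + 2 + 1 := by ring
      rw [h4] at h2
      linarith [h1.2, h2.1]
  have h2 := (convex_Icc (0:ℝ) 1).norm_image_sub_le_of_norm_deriv_le
    (fun y _ => hdiff y) hd' ht hs
  simp only [Real.norm_eq_abs] at h2
  have h3 : |s - t| ≤ 1 := by
    rw [abs_le]; constructor <;> linarith [hs.1, hs.2, ht.1, ht.2]
  have h5 : C * (2 * σ / d + σ) * |s - t| ≤ C * (2 * σ / d + σ) :=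
    mul_le_of_le_one_right (by positivity) h3
  have h6 : C * (2 * σ / d + σ) ≤ (C + 1) * (2 / d + 1) * σ := by
    have e : C * (2 * σ / d + σ) = C * ((2 / d + 1) * σ) := by ring
    rw [e, mul_assoc]
    exact mul_le_mul_of_nonneg_right (by linarith) (by positivity)
  have h7 : (C + 1) * (2 / d + 1) * σ = 1 / 4 := by
    rw [hσ]; field_simp
  linarith

/-- Local rigidity in blown-up variables: on a unit interval with little energy, `g` has no zero. -/
theorem no_zero_unit (n : ℕ) (W : ℝ → ℝ) (αW βW : ℝ)
    (hα : 0 < αW) (hβ : 0 < βW) (hWc : Continuous W) (hWnn : ∀ z, 0 ≤ W z)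
    (hWlb : ∀ z, αW * min (min ((z + 1) ^ 2) ((z - 1) ^ 2)) βW ≤ W z) :
    ∃ η > (0:ℝ), ∀ g : ℝ → ℝ, ContDiff ℝ (n + 1 : ℕ) g →
      ∫ s in (0:ℝ)..1, (W (g s) + (iteratedDeriv (n + 1) g s) ^ 2) < η →
      ∀ t ∈ Icc (0:ℝ) 1, g t ≠ 0 := by
  set N : ℝ := 6 * 2 ^ n with hN
  have hN0 : 0 < N := by positivity
  obtain ⟨σ, hσ, hσ4, H⟩ := osc_small n (1 / N) (by positivity)
  set c := αW * min (σ ^ 2) βW with hc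
  have hc0 : 0 < c := mul_pos hα (lt_min (by positivity) hβ)
  refine ⟨min (c / N) (σ ^ 2 / 4), by positivity, fun g hg hE t ht h0 => ?_⟩
  have hE1 := hE.trans_le (min_le_left _ _)
  have hE2 := hE.trans_le (min_le_right _ _)
  have hgc : Continuous g := hg.continuous
  have hDc : Continuous (iteratedDeriv (n + 1) g) := hg.continuous_iteratedDeriv _ le_rfl
  have hEc : Continuous fun s => W (g s) + (iteratedDeriv (n + 1) g s) ^ 2 := by fun_prop
  have hEnn : ∀ s, 0 ≤ W (g s) + (iteratedDeriv (n + 1) g s) ^ 2 :=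
    fun s => add_nonneg (hWnn _) (sq_nonneg _)
  have hsub : ∀ a b : ℝ, 0 ≤ a → a ≤ b → b ≤ 1 →
      ∫ s in a..b, (W (g s) + (iteratedDeriv (n + 1) g s) ^ 2) ≤
      ∫ s in (0:ℝ)..1, (W (g s) + (iteratedDeriv (n + 1) g s) ^ 2) := fun a b h1 h2 h3 =>
    intervalIntegral.integral_mono_interval h1 h2 h3 (Eventually.of_forall hEnn)
      (hEc.intervalIntegrable _ _)
  -- each interval of length `1 / N` contains a point where `g` is near a well
  have hpt : ∀ i : ℕ, ∃ y : ℝ, i < 3 * 2 ^ n → y ∈ Icc (2 * i / N) ((2 * i + 1) / N) ∧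
      (|g y - 1| ≤ σ ∨ |g y + 1| ≤ σ) := by
    intro i
    by_cases hi : i < 3 * 2 ^ n
    swap
    · exact ⟨0, fun h => absurd h hi⟩
    by_contra! hcon
    have hcon' : ∀ y ∈ Icc (2 * i / N) ((2 * i + 1) / N), σ < |g y - 1| ∧ σ < |g y + 1| :=
      fun y hy => (hcon y).2 hy
    have hab : 2 * i / N ≤ (2 * i + 1) / N := by gcongr; linarith
    have hi1 : (2 * i + 1) / N ≤ 1 := by
      rw [div_le_one hN0, hN]
      have : (i:ℝ) + 1 ≤ 3 * 2 ^ n := by exact_mod_cast hi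
      linarith
    have h1 := hsub _ _ (by positivity) hab hi1
    have h2 : ∫ s in (2 * i / N)..((2 * i + 1) / N), c ≤
        ∫ s in (2 * i / N)..((2 * i + 1) / N), (W (g s) + (iteratedDeriv (n + 1) g s) ^ 2) := by
      refine intervalIntegral.integral_mono_on hab (by simp) (hEc.intervalIntegrable _ _) ?_
      intro s hs
      obtain ⟨h3, h4⟩ := hcon' s hs
      have h5 : c ≤ W (g s) := by
        refine le_trans ?_ (hWlb _)
        rw [hc]
        refine mul_le_mul_of_nonneg_left (min_le_min_right _ (le_min ?_ ?_)) hα.le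
        · rw [← sq_abs (g s + 1)]; gcongr
        · rw [← sq_abs (g s - 1)]; gcongr
      linarith [sq_nonneg (iteratedDeriv (n + 1) g s)]
    rw [intervalIntegral.integral_const, smul_eq_mul] at h2
    have h3 : ((2 * i + 1) / N - 2 * i / N) * c = c / N := by ring
    linarith
  choose y hy using hpt
  have hosc : ∀ s ∈ Icc (0:ℝ) 1, ∀ t ∈ Icc (0:ℝ) 1,
      |iteratedDeriv n g s - iteratedDeriv n g t| ≤ σ := by
    have main : ∀ s t : ℝ, 0 ≤ s → s ≤ t → t ≤ 1 →
        |iteratedDeriv n g t - iteratedDeriv n g s| ≤ σ := by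
      intro s t h1 h2 h3
      have hdf : Differentiable ℝ (iteratedDeriv n g) :=
        hg.differentiable_iteratedDeriv n (by exact_mod_cast Nat.lt_succ_self n)
      have hDc : Continuous (deriv (iteratedDeriv n g)) := by
        simpa only [iteratedDeriv_succ] using hDc
      rw [← intervalIntegral.integral_deriv_eq_sub (fun x _ => hdf x)
        (hDc.intervalIntegrable _ _)]
      refine (intervalIntegral.abs_integral_le_integral_abs h2).trans ?_
      -- Young's inequality `|x| ≤ σ / 2 + x ^ 2 / (2 * σ)` stands in for Cauchy–Schwarz
      have h4 : ∫ x in s..t, |deriv (iteratedDeriv n g) x| ≤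
          ∫ x in s..t, (σ / 2 + (1 / (2 * σ)) *
            (W (g x) + (iteratedDeriv (n + 1) g x) ^ 2)) := by
        refine intervalIntegral.integral_mono_on h2 (hDc.abs.intervalIntegrable _ _)
          ((continuous_const.add (continuous_const.mul hEc)).intervalIntegrable _ _) ?_
        intro x _
        rw [iteratedDeriv_succ]
        have h5 := hWnn (g x)
        set z := deriv (iteratedDeriv n g) x
        have h6 : 0 ≤ (1 / (2 * σ)) * (W (g x) + (|z| - σ) ^ 2) := by positivity
        have h7 : σ / 2 + (1 / (2 * σ)) * (W (g x) + z ^ 2) =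
            (1 / (2 * σ)) * (W (g x) + (|z| - σ) ^ 2) + |z| := by
          rw [← sq_abs z]; field_simp; ring
        linarith
      have hInt : IntervalIntegrable (fun x => (1 / (2 * σ)) *
          (W (g x) + (iteratedDeriv (n + 1) g x) ^ 2)) volume s t :=
        (continuous_const.mul hEc).intervalIntegrable _ _
      rw [intervalIntegral.integral_add intervalIntegrable_const hInt,
        intervalIntegral.integral_const, intervalIntegral.integral_const_mul, smul_eq_mul] at h4
      have h5 := (hsub s t h1 h2 h3).trans hE2.le
      have h6 : (1 / (2 * σ)) * ∫ x in s..t, (W (g x) + (iteratedDeriv (n + 1) g x) ^ 2) ≤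
          (1 / (2 * σ)) * (σ ^ 2 / 4) := by gcongr
      have h7 : (1 / (2 * σ)) * (σ ^ 2 / 4) = σ / 8 := by field_simp; norm_num
      have h8 : (t - s) * (σ / 2) ≤ 1 * (σ / 2) := by gcongr; linarith
      linarith
    intro s hs t ht
    rcases le_total s t with h | h
    · rw [abs_sub_comm]; exact main s t hs.1 h ht.2
    · exact main t s ht.1 h hs.2
  have hy01 : ∀ i < 3 * 2 ^ n, y i ∈ Icc (0:ℝ) 1 ∧ (|g (y i) - 1| ≤ σ ∨ |g (y i) + 1| ≤ σ) := by
    intro i hi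
    obtain ⟨h1, h2⟩ := hy i hi
    refine ⟨⟨le_trans (by positivity) h1.1, h1.2.trans ?_⟩, h2⟩
    rw [div_le_one hN0, hN]
    have : (i:ℝ) + 1 ≤ 3 * 2 ^ n := by exact_mod_cast hi
    linarith
  have hfin := H g (hg.of_le (by exact_mod_cast Nat.le_succ n)) hosc y hy01 (by
    intro i hi
    have h1 := (hy i (by omega)).1.2
    have h2 := (hy (i + 1) hi).1.1
    have h3 : 2 * ((i + 1 : ℕ) : ℝ) / N = (2 * i + 1) / N + 1 / N := by push_cast; ring
    linarith)
  obtain ⟨h1, h2⟩ := hy01 0 (by positivity)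
  have h3 := hfin _ h1 t ht
  rw [h0, sub_zero, abs_le] at h3
  simp only [abs_le] at h2
  rcases h2 with h2 | h2 <;> linarith [h2.1, h2.2, h3.1, h3.2]

/-! ### Windows of length `e` and concentration of energy -/

/-- Rescaled form of `no_zero_unit`: the blow-up `s ↦ f (a + e * s)` turns the energy of `f` on
a window of length `e` into the unit-scale energy, since the exponent `2k - 1` makes the functional
scale invariant. -/
theorem no_zero_window (n : ℕ) (W : ℝ → ℝ) (αW βW : ℝ)
    (hα : 0 < αW) (hβ : 0 < βW) (hWc : Continuous W) (hWnn : ∀ z, 0 ≤ W z)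
    (hWlb : ∀ z, αW * min (min ((z + 1) ^ 2) ((z - 1) ^ 2)) βW ≤ W z) :
    ∃ η > (0:ℝ), ∀ f : ℝ → ℝ, ContDiff ℝ (n + 1 : ℕ) f → ∀ e > (0:ℝ), ∀ a : ℝ,
      ∫⁻ t in Icc a (a + e), ENNReal.ofReal ((1 / e) * W (f t) +
        e ^ (2 * (n + 1) - 1) * (iteratedDeriv (n + 1) f t) ^ 2) < ENNReal.ofReal η →
      ∀ t ∈ Icc a (a + e), f t ≠ 0 := by
  obtain ⟨η, hη, H⟩ := no_zero_unit n W αW βW hα hβ hWc hWnn hWlb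
  refine ⟨η, hη, fun f hf e he a hE t ht => ?_⟩
  have hDc : Continuous (iteratedDeriv (n + 1) f) := hf.continuous_iteratedDeriv _ le_rfl
  have hfc := hf.continuous
  set D : ℝ → ℝ := fun t => (1 / e) * W (f t) +
        e ^ (2 * (n + 1) - 1) * (iteratedDeriv (n + 1) f t) ^ 2 with hD
  have hDcont : Continuous D := by rw [hD]; fun_prop
  have hDnn : ∀ s, 0 ≤ D s := fun s =>
    add_nonneg (mul_nonneg (by positivity) (hWnn _)) (by positivity)
  rw [← ofReal_integral_eq_lintegral_ofReal (hDcont.integrableOn_Icc)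
    (Eventually.of_forall hDnn), ENNReal.ofReal_lt_ofReal_iff hη,
    integral_Icc_eq_integral_Ioc, ← intervalIntegral.integral_of_le (by linarith)] at hE
  have hsc : ∫ s in (0:ℝ)..1, D (a + e * s) = e⁻¹ * ∫ s in a..(a + e), D s := by
    rw [intervalIntegral.integral_comp_add_mul D he.ne' a]; simp
  have hgd : ContDiff ℝ (n + 1 : ℕ) fun s => f (a + e * s) := by fun_prop
  have hder : ∀ s, iteratedDeriv (n + 1) (fun s => f (a + e * s)) s =
      e ^ (n + 1) * iteratedDeriv (n + 1) f (a + e * s) := by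
    intro s
    have h1 : ContDiff ℝ (n + 1 : ℕ) fun s => f (a + s) := by fun_prop
    have h2 := congrFun (iteratedDeriv_comp_const_mul h1 e) s
    rw [iteratedDeriv_comp_const_add] at h2
    exact h2
  have h3 := H _ hgd (by
    have : ∀ s, W (f (a + e * s)) + (iteratedDeriv (n + 1) (fun s => f (a + e * s)) s) ^ 2 =
        e * D (a + e * s) := by
      intro s
      rw [hder, hD]
      have hp : e * e ^ (2 * (n + 1) - 1) = (e ^ (n + 1)) ^ 2 := by
        rw [← pow_succ', ← pow_mul]; congr 1; omega
      have hp1 : e * (1 / e) = 1 := by field_simp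
      simp only []
      rw [mul_add, ← mul_assoc, ← mul_assoc, hp, hp1]; ring
    simp_rw [this]
    rw [intervalIntegral.integral_const_mul, hsc, ← mul_assoc, mul_inv_cancel₀ he.ne', one_mul]
    exact hE) ((t - a) / e) ⟨div_nonneg (by linarith [ht.1]) he.le,
      (div_le_one he).2 (by linarith [ht.2])⟩
  have h4 : a + e * ((t - a) / e) = t := by field_simp; ring
  simpa only [h4] using h3

/-- The energy concentrates with mass at least `η` at finitely many points only: disjoint rational
neighbourhoods of `m` such points carry in the limit a mass between `m * η` and `M`. -/
theorem finite_concentration (ν : ℕ → Measure ℝ) (M : ℝ≥0∞) (hM : M < ⊤)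
    (hν : ∀ j, ν j univ ≤ M) (L : ℚ × ℚ → ℝ≥0∞)
    (hL : ∀ p : ℚ × ℚ, Tendsto (fun j => ν j (Ioo (p.1 : ℝ) p.2)) atTop (𝓝 (L p)))
    (η : ℝ≥0∞) (hη : 0 < η) :
    {t : ℝ | ∀ q q' : ℚ, (q : ℝ) < t → t < q' → η ≤ L (q, q')}.Finite := by
  by_contra hinf
  obtain ⟨m, hm⟩ := ENNReal.exists_nat_mul_gt hη.ne' hM.ne
  obtain ⟨T, hTs, hTc⟩ := Set.Infinite.exists_subset_card_eq hinf m
  obtain ⟨U, hU, hUd⟩ := T.finite_toSet.t2_separation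
  have hI : ∀ t : ℝ, ∃ p : ℚ × ℚ, (p.1 : ℝ) < t ∧ t < p.2 ∧ Ioo (p.1 : ℝ) p.2 ⊆ U t := by
    intro t
    obtain ⟨l, r, ht, hlr⟩ := mem_nhds_iff_exists_Ioo_subset.1 ((hU t).2.mem_nhds (hU t).1)
    obtain ⟨q, hq1, hq2⟩ := exists_rat_btwn ht.1
    obtain ⟨q', hq1', hq2'⟩ := exists_rat_btwn ht.2
    exact ⟨(q, q'), hq2, hq1', (Ioo_subset_Ioo hq1.le hq2'.le).trans hlr⟩
  choose p hp1 hp2 hp3 using hI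
  have hsum : Tendsto (fun j => ∑ t ∈ T, ν j (Ioo ((p t).1 : ℝ) (p t).2)) atTop
      (𝓝 (∑ t ∈ T, L (p t))) := tendsto_finsetSum _ fun t _ => hL (p t)
  have h1 : ∑ t ∈ T, L (p t) ≤ M := by
    refine le_of_tendsto' hsum fun j => le_trans ?_ (hν j)
    refine sum_measure_le_measure_univ (fun _ _ => measurableSet_Ioo.nullMeasurableSet) ?_
    intro s hs t ht hst
    exact ((hUd hs ht hst).mono (hp3 s) (hp3 t)).aedisjoint
  have h2 : (m : ℝ≥0∞) * η ≤ ∑ t ∈ T, L (p t) := by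
    rw [← hTc, ← nsmul_eq_mul]
    exact Finset.card_nsmul_le_sum _ _ _ fun t ht => hTs ht _ _ (hp1 t) (hp2 t)
  exact absurd (hm.trans_le (h2.trans h1)) (lt_irrefl _)

/-- The energy of `f` as a measure on the line, concentrated on `(0,1)`. -/
noncomputable def energy (k : ℕ) (W : ℝ → ℝ) (e : ℝ) (f : ℝ → ℝ) : Measure ℝ :=
  (volume.restrict (Ioo (0:ℝ) 1)).withDensity fun t =>
    ENNReal.ofReal ((1 / e) * W (f t) + e ^ (2 * k - 1) * (iteratedDeriv k f t) ^ 2)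

theorem energy_univ (k : ℕ) (W : ℝ → ℝ) (e : ℝ) (f : ℝ → ℝ) :
    energy k W e f univ = Fe k W e f := by
  rw [energy, withDensity_apply _ MeasurableSet.univ, Measure.restrict_univ, Fe]

/-- An interval in `(0,1)` with little energy and length more than `2e` is covered by compact windows
of length `e`, so `no_zero_window` excludes zeros on all of it. -/
theorem no_zero_of_energy (k : ℕ) (hk : 1 ≤ k) (W : ℝ → ℝ) (αW βW : ℝ)
    (hα : 0 < αW) (hβ : 0 < βW) (hWc : Continuous W) (hWnn : ∀ z, 0 ≤ W z)
    (hWlb : ∀ z, αW * min (min ((z + 1) ^ 2) ((z - 1) ^ 2)) βW ≤ W z) :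
    ∃ η > (0:ℝ≥0∞), ∀ f : ℝ → ℝ, ContDiff ℝ k f → ∀ e > (0:ℝ), ∀ p r : ℝ, 0 ≤ p → r ≤ 1 →
      2 * e < r - p → energy k W e f (Ioo p r) < η → ∀ t ∈ Ioo p r, f t ≠ 0 := by
  obtain ⟨n, rfl⟩ : ∃ n, k = n + 1 := ⟨k - 1, by omega⟩
  obtain ⟨η, hη, H⟩ := no_zero_window n W αW βW hα hβ hWc hWnn hWlb
  refine ⟨ENNReal.ofReal η, by simpa using hη, fun f hf e he p r hp hr hlen hE t ht => ?_⟩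
  have key : ∀ a : ℝ, p < a → a + e < r → t ∈ Icc a (a + e) → f t ≠ 0 := by
    intro a h1 h2 h3
    have hsub : Icc a (a + e) ⊆ Ioo p r := fun s hs => ⟨h1.trans_le hs.1, hs.2.trans_lt h2⟩
    have hIcc01 : Icc a (a + e) ⊆ Ioo 0 1 := hsub.trans (Ioo_subset_Ioo hp hr)
    refine H f hf e he a (lt_of_le_of_lt ?_ ((measure_mono hsub).trans_lt hE)) t h3
    rw [energy, withDensity_apply _ measurableSet_Icc,
      Measure.restrict_restrict measurableSet_Icc, inter_eq_left.2 hIcc01]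
  -- the window extends from `t` into the longer side of the interval
  rcases le_total t ((p + r) / 2) with h | h
  · exact key t ht.1 (by linarith) ⟨le_rfl, by linarith⟩
  · exact key (t - e) (by linarith) (by linarith [ht.2]) ⟨by linarith, by linarith⟩

theorem sign_const {f : ℝ → ℝ} (hf : Continuous f) {J : Set ℝ} (hJ : IsPreconnected J)
    (h0 : ∀ t ∈ J, f t ≠ 0) {s t : ℝ} (hs : s ∈ J) (ht : t ∈ J) (h : 0 < f s) : 0 < f t := by
  by_contra hneg
  obtain ⟨x, hx, hx0⟩ := hJ.intermediate_value ht hs hf.continuousOn ⟨not_lt.1 hneg, h.le⟩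
  exact h0 x hx hx0

/-! ### Passing to the limit -/

/-- Chebyshev's inequality for the potential term: the set where `w j` stays away from both wells
has measure at most `e j * M / c`, where `c` bounds `W` from below on it. -/
theorem volume_far_tendsto (k : ℕ) (W : ℝ → ℝ) (αW βW : ℝ)
    (hα : 0 < αW) (hβ : 0 < βW) (hWc : Continuous W)
    (hWlb : ∀ z, αW * min (min ((z + 1) ^ 2) ((z - 1) ^ 2)) βW ≤ W z)
    (e : ℕ → ℝ) (hepos : ∀ j, 0 < e j) (he : Tendsto e atTop (𝓝 0))
    (w : ℕ → ℝ → ℝ) (hw : ∀ j, ContDiff ℝ k (w j)) (M : ℝ≥0∞) (hM : M < ⊤)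
    (hFe : ∀ j, Fe k W (e j) (w j) ≤ M) (δ : ℝ) (hδ : 0 < δ) :
    Tendsto (fun j => volume {t ∈ Ioo (0:ℝ) 1 | δ < |w j t - 1| ∧ δ < |w j t + 1|})
      atTop (𝓝 0) := by
  set c := αW * min (δ ^ 2) βW with hc
  have hc0 : 0 < c := mul_pos hα (lt_min (by positivity) hβ)
  have hub : Tendsto (fun j => ENNReal.ofReal (e j / c) * M) atTop (𝓝 0) := by
    have h1 : Tendsto (fun j => ENNReal.ofReal (e j / c)) atTop (𝓝 0) := by
      have := ENNReal.tendsto_ofReal (he.div_const c)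
      simpa using this
    simpa using ENNReal.Tendsto.mul_const h1 (Or.inr hM.ne)
  refine tendsto_of_tendsto_of_tendsto_of_le_of_le tendsto_const_nhds hub
    (fun _ => zero_le) fun j => ?_
  have hDc : Continuous (iteratedDeriv k (w j)) := (hw j).continuous_iteratedDeriv _ le_rfl
  have hwc := (hw j).continuous
  set D : ℝ → ℝ≥0∞ := fun t => ENNReal.ofReal ((1 / e j) * W (w j t) +
        e j ^ (2 * k - 1) * (iteratedDeriv k (w j) t) ^ 2) with hD
  have hDm : Measurable D := by
    refine ENNReal.measurable_ofReal.comp (Continuous.measurable ?_)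
    fun_prop
  have h1 := (mul_meas_ge_le_lintegral (μ := volume.restrict (Ioo (0:ℝ) 1)) hDm
    (ENNReal.ofReal (c / e j))).trans (hFe j)
  have hpos := hepos j
  have h2 : volume {t ∈ Ioo (0:ℝ) 1 | δ < |w j t - 1| ∧ δ < |w j t + 1|} ≤
      (volume.restrict (Ioo (0:ℝ) 1)) {t | ENNReal.ofReal (c / e j) ≤ D t} := by
    rw [Measure.restrict_apply' measurableSet_Ioo]
    refine measure_mono fun t ht => ⟨ENNReal.ofReal_le_ofReal ?_, ht.1⟩
    have h5 : c ≤ W (w j t) := by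
      refine le_trans ?_ (hWlb _)
      rw [hc]
      refine mul_le_mul_of_nonneg_left (min_le_min_right _ (le_min ?_ ?_)) hα.le
      · rw [← sq_abs (w j t + 1)]; gcongr; exact ht.2.2.le
      · rw [← sq_abs (w j t - 1)]; gcongr; exact ht.2.1.le
    have h6 : c / e j ≤ (1 / e j) * W (w j t) := by
      rw [div_eq_mul_one_div, mul_comm]; gcongr
    have : 0 ≤ e j ^ (2 * k - 1) * (iteratedDeriv k (w j) t) ^ 2 := by positivity
    linarith
  have h3 : ENNReal.ofReal (e j / c) * ENNReal.ofReal (c / e j) = 1 := by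
    rw [← ENNReal.ofReal_mul (by positivity)]
    have : e j / c * (c / e j) = 1 := by field_simp
    rw [this, ENNReal.ofReal_one]
  calc _ ≤ _ := h2
    _ = ENNReal.ofReal (e j / c) * (ENNReal.ofReal (c / e j) *
      (volume.restrict (Ioo (0:ℝ) 1)) {t | ENNReal.ofReal (c / e j) ≤ D t}) := by
        rw [← mul_assoc, h3, one_mul]
    _ ≤ _ := by gcongr

/-- Convergence once the interval energies and the signs at rational points converge. Off the
finite concentration set the sign of `w j` is eventually constant near each point, and the limit
`v` is the limiting sign. -/
theorem limit_of_selected (k : ℕ) (hk : 1 ≤ k) (W : ℝ → ℝ) (αW βW : ℝ)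
    (hα : 0 < αW) (hβ : 0 < βW) (hWc : Continuous W) (hWnn : ∀ z, 0 ≤ W z)
    (hWlb : ∀ z, αW * min (min ((z + 1) ^ 2) ((z - 1) ^ 2)) βW ≤ W z)
    (e : ℕ → ℝ) (hepos : ∀ j, 0 < e j) (he : Tendsto e atTop (𝓝 0))
    (w : ℕ → ℝ → ℝ) (hw : ∀ j, ContDiff ℝ k (w j)) (M : ℝ≥0∞) (hM : M < ⊤)
    (hFe : ∀ j, Fe k W (e j) (w j) ≤ M) (L : ℚ × ℚ → ℝ≥0∞)
    (hL : ∀ p : ℚ × ℚ, Tendsto (fun j => energy k W (e j) (w j) (Ioo (p.1 : ℝ) p.2))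
      atTop (𝓝 (L p)))
    (hsgn : ∀ q : ℚ, (∀ᶠ j in atTop, 0 < w j q) ∨ (∀ᶠ j in atTop, ¬ 0 < w j q)) :
    ∃ (v : ℝ → ℝ) (S : Finset ℝ), PMJump v S ∧ ∀ δ > (0:ℝ),
      Tendsto (fun j => volume {t ∈ Ioo (0:ℝ) 1 | δ < |w j t - v t|}) atTop (𝓝 0) := by
  classical
  obtain ⟨η, hη, H⟩ := no_zero_of_energy k hk W αW βW hα hβ hWc hWnn hWlb
  have hBfin := finite_concentration _ M hM (fun j => (energy_univ k W (e j) (w j)).trans_le (hFe j))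
    L hL η hη
  set B := {t : ℝ | ∀ q q' : ℚ, (q : ℝ) < t → t < q' → η ≤ L (q, q')} with hB
  -- off `B`, all the functions far along the sequence share one constant sign near `t`
  have hloc : ∀ t ∈ Ioo (0:ℝ) 1, t ∉ B → ∃ J ∈ 𝓝 t,
      (∀ᶠ j in atTop, ∀ s ∈ J, 0 < w j s) ∨ (∀ᶠ j in atTop, ∀ s ∈ J, ¬ 0 < w j s) := by
    intro t ht htB
    simp only [hB, mem_ofPred_eq, not_forall, not_le] at htB
    obtain ⟨q, q', hq, hq', hlt⟩ := htB
    have hp : max (q:ℝ) 0 < t := max_lt hq ht.1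
    have hr : t < min (q':ℝ) 1 := lt_min hq' ht.2
    set p := max (q:ℝ) 0
    set r := min (q':ℝ) 1
    refine ⟨Ioo p r, Ioo_mem_nhds hp hr, ?_⟩
    have hsmall : ∀ᶠ j in atTop, 2 * e j < r - p := by
      have : Tendsto (fun j => 2 * e j) atTop (𝓝 (2 * 0)) := he.const_mul 2
      exact this.eventually_lt_const (by linarith)
    have hnz : ∀ᶠ j in atTop, ∀ s ∈ Ioo p r, w j s ≠ 0 := by
      filter_upwards [hsmall, (hL (q, q')).eventually_lt_const hlt] with j h1 h2
      exact H _ (hw j) _ (hepos j) p r (le_max_right _ _) (min_le_right _ _) h1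
        ((measure_mono (Ioo_subset_Ioo (le_max_left _ _) (min_le_left _ _))).trans_lt h2)
    obtain ⟨q0, hq0, hq0'⟩ := exists_rat_btwn (hp.trans hr)
    refine (hsgn q0).imp (fun h => ?_) fun h => ?_
    · filter_upwards [hnz, h] with j h1 h2 s hs
      exact sign_const (hw j).continuous isPreconnected_Ioo h1 ⟨hq0, hq0'⟩ hs h2
    · filter_upwards [hnz, h] with j h1 h2 s hs h3
      exact h2 (sign_const (hw j).continuous isPreconnected_Ioo h1 hs ⟨hq0, hq0'⟩ h3)
  set P : Set ℝ := {t | ∀ᶠ j in atTop, 0 < w j t} with hP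
  set v : ℝ → ℝ := fun t => if t ∈ P then 1 else -1 with hv
  have hvP : ∀ s t, (s ∈ P ↔ t ∈ P) → v s = v t := fun s t h => by simp only [hv, h]
  have hvloc : ∀ t ∈ Ioo (0:ℝ) 1, t ∉ B → ∀ᶠ s in 𝓝 t, v s = v t := by
    intro t ht htB
    obtain ⟨J, hJ, h | h⟩ := hloc t ht htB
    · filter_upwards [hJ] with s hs
      exact hvP _ _ (iff_of_true (h.mono fun j hj => hj s hs)
        (h.mono fun j hj => hj t (mem_of_mem_nhds hJ)))
    · have hn : ∀ s ∈ J, s ∉ P := fun s hs h' => by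
        obtain ⟨j, h1, h2⟩ := (h.and h').exists
        exact h1 s hs h2
      filter_upwards [hJ] with s hs
      exact hvP _ _ (iff_of_false (hn s hs) (hn t (mem_of_mem_nhds hJ)))
  have hSfin : {t ∈ Ioo (0:ℝ) 1 | ¬ ∀ᶠ s in 𝓝 t, v s = v t}.Finite :=
    hBfin.subset fun t ht => by
      by_contra h
      exact ht.2 (hvloc t ht.1 h)
  refine ⟨v, hSfin.toFinset, ⟨?_, ?_, ?_, ?_⟩, ?_⟩
  · intro t ht
    rw [Set.Finite.coe_toFinset] at ht
    exact ht.1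
  · intro t _
    by_cases h : t ∈ P <;> simp [hv, h]
  · intro t ht hts
    rw [Set.Finite.mem_toFinset] at hts
    by_contra h
    exact hts ⟨ht, h⟩
  · intro t ht δ hδ
    rw [Set.Finite.mem_toFinset] at ht
    by_contra! hcon
    refine ht.2 ?_
    filter_upwards [Ioo_mem_nhds ht.1.1 ht.1.2, Metric.ball_mem_nhds t hδ] with s hs hs'
    exact hcon s hs (by simpa [Real.dist_eq] using hs')
  · intro δ hδ
    have hPm : MeasurableSet P := by
      have : P = liminf (fun j => {t | 0 < w j t}) atTop := by
        ext t; simp [hP, mem_liminf_iff_eventually_mem]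
      rw [this]
      exact MeasurableSet.measurableSet_liminf fun j =>
        (isOpen_lt continuous_const (hw j).continuous).measurableSet
    -- the sign of `w j` converges almost everywhere, hence in measure
    have hsign : Tendsto (fun j => volume {t ∈ Ioo (0:ℝ) 1 | ¬ (0 < w j t ↔ t ∈ P)})
        atTop (𝓝 0) := by
      have hmeas : ∀ j, MeasurableSet {t ∈ Ioo (0:ℝ) 1 | ¬ (0 < w j t ↔ t ∈ P)} := by
        intro j
        have h1 : MeasurableSet {t | 0 < w j t} :=
          (isOpen_lt continuous_const (hw j).continuous).measurableSet
        exact measurableSet_Ioo.inter ((h1.iff hPm).compl)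
      have := tendsto_measure_of_ae_tendsto_indicator (μ := volume) (A := ∅) atTop
        MeasurableSet.empty hmeas (B := Ioo (0:ℝ) 1) measurableSet_Ioo (by simp)
        (Eventually.of_forall fun j t ht => ht.1) ?_
      · simpa using this
      · have hae : ∀ᵐ t : ℝ, t ∉ B := by
          rw [ae_iff]; simpa using hBfin.measure_zero volume
        filter_upwards [hae] with t htB
        by_cases ht : t ∈ Ioo (0:ℝ) 1
        · obtain ⟨J, hJ, h | h⟩ := hloc t ht htB
          · have h' : ∀ᶠ j in atTop, 0 < w j t := h.mono fun j hj => hj t (mem_of_mem_nhds hJ)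
            filter_upwards [h'] with j hj
            have hPt : t ∈ P := h'
            simp [hj, hPt]
          · have h' : ∀ᶠ j in atTop, ¬ 0 < w j t :=
              h.mono fun j hj => hj t (mem_of_mem_nhds hJ)
            have hPt : t ∉ P := fun hh => by
              obtain ⟨j, h1, h2⟩ := (h'.and hh).exists
              exact h1 h2
            filter_upwards [h'] with j hj
            simp only [hj, hPt]
            simp
        · exact Eventually.of_forall fun j => by simp [ht]
    have hfar := volume_far_tendsto k W αW βW hα hβ hWc hWlb e hepos he w hw M hM hFe
      -- where the sign of `w j` is right, the other well is at distance at least `1`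
      (min δ (1 / 2)) (lt_min hδ (by norm_num))
    have hsum := hfar.add hsign
    rw [add_zero] at hsum
    refine tendsto_of_tendsto_of_tendsto_of_le_of_le tendsto_const_nhds hsum
      (fun _ => zero_le) fun j => ?_
    refine le_trans (measure_mono ?_) (measure_union_le _ _)
    rintro t ⟨ht, hd⟩
    by_cases hs : 0 < w j t ↔ t ∈ P
    · left
      refine ⟨ht, ?_⟩
      by_cases hPt : t ∈ P
      · have h1 := hs.2 hPt
        simp only [hv, hPt, if_true] at hd
        refine ⟨(min_le_left _ _).trans_lt hd, ?_⟩
        rw [abs_of_pos (by linarith)]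
        linarith [min_le_right δ (1 / 2)]
      · have h1 : w j t ≤ 0 := not_lt.1 fun h => hPt (hs.1 h)
        simp only [hv, hPt, if_false, sub_neg_eq_add] at hd
        refine ⟨?_, (min_le_left _ _).trans_lt hd⟩
        rw [abs_of_neg (by linarith)]
        linarith [min_le_right δ (1 / 2)]
    · exact Or.inr ⟨ht, hs⟩

/-- Equicoerciveness (compactness) of the family `{F_ε}` with respect to convergence in
measure: any sequence with equibounded energy has a subsequence converging in measure on
`(0,1)` to a function in `BV((0,1); {-1,1})`. -/
theorem statement0 (k : ℕ) (hk : 1 ≤ k) (W : ℝ → ℝ) (αW βW : ℝ)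
    (hα : 0 < αW) (hβ : 0 < βW) (hWc : Continuous W) (hWnn : ∀ z, 0 ≤ W z)
    (hWm : W (-1) = 0) (hWp : W 1 = 0)
    (hWlb : ∀ z, αW * min (min ((z + 1) ^ 2) ((z - 1) ^ 2)) βW ≤ W z)
    (ε : ℕ → ℝ) (hεpos : ∀ j, 0 < ε j) (hε : Tendsto ε atTop (𝓝 0))
    (u : ℕ → ℝ → ℝ) (hu : ∀ j, ContDiff ℝ k (u j))
    (hS : ⨆ j, Fe k W (ε j) (u j) < ⊤) :
    ∃ (v : ℝ → ℝ) (S : Finset ℝ), PMJump v S ∧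
      ∃ φ : ℕ → ℕ, StrictMono φ ∧
        ∀ δ > (0:ℝ),
          Tendsto (fun j => volume {t ∈ Set.Ioo (0:ℝ) 1 | δ < |u (φ j) t - v t|})
            atTop (𝓝 0) := by
  classical
  -- Tychonoff: the energies of all rational intervals and the signs at all rational points
  -- converge along one common subsequence
  obtain ⟨a, φ, hφ, hconv⟩ := CompactSpace.tendsto_subseq
    (X := (ℚ × ℚ → ℝ≥0∞) × (ℚ → Bool))
    fun j => (fun p => energy k W (ε j) (u j) (Ioo (p.1 : ℝ) p.2), fun q => decide (0 < u j q))
  obtain ⟨h1, h2⟩ := (Prod.tendsto_iff _ _).1 hconv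
  rw [tendsto_pi_nhds] at h1 h2
  obtain ⟨v, S, hvS, hlim⟩ := limit_of_selected k hk W αW βW hα hβ hWc hWnn hWlb
    (fun j => ε (φ j)) (fun j => hεpos _) (hε.comp hφ.tendsto_atTop)
    (fun j => u (φ j)) (fun j => hu _) _ hS (fun j => le_iSup (fun j => Fe k W (ε j) (u j)) (φ j))
    a.1 h1 (by
      intro q
      have h3 := h2 q
      rw [nhds_discrete, tendsto_pure] at h3
      by_cases hq : a.2 q = true
      · left
        filter_upwards [h3] with j hj
        simpa [hq] using hj
      · right
        filter_upwards [h3] with j hj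
        simpa [hq] using hj)
  exact ⟨v, S, hvS, φ, hφ, hlim⟩
end

section
/- Let k ≥ 1 be an integer and let W : ℝ → [0,∞) be continuous with W(-1) = W(1) = 0 and W(z) ≥ α_W · min{(z+1)², (z-1)², β_W} for some α_W, β_W > 0. For ε > 0 define F_ε(u) = ∫₀¹ ( (1/ε)·W(u(t)) + ε^{2k-1}·(u^{(k)}(t))² ) dt for u ∈ H^k(0,1). Let m_k = inf { ∫_{-∞}^{+∞} ( W(u) + (u^{(k)})² ) dt : u ∈ H^k_loc(ℝ), lim_{t→-∞} u(t) = -1, lim_{t→+∞} u(t) = +1 }. Then for every u ∈ BV((0,1); {-1,1}) with jump set S(u) there exists a family u_ε ∈ H^k(0,1) with u_ε → u in L¹(0,1) as ε → 0 and limsup_{ε→0} F_ε(u_ε) = m_k · #S(u). -/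
/-!
The recovery family places a rescaled transition profile at every point of `S`. Since the infimum
`m_k` runs over profiles on the whole line, the point is that near-optimal profiles may be taken
equal to `±1` outside a bounded interval (`exists_profile_up`). A finite-energy `u → 1` at `+∞` has
`u^{(k)}` square integrable, and then all derivatives of `u - 1` of order `< k` tend to `0`
(`tendsto_iteratedDeriv_lt`); multiplying `u - 1` by a cutoff descending on `[T, T + 1]` therefore
costs an energy that vanishes as `T → ∞` (`cut_right`). The other end follows by reflection.

The glued functions have energy exactly equal to the sum of the energies of their profiles, because
the layers are disjoint and `F_ε` is invariant under the rescaling (`exists_recovery`). Each profile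
is itself a competitor for `m_k`, so the sum is at least `m_k #S` and no separate lower-semicontinuity
argument is needed for the equality of the limit. Letting the error tend to `0` along a diagonal
gives the family.

The predicate `PMJump` also admits points of `S` at which `v` merely takes an exceptional value, with
equal one-sided limits. At such a point one inserts a localized bump around the well whose energy
is exactly `m_k`, found by the intermediate value theorem (`exists_profile_const`).
-/

open MeasureTheory Filter Topology Set
open scoped ENNReal NNReal

/-- The optimal-profile energy `∫_ℝ (W(u) + (u^{(k)})²) dt`. -/
noncomputable def transitionEnergy (k : ℕ) (W : ℝ → ℝ) (u : ℝ → ℝ) : ℝ≥0∞ :=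
  ∫⁻ t : ℝ, ENNReal.ofReal (W (u t) + (iteratedDeriv k u t) ^ 2)

/-- The optimal-profile constant
`m_k = inf {∫_ℝ (W(u) + (u^{(k)})²) dt : u ∈ H^k_loc(ℝ), u(±∞) = ±1}`. -/
noncomputable def mK (k : ℕ) (W : ℝ → ℝ) : ℝ≥0∞ :=
  ⨅ u ∈ {u : ℝ → ℝ | ContDiff ℝ k u ∧ Tendsto u atBot (𝓝 (-1)) ∧ Tendsto u atTop (𝓝 1)},
    transitionEnergy k W u

/-! ### Decay of intermediate derivatives -/

/-- `g` is slowly varying at `+∞`: its oscillation over `[t, t + 1]` tends to `0`. -/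
def SlowVar (g : ℝ → ℝ) : Prop :=
  ∀ ε > (0:ℝ), ∀ᶠ t in atTop, ∀ s ∈ Icc t (t + 1), |g s - g t| ≤ ε

theorem contDiff_differentiable_iter {n j : ℕ} {f : ℝ → ℝ} (hf : ContDiff ℝ n f) (hj : j < n) :
    Differentiable ℝ (iteratedDeriv j f) :=
  hf.differentiable_iteratedDeriv j (by exact_mod_cast hj)

theorem contDiff_continuous_iter {n j : ℕ} {f : ℝ → ℝ} (hf : ContDiff ℝ n f) (hj : j ≤ n) :
    Continuous (iteratedDeriv j f) :=
  hf.continuous_iteratedDeriv j (by exact_mod_cast hj)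

/-- A function vanishing at `+∞` whose `n`-th derivative is slowly varying has its `n`-th derivative
vanishing at `+∞`. Induction on `n`: the increment `f (t + 1) - f t` has `n`-th derivative equal to
`f^{(n+1)}` at an intermediate point, hence close to `f^{(n+1)} t`. -/
theorem tendsto_iteratedDeriv_of_slowVar (n : ℕ) : ∀ f : ℝ → ℝ, ContDiff ℝ n f →
    Tendsto f atTop (𝓝 0) → SlowVar (iteratedDeriv n f) →
    Tendsto (iteratedDeriv n f) atTop (𝓝 0) := by
  induction n with
  | zero => intro f _ h _; simpa using h
  | succ n ih =>
    intro f hf h0 hs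
    have hfn : ContDiff ℝ n f := hf.of_le (by exact_mod_cast n.le_succ)
    have hsh : ContDiff ℝ n (fun t => f (t + 1)) := hfn.comp (contDiff_id.add contDiff_const)
    let h : ℝ → ℝ := (fun t => f (t + 1)) - f
    have hD : ∀ t, iteratedDeriv n h t = iteratedDeriv n f (t + 1) - iteratedDeriv n f t := by
      intro t
      rw [iteratedDeriv_sub hsh.contDiffAt hfn.contDiffAt, iteratedDeriv_comp_add_const]
    have hdiff := contDiff_differentiable_iter hf n.lt_succ_self
    have hmvt : ∀ t, ∃ ξ ∈ Icc t (t + 1), iteratedDeriv (n + 1) f ξ = iteratedDeriv n h t := by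
      intro t
      obtain ⟨ξ, hξ, he⟩ := exists_deriv_eq_slope (iteratedDeriv n f) (lt_add_one t)
        hdiff.continuous.continuousOn hdiff.differentiableOn
      refine ⟨ξ, Ioo_subset_Icc_self hξ, ?_⟩
      rw [iteratedDeriv_succ, he, hD]
      simp
    have hclose : ∀ ε > (0:ℝ), ∀ᶠ t in atTop,
        |iteratedDeriv n h t - iteratedDeriv (n + 1) f t| ≤ ε := by
      intro ε hε
      filter_upwards [hs ε hε] with t ht
      obtain ⟨ξ, hξ, he⟩ := hmvt t
      rw [← he]
      exact ht ξ hξ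
    have hlim : Tendsto (iteratedDeriv n h) atTop (𝓝 0) := by
      refine ih h (hsh.sub hfn) ?_ ?_
      · have := (h0.comp (tendsto_atTop_add_const_right atTop (1:ℝ) tendsto_id)).sub h0
        have h' : Tendsto (fun x => f (x + 1) - f x) atTop (𝓝 0) := by simpa using this
        exact h'
      · intro ε hε
        have h3 : (0:ℝ) < ε / 3 := by positivity
        obtain ⟨A, hA⟩ := eventually_atTop.1 (hclose _ h3)
        filter_upwards [hs _ h3, eventually_ge_atTop A] with t ht htA s hst
        have e1 := abs_le.1 (hA t htA)
        have e2 := abs_le.1 (hA s (htA.trans hst.1))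
        have e3 := abs_le.1 (ht s hst)
        rw [abs_le]
        constructor <;> linarith [e1.1, e1.2, e2.1, e2.2, e3.1, e3.2]
    have hz : Tendsto (fun t => iteratedDeriv n h t - iteratedDeriv (n + 1) f t) atTop (𝓝 0) := by
      rw [Metric.tendsto_nhds]
      intro ε hε
      filter_upwards [hclose (ε / 2) (by positivity)] with t ht
      rw [Real.dist_eq, sub_zero]
      linarith
    simpa using hlim.sub hz

theorem slowVar_of_deriv_tendsto {G : ℝ → ℝ} (hG : Differentiable ℝ G)
    (h : Tendsto (deriv G) atTop (𝓝 0)) : SlowVar G := by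
  intro ε hε
  obtain ⟨A, hA⟩ := eventually_atTop.1 ((Metric.tendsto_nhds.1 h) ε hε)
  filter_upwards [eventually_ge_atTop A] with t ht s hs
  have := (convex_Icc t (t + 1)).norm_image_sub_le_of_norm_deriv_le (f := G) (C := ε)
    (fun x _ => hG x) (fun x hx => by
      have := hA x (ht.trans hx.1)
      rw [dist_zero_right] at this
      exact this.le) (left_mem_Icc.2 (by linarith)) hs
  rw [Real.norm_eq_abs, Real.norm_eq_abs] at this
  have h1 : |s - t| ≤ 1 := by rw [abs_le]; constructor <;> linarith [hs.1, hs.2]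
  nlinarith

theorem slowVar_of_deriv_sq {G : ℝ → ℝ} (hG : Differentiable ℝ G) (hc : Continuous (deriv G))
    (h : ∀ ε > (0:ℝ), ∀ᶠ t in atTop, ∫ x in t..(t + 1), (deriv G x) ^ 2 ≤ ε) : SlowVar G := by
  intro ε hε
  filter_upwards [h (ε ^ 2) (by positivity)] with t ht s hs
  have hint : ∀ a b, IntervalIntegrable (deriv G) volume a b := fun a b => hc.intervalIntegrable a b
  have e1 : G s - G t = ∫ x in t..s, deriv G x :=
    (intervalIntegral.integral_deriv_eq_sub (fun x _ => hG x) (hint _ _)).symm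
  have e2 : |∫ x in t..s, deriv G x| ≤ ∫ x in t..s, |deriv G x| :=
    intervalIntegral.abs_integral_le_integral_abs hs.1
  -- Young's inequality replaces Cauchy-Schwarz.
  have hY : ∀ x, |deriv G x| ≤ (deriv G x) ^ 2 / (2 * ε) + ε / 2 := by
    intro x
    rw [← sub_nonneg]
    have : (deriv G x) ^ 2 / (2 * ε) + ε / 2 - |deriv G x| = (|deriv G x| - ε) ^ 2 / (2 * ε) := by
      rw [← sq_abs (deriv G x)]; field_simp; ring
    rw [this]; positivity
  have hcY : Continuous fun x => (deriv G x) ^ 2 / (2 * ε) + ε / 2 := by fun_prop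
  have e3 : ∫ x in t..s, |deriv G x| ≤ ∫ x in t..s, ((deriv G x) ^ 2 / (2 * ε) + ε / 2) :=
    intervalIntegral.integral_mono_on hs.1 (hc.abs.intervalIntegrable _ _)
      (hcY.intervalIntegrable _ _) (fun x _ => hY x)
  have e4 : ∫ x in t..s, ((deriv G x) ^ 2 / (2 * ε) + ε / 2) ≤
      ∫ x in t..(t + 1), ((deriv G x) ^ 2 / (2 * ε) + ε / 2) :=
    intervalIntegral.integral_mono_interval le_rfl hs.1 hs.2
      (Eventually.of_forall fun x => by simp only [Pi.zero_apply]; positivity)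
      (hcY.intervalIntegrable _ _)
  have e5 : ∫ x in t..(t + 1), ((deriv G x) ^ 2 / (2 * ε) + ε / 2) =
      (∫ x in t..(t + 1), (deriv G x) ^ 2) / (2 * ε) + ε / 2 := by
    have hcq : Continuous fun x => (deriv G x) ^ 2 / (2 * ε) := by fun_prop
    rw [intervalIntegral.integral_add (hcq.intervalIntegrable _ _)
      (continuous_const.intervalIntegrable _ _), intervalIntegral.integral_div]
    simp
  have e6 : (∫ x in t..(t + 1), (deriv G x) ^ 2) / (2 * ε) ≤ ε / 2 := by
    rw [div_le_iff₀ (by positivity)]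
    nlinarith
  rw [e1]
  linarith

/-- If `f → 0` at `+∞` and `f^{(k)}` is square integrable near `+∞`, all lower derivatives
vanish at `+∞`. -/
theorem tendsto_iteratedDeriv_lt {k : ℕ} {f : ℝ → ℝ} (hf : ContDiff ℝ k f)
    (h0 : Tendsto f atTop (𝓝 0))
    (h : ∀ ε > (0:ℝ), ∀ᶠ t in atTop, ∫ x in t..(t + 1), (iteratedDeriv k f x) ^ 2 ≤ ε) :
    ∀ j < k, Tendsto (iteratedDeriv j f) atTop (𝓝 0) := by
  -- Downward induction, on the distance `i` from the top order.
  have key : ∀ i j, j + (i + 1) = k → Tendsto (iteratedDeriv j f) atTop (𝓝 0) := by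
    intro i
    induction i with
    | zero =>
      intro j hj
      subst hj
      refine tendsto_iteratedDeriv_of_slowVar j f (hf.of_le (by norm_cast; omega)) h0 ?_
      rw [zero_add] at *
      have hc := contDiff_continuous_iter hf le_rfl
      rw [iteratedDeriv_succ] at hc h
      exact slowVar_of_deriv_sq (contDiff_differentiable_iter hf (by omega)) hc h
    | succ i ih =>
      intro j hj
      refine tendsto_iteratedDeriv_of_slowVar j f (hf.of_le (by norm_cast; omega)) h0 ?_
      refine slowVar_of_deriv_tendsto (contDiff_differentiable_iter hf (by omega)) ?_
      rw [← iteratedDeriv_succ]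
      exact ih (j + 1) (by omega)
  intro j hj
  exact key (k - j - 1) j (by omega)

theorem tail_of_integrable {g : ℝ → ℝ} (hg : Integrable g) :
    ∀ ε > (0:ℝ), ∀ᶠ t in atTop, ∫ x in t..(t + 1), g x ≤ ε := by
  intro ε hε
  have h1 := intervalIntegral_tendsto_integral_Ioi (0:ℝ) hg.integrableOn tendsto_id
  have h2 := intervalIntegral_tendsto_integral_Ioi (0:ℝ) hg.integrableOn
    (tendsto_atTop_add_const_right atTop (1:ℝ) tendsto_id)
  have h3 := h2.sub h1
  rw [sub_self] at h3
  filter_upwards [h3.eventually (ge_mem_nhds hε)] with t ht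
  rwa [id, intervalIntegral.integral_interval_sub_left hg.intervalIntegrable
    hg.intervalIntegrable] at ht

/-! ### Truncation at infinity -/

theorem iteratedDeriv_const_sub_fun {k : ℕ} (hk : 1 ≤ k) (u : ℝ → ℝ) (c t : ℝ) :
    iteratedDeriv k (fun x => u x - c) t = iteratedDeriv k u t := by
  have := iteratedDeriv_const_add (f := u) (x := t) hk (-c)
  simpa [sub_eq_neg_add] using this

/-- The smooth cutoff equal to `1` on `(-∞, 0]` and to `0` on `[1, ∞)`. -/
noncomputable def cutoff (x : ℝ) : ℝ := Real.smoothTransition (1 - x)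

theorem cutoff_contDiff (n : ℕ) : ContDiff ℝ n cutoff :=
  (Real.smoothTransition.contDiff (n := n)).comp (contDiff_const.sub contDiff_id)

theorem cutoff_one {x : ℝ} (hx : x ≤ 0) : cutoff x = 1 :=
  Real.smoothTransition.one_of_one_le (by linarith)

theorem cutoff_zero {x : ℝ} (hx : 1 ≤ x) : cutoff x = 0 :=
  Real.smoothTransition.zero_of_nonpos (by linarith)

theorem cutoff_mem (x : ℝ) : 0 ≤ cutoff x ∧ cutoff x ≤ 1 :=
  ⟨Real.smoothTransition.nonneg _, Real.smoothTransition.le_one _⟩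

theorem cutoff_deriv_bound (k : ℕ) : ∃ C > (0:ℝ), ∀ i ≤ k, ∀ x ∈ Icc (0:ℝ) 1,
    |(k.choose i : ℝ) * iteratedDeriv i cutoff x| ≤ C := by
  have h : ∀ i : ℕ, ∃ B : ℝ, ∀ x ∈ Icc (0:ℝ) 1, |(k.choose i : ℝ) * iteratedDeriv i cutoff x| ≤ B := by
    intro i
    have hc : Continuous fun x => (k.choose i : ℝ) * iteratedDeriv i cutoff x :=
      continuous_const.mul (contDiff_continuous_iter (cutoff_contDiff i) le_rfl)
    obtain ⟨B, hB⟩ := isCompact_Icc.exists_bound_of_continuousOn (s := Icc (0:ℝ) 1) hc.continuousOn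
    exact ⟨B, hB⟩
  choose B hB using h
  refine ⟨1 + ∑ i ∈ Finset.range (k + 1), |B i|, by positivity, fun i hi x hx => ?_⟩
  have := Finset.single_le_sum (f := fun i => |B i|) (fun i _ => abs_nonneg _)
    (Finset.mem_range.2 (Nat.lt_succ_of_le hi))
  have h2 := hB i x hx
  have h3 := le_abs_self (B i)
  linarith

/-- Leibniz estimate for the truncated function: where the derivatives of order below `k` are at most
`δ`, the `k`-th derivative of `cutoff (· - T) * f` is controlled by `δ` and `f^{(k)}`. -/
theorem cutoff_leibniz {k : ℕ} {C : ℝ} (hC : 0 < C)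
    (hb : ∀ i ≤ k, ∀ x ∈ Icc (0:ℝ) 1, |(k.choose i : ℝ) * iteratedDeriv i cutoff x| ≤ C)
    {f : ℝ → ℝ} (hf : ContDiff ℝ k f) {δ T t : ℝ}
    (hj : ∀ j < k, |iteratedDeriv j f t| ≤ δ) (ht : t ∈ Icc T (T + 1)) :
    (iteratedDeriv k (fun x => cutoff (x - T) * f x) t) ^ 2 ≤
      2 * C ^ 2 * (k * δ) ^ 2 + 2 * C ^ 2 * (iteratedDeriv k f t) ^ 2 := by
  have hcd : ContDiff ℝ k fun x => cutoff (x - T) :=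
    (cutoff_contDiff k).comp (contDiff_id.sub contDiff_const)
  have hx : t - T ∈ Icc (0:ℝ) 1 := ⟨by linarith [ht.1], by linarith [ht.2]⟩
  have e1 : iteratedDeriv k (fun x => cutoff (x - T) * f x) t =
      ∑ i ∈ Finset.range (k + 1),
        (k.choose i : ℝ) * iteratedDeriv i cutoff (t - T) * iteratedDeriv (k - i) f t := by
    have := iteratedDeriv_mul (n := k) (x := t) hcd.contDiffAt hf.contDiffAt
    simp only [iteratedDeriv_comp_sub_const] at this
    exact this
  have e2 : |iteratedDeriv k (fun x => cutoff (x - T) * f x) t| ≤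
      C * (k * δ) + C * |iteratedDeriv k f t| := by
    rw [e1]
    refine (Finset.abs_sum_le_sum_abs _ _).trans ?_
    rw [Finset.sum_range_succ']
    refine add_le_add ?_ ?_
    · have : ∀ i ∈ Finset.range k, |(k.choose (i + 1) : ℝ) * iteratedDeriv (i + 1) cutoff (t - T) *
          iteratedDeriv (k - (i + 1)) f t| ≤ C * δ := by
        intro i hi
        rw [Finset.mem_range] at hi
        rw [abs_mul]
        exact mul_le_mul (hb _ hi _ hx) (hj _ (by omega)) (abs_nonneg _) hC.le
      refine (Finset.sum_le_sum this).trans (le_of_eq ?_)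
      rw [Finset.sum_const, Finset.card_range, nsmul_eq_mul]; ring
    · rw [abs_mul]
      exact mul_le_mul_of_nonneg_right (hb 0 (Nat.zero_le _) _ hx) (abs_nonneg _)
  rw [← sq_abs, ← sq_abs (iteratedDeriv k f t)]
  have e3 : |iteratedDeriv k (fun x => cutoff (x - T) * f x) t| ^ 2 ≤
      (C * (k * δ) + C * |iteratedDeriv k f t|) ^ 2 := by gcongr
  nlinarith [sq_nonneg (C * (k * δ) - C * |iteratedDeriv k f t|)]

/-- A function locally equal to a zero of `W` has zero energy density. -/
theorem density_zero {k : ℕ} (hk : 1 ≤ k) {W : ℝ → ℝ} {c : ℝ} (hW : W c = 0) {u : ℝ → ℝ} {t : ℝ}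
    (h : u =ᶠ[𝓝 t] fun _ => c) : W (u t) = 0 ∧ iteratedDeriv k u t = 0 := by
  refine ⟨by rw [h.eq_of_nhds, hW], ?_⟩
  rw [h.iteratedDeriv_eq, iteratedDeriv_const, if_neg (by omega)]

/-- A finite-energy function tending to `1` at `+∞` can be made identically `1` far to the right,
without changing it on a prescribed half-line, at arbitrarily small energy cost. -/
theorem cut_right {k : ℕ} (hk : 1 ≤ k) {W : ℝ → ℝ} (hWc : Continuous W) (hWnn : ∀ z, 0 ≤ W z)
    (hW1 : W 1 = 0) {u : ℝ → ℝ} (hu : ContDiff ℝ k u) (h1 : Tendsto u atTop (𝓝 1))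
    (hE : transitionEnergy k W u ≠ ∞) {η : ℝ} (hη : 0 < η) (T₀ : ℝ) :
    ∃ T ≥ T₀, ∃ w : ℝ → ℝ, ContDiff ℝ k w ∧ (∀ t ≤ T, w t = u t) ∧ (∀ t ≥ T + 1, w t = 1) ∧
      transitionEnergy k W w ≤ transitionEnergy k W u + ENNReal.ofReal η := by
  obtain ⟨C, hC, hb⟩ := cutoff_deriv_bound k
  let f : ℝ → ℝ := fun x => u x - 1
  have hf : ContDiff ℝ k f := hu.sub contDiff_const
  have hf0 : Tendsto f atTop (𝓝 0) := by simpa using h1.sub_const 1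
  have hDf : iteratedDeriv k f = iteratedDeriv k u :=
    funext fun t => iteratedDeriv_const_sub_fun hk u 1 t
  have hck := contDiff_continuous_iter hf le_rfl
  -- `f^{(k)}` is square integrable because the energy is finite.
  have hint : Integrable fun x => (iteratedDeriv k f x) ^ 2 := by
    refine ⟨(hck.pow 2).aestronglyMeasurable, ?_⟩
    rw [hasFiniteIntegral_iff_ofReal (Eventually.of_forall fun x => sq_nonneg _)]
    refine lt_of_le_of_lt (lintegral_mono fun x => ?_) (lt_top_iff_ne_top.2 hE)
    rw [hDf]
    exact ENNReal.ofReal_le_ofReal (by linarith [hWnn (u x)])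
  have htail := tail_of_integrable hint
  have hlow := tendsto_iteratedDeriv_lt hf hf0 htail
  -- Choice of the small parameters: `W ≤ η/4` near `1`, and `δ` for the lower derivatives.
  obtain ⟨r, hr, hWr⟩ : ∃ r > (0:ℝ), ∀ z, |z - 1| ≤ r → W z ≤ η / 4 := by
    have := Metric.nhds_basis_closedBall.eventually_iff.1
      ((hWc.tendsto 1).eventually (ge_mem_nhds (by rw [hW1]; positivity : W 1 < η / 4)))
    obtain ⟨r, hr, h⟩ := this
    exact ⟨r, hr, fun z hz => h (by simpa [Real.dist_eq] using hz)⟩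
  obtain ⟨δ, hδ, hδη⟩ : ∃ δ > (0:ℝ), 2 * C ^ 2 * (k * δ) ^ 2 ≤ η / 4 := by
    have hc : Continuous fun δ : ℝ => 2 * C ^ 2 * (k * δ) ^ 2 := by fun_prop
    have := (hc.tendsto 0).eventually
      (ge_mem_nhds (by simp; positivity : 2 * C ^ 2 * (k * (0:ℝ)) ^ 2 < η / 4))
    obtain ⟨δ, h, hp⟩ := ((this.filter_mono nhdsWithin_le_nhds).and
      (self_mem_nhdsWithin (s := Ioi (0:ℝ)))).exists
    exact ⟨δ, hp, h⟩
  have hev : ∀ᶠ t in atTop, |f t| ≤ r ∧ ∀ j < k, |iteratedDeriv j f t| ≤ δ := by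
    refine Filter.Eventually.and ?_ ?_
    · filter_upwards [(Metric.tendsto_nhds.1 hf0) r hr] with t ht
      rw [Real.dist_eq, sub_zero] at ht; exact ht.le
    · have : ∀ j ∈ Finset.range k, ∀ᶠ t in atTop, |iteratedDeriv j f t| ≤ δ := by
        intro j hj
        filter_upwards [(Metric.tendsto_nhds.1 (hlow j (Finset.mem_range.1 hj))) δ hδ] with t ht
        rw [Real.dist_eq, sub_zero] at ht; exact ht.le
      filter_upwards [(Finset.eventually_all _).2 this] with t ht j hj
      exact ht j (Finset.mem_range.2 hj)
  obtain ⟨A, hA⟩ := eventually_atTop.1 hev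
  obtain ⟨T, hTt, hTA, hT0⟩ := ((htail (η / (8 * C ^ 2)) (by positivity)).and
    ((eventually_ge_atTop A).and (eventually_ge_atTop T₀))).exists
  let w : ℝ → ℝ := fun x => 1 + cutoff (x - T) * f x
  have hwl : ∀ t ≤ T, w t = u t := by
    intro t ht
    simp only [w, f, cutoff_one (sub_nonpos.2 ht)]; ring
  have hwr : ∀ t ≥ T + 1, w t = 1 := by
    intro t ht
    simp only [w, cutoff_zero (by linarith : 1 ≤ t - T)]; ring
  have hcd : ContDiff ℝ k fun x => cutoff (x - T) :=
    (cutoff_contDiff k).comp (contDiff_id.sub contDiff_const)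
  refine ⟨T, hT0, w, contDiff_const.add (hcd.mul hf), hwl, hwr, ?_⟩
  let g : ℝ → ℝ := fun t => η / 2 + 2 * C ^ 2 * (iteratedDeriv k f t) ^ 2
  have hgc : Continuous g := by
    have := hck
    simp only [g]; fun_prop
  have hpt : ∀ t, ENNReal.ofReal (W (w t) + (iteratedDeriv k w t) ^ 2) ≤
      ENNReal.ofReal (W (u t) + (iteratedDeriv k u t) ^ 2) +
        (Icc T (T + 1)).indicator (fun t => ENNReal.ofReal (g t)) t := by
    intro t
    by_cases hm : t ∈ Icc T (T + 1)
    · rw [indicator_of_mem hm]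
      refine le_trans (ENNReal.ofReal_le_ofReal ?_) le_add_self
      obtain ⟨hr', hj⟩ := hA t (hTA.trans hm.1)
      have hD : iteratedDeriv k w t = iteratedDeriv k (fun x => cutoff (x - T) * f x) t :=
        iteratedDeriv_const_add (f := fun x => cutoff (x - T) * f x) hk 1
      have hl := cutoff_leibniz hC hb hf hj hm
      have hWw : W (w t) ≤ η / 4 := by
        apply hWr
        have : w t - 1 = cutoff (t - T) * f t := by simp [w]
        rw [this, abs_mul, abs_of_nonneg (cutoff_mem _).1]
        nlinarith [(cutoff_mem (t - T)).1, (cutoff_mem (t - T)).2, abs_nonneg (f t)]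
      rw [hD]
      simp only [g]
      linarith
    · rw [indicator_of_notMem hm, add_zero]
      rw [mem_Icc, not_and_or, not_le, not_le] at hm
      rcases hm with hm | hm
      · have : w =ᶠ[𝓝 t] u := by
          filter_upwards [Iio_mem_nhds hm] with x hx using hwl x (le_of_lt hx)
        rw [this.eq_of_nhds, this.iteratedDeriv_eq]
      · have : w =ᶠ[𝓝 t] fun _ => 1 := by
          filter_upwards [Ioi_mem_nhds hm] with x hx using hwr x (le_of_lt hx)
        obtain ⟨a, b⟩ := density_zero hk hW1 this
        rw [a, b]; simp
  unfold transitionEnergy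
  refine (lintegral_mono hpt).trans ?_
  rw [lintegral_add_right _ (hgc.measurable.ennreal_ofReal.indicator measurableSet_Icc),
    lintegral_indicator measurableSet_Icc]
  gcongr
  rw [← ofReal_integral_eq_lintegral_ofReal (hgc.continuousOn.integrableOn_Icc)
    (Eventually.of_forall fun t => by simp only [Pi.zero_apply, g]; positivity)]
  refine ENNReal.ofReal_le_ofReal ?_
  rw [integral_Icc_eq_integral_Ioc, ← intervalIntegral.integral_of_le (by linarith)]
  have hcq : Continuous fun t => 2 * C ^ 2 * (iteratedDeriv k f t) ^ 2 := by
    have := hck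
    fun_prop
  simp only [g]
  rw [intervalIntegral.integral_add (continuous_const.intervalIntegrable _ _)
    (hcq.intervalIntegrable _ _), intervalIntegral.integral_const_mul]
  simp only [intervalIntegral.integral_const, add_sub_cancel_left, one_smul]
  have : 2 * C ^ 2 * ∫ x in T..(T + 1), (iteratedDeriv k f x) ^ 2 ≤
      2 * C ^ 2 * (η / (8 * C ^ 2)) := by gcongr
  have h4 : 2 * C ^ 2 * (η / (8 * C ^ 2)) = η / 4 := by field_simp; norm_num
  linarith

/-! ### Compactly localized profiles -/

theorem transitionEnergy_comp_neg (k : ℕ) (W : ℝ → ℝ) (u : ℝ → ℝ) :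
    transitionEnergy k W (fun t => u (-t)) = transitionEnergy k W u := by
  unfold transitionEnergy
  have : ∀ t, ENNReal.ofReal (W (u (-t)) + (iteratedDeriv k (fun t => u (-t)) t) ^ 2) =
      (fun t => ENNReal.ofReal (W (u t) + (iteratedDeriv k u t) ^ 2)) (-t) := by
    intro t
    simp only
    rw [iteratedDeriv_comp_neg, smul_eq_mul, mul_pow, ← pow_mul, mul_comm k 2, pow_mul]
    simp
  rw [lintegral_congr this]
  exact (Measure.measurePreserving_neg (volume : Measure ℝ)).lintegral_comp_emb
    (Homeomorph.neg ℝ).measurableEmbedding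
    (fun t => ENNReal.ofReal (W (u t) + (iteratedDeriv k u t) ^ 2))

theorem transitionEnergy_neg (k : ℕ) (W : ℝ → ℝ) (u : ℝ → ℝ) :
    transitionEnergy k (fun z => W (-z)) (fun t => -u t) = transitionEnergy k W u := by
  unfold transitionEnergy
  simp

/-- `p` is a `C^k` profile joining the value `a` to the value `b` within `[-T, T]`. -/
def IsProfile (k : ℕ) (a b T : ℝ) (p : ℝ → ℝ) : Prop :=
  ContDiff ℝ k p ∧ (∀ t ≤ -T, p t = a) ∧ (∀ t ≥ T, p t = b)

theorem IsProfile.density_eq_zero {k : ℕ} (hk : 1 ≤ k) {W : ℝ → ℝ} {a b T : ℝ} {p : ℝ → ℝ}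
    (hp : IsProfile k a b T p) (ha : W a = 0) (hb : W b = 0) {t : ℝ} (ht : T < |t|) :
    W (p t) = 0 ∧ iteratedDeriv k p t = 0 := by
  rcases lt_abs.1 ht with h | h
  · refine density_zero hk hb ?_
    filter_upwards [Ioi_mem_nhds h] with x hx using hp.2.2 x (le_of_lt hx)
  · refine density_zero hk ha ?_
    filter_upwards [Iio_mem_nhds (lt_neg.1 h)] with x hx using hp.2.1 x (le_of_lt hx)

theorem IsProfile.density_continuous {k : ℕ} {W : ℝ → ℝ} (hWc : Continuous W) {a b T : ℝ}
    {p : ℝ → ℝ} (hp : IsProfile k a b T p) :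
    Continuous fun t => W (p t) + (iteratedDeriv k p t) ^ 2 :=
  (hWc.comp hp.1.continuous).add ((contDiff_continuous_iter hp.1 le_rfl).pow 2)

theorem IsProfile.energy_eq {k : ℕ} (hk : 1 ≤ k) {W : ℝ → ℝ} (hWc : Continuous W)
    (hWnn : ∀ z, 0 ≤ W z) {a b T : ℝ} {p : ℝ → ℝ} (hT : 0 ≤ T)
    (hp : IsProfile k a b T p) (ha : W a = 0) (hb : W b = 0) :
    transitionEnergy k W p =
      ENNReal.ofReal (∫ t in (-T)..T, (W (p t) + (iteratedDeriv k p t) ^ 2)) := by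
  unfold transitionEnergy
  rw [intervalIntegral.integral_of_le (by linarith), ← integral_Icc_eq_integral_Ioc,
    ofReal_integral_eq_lintegral_ofReal
      ((hp.density_continuous hWc).continuousOn.integrableOn_Icc)
      (Eventually.of_forall fun t => add_nonneg (hWnn _) (sq_nonneg _))]
  symm
  apply setLIntegral_eq_of_support_subset
  intro t ht
  by_contra hm
  apply ht
  obtain ⟨h1, h2⟩ := hp.density_eq_zero hk ha hb (t := t) (by
    by_contra h
    exact hm (abs_le.1 (not_lt.1 h)))
  simp only
  rw [h1, h2]; simp

theorem mK_le {k : ℕ} {W : ℝ → ℝ} {T : ℝ} {p : ℝ → ℝ} (hp : IsProfile k (-1) 1 T p) :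
    mK k W ≤ transitionEnergy k W p := by
  refine iInf₂_le p ⟨hp.1, ?_, ?_⟩
  · refine tendsto_const_nhds.congr' ?_
    filter_upwards [eventually_le_atBot (-T)] with t ht using (hp.2.1 t ht).symm
  · refine tendsto_const_nhds.congr' ?_
    filter_upwards [eventually_ge_atTop T] with t ht using (hp.2.2 t ht).symm

theorem mK_ne_top {k : ℕ} (hk : 1 ≤ k) {W : ℝ → ℝ} (hWc : Continuous W) (hWnn : ∀ z, 0 ≤ W z)
    (hWm : W (-1) = 0) (hWp : W 1 = 0) : mK k W ≠ ∞ := by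
  have hp : IsProfile k (-1) 1 1 (fun t => 1 - 2 * cutoff t) := by
    refine ⟨contDiff_const.sub (contDiff_const.mul (cutoff_contDiff k)), fun t ht => ?_, fun t ht => ?_⟩
    · simp only [cutoff_one (by linarith : t ≤ 0)]; norm_num
    · simp only [cutoff_zero ht]; norm_num
  refine ne_top_of_le_ne_top ?_ (mK_le (W := W) hp)
  rw [hp.energy_eq hk hWc hWnn zero_le_one hWm hWp]
  exact ENNReal.ofReal_ne_top

/-- Near-optimal transitions from `-1` to `1` may be taken constant outside a bounded interval. -/
theorem exists_profile_up {k : ℕ} (hk : 1 ≤ k) {W : ℝ → ℝ} (hWc : Continuous W)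
    (hWnn : ∀ z, 0 ≤ W z) (hWm : W (-1) = 0) (hWp : W 1 = 0) {η : ℝ} (hη : 0 < η) :
    ∃ T > (0:ℝ), ∃ p, IsProfile k (-1) 1 T p ∧ mK k W ≤ transitionEnergy k W p ∧
      transitionEnergy k W p ≤ mK k W + ENNReal.ofReal η := by
  have h3 : (0:ℝ) < η / 3 := by positivity
  obtain ⟨u, ⟨hu, hub, hut⟩, huE⟩ : ∃ u, (ContDiff ℝ k u ∧ Tendsto u atBot (𝓝 (-1)) ∧
      Tendsto u atTop (𝓝 1)) ∧ transitionEnergy k W u < mK k W + ENNReal.ofReal (η / 3) := by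
    have : mK k W < mK k W + ENNReal.ofReal (η / 3) :=
      ENNReal.lt_add_right (mK_ne_top hk hWc hWnn hWm hWp) (by simpa using h3)
    conv_lhs at this => unfold mK
    obtain ⟨u, hu⟩ := iInf_lt_iff.1 this
    obtain ⟨hu1, hu2⟩ := iInf_lt_iff.1 hu
    exact ⟨u, hu1, hu2⟩
  obtain ⟨T₁, hT₁, w, hw, hwu, hw1, hwE⟩ :=
    cut_right hk hWc hWnn hWp hu hut huE.ne_top h3 0
  -- The left end is cut by applying the same truncation to the reflected function `-w(-t)`.
  have hwb : Tendsto w atBot (𝓝 (-1)) := by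
    refine hub.congr' ?_
    filter_upwards [eventually_le_atBot T₁] with t ht using (hwu t ht).symm
  have hEr : transitionEnergy k (fun z => W (-z)) (fun t => -w (-t)) = transitionEnergy k W w := by
    rw [transitionEnergy_neg k W (fun t => w (-t)), transitionEnergy_comp_neg]
  have hwtop : transitionEnergy k W w ≠ ∞ :=
    ne_top_of_le_ne_top (ENNReal.add_ne_top.2 ⟨huE.ne_top, ENNReal.ofReal_ne_top⟩) hwE
  obtain ⟨T₂, hT₂, q, hq, hqw, hq1, hqE⟩ :=
    cut_right hk (W := fun z => W (-z)) (hWc.comp continuous_neg) (fun z => hWnn _) hWm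
      (u := fun t => -w (-t)) (hw.comp contDiff_neg).neg
      (by simpa using (hwb.comp tendsto_neg_atTop_atBot).neg)
      (by rw [hEr]; exact hwtop) h3 0
  have hp : IsProfile k (-1) 1 (T₁ + T₂ + 1) (fun t => -q (-t)) := by
    refine ⟨(hq.comp contDiff_neg).neg, fun t ht => ?_, fun t ht => ?_⟩
    · simp only [hq1 (-t) (by linarith)]
    · simp only [hqw (-t) (by linarith), neg_neg]
      exact hw1 _ (by linarith)
  refine ⟨T₁ + T₂ + 1, by linarith, _, hp, mK_le hp, ?_⟩
  have hEq : transitionEnergy k W (fun t => -q (-t)) =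
      transitionEnergy k (fun z => W (-z)) q := by
    have := transitionEnergy_neg k (fun z => W (-z)) (fun t => q (-t))
    simp only [neg_neg] at this
    rw [this, transitionEnergy_comp_neg]
  rw [hEq]
  calc _ ≤ _ := hqE
    _ ≤ (mK k W + ENNReal.ofReal (η / 3) + ENNReal.ofReal (η / 3)) + ENNReal.ofReal (η / 3) := by
        rw [hEr]
        gcongr
        exact hwE.trans (by gcongr)
    _ = mK k W + ENNReal.ofReal η := by
        rw [add_assoc, add_assoc, ← ENNReal.ofReal_add h3.le h3.le,
          ← ENNReal.ofReal_add h3.le (by positivity)]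
        congr 2; ring

/-- The compactly supported bump `t^k` times a cutoff, whose `k`-th derivative at `0` is `k!`. -/
noncomputable def powBump (k : ℕ) (t : ℝ) : ℝ := t ^ k * (cutoff (t - 1) * cutoff (-t - 1))

theorem powBump_contDiff (k : ℕ) : ContDiff ℝ k (powBump k) :=
  (contDiff_id.pow k).mul (((cutoff_contDiff k).comp (contDiff_id.sub contDiff_const)).mul
    ((cutoff_contDiff k).comp (contDiff_neg.sub contDiff_const)))

theorem powBump_deriv_ne (k : ℕ) : iteratedDeriv k (powBump k) 0 ≠ 0 := by
  have : powBump k =ᶠ[𝓝 0] fun t => t ^ k := by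
    filter_upwards [Ioo_mem_nhds (by norm_num : (-1:ℝ) < 0) (by norm_num : (0:ℝ) < 1)] with t ht
    rw [powBump, cutoff_one (by linarith [ht.2]), cutoff_one (by linarith [ht.1])]; ring
  rw [this.iteratedDeriv_eq, iteratedDeriv_pow]
  simp [Nat.descFactorial_self, Nat.factorial_ne_zero]

theorem powBump_zero (k : ℕ) {t : ℝ} (ht : 2 ≤ |t|) : powBump k t = 0 := by
  rcases le_abs.1 ht with h | h
  · rw [powBump, cutoff_zero (by linarith)]; ring
  · rw [powBump, cutoff_zero (x := -t - 1) (by linarith)]; ring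

/-- Localized perturbations of a well have any prescribed energy, by the intermediate value theorem
along their amplitude. -/
theorem exists_profile_const {k : ℕ} (hk : 1 ≤ k) {W : ℝ → ℝ} (hWc : Continuous W)
    (hWnn : ∀ z, 0 ≤ W z) {c : ℝ} (hc : W c = 0) {m : ℝ≥0∞} (hm : m ≠ ∞) :
    ∃ T > (0:ℝ), ∃ p, IsProfile k c c T p ∧ transitionEnergy k W p = m := by
  have hprof : ∀ l : ℝ, IsProfile k c c 2 (fun t => c + l * powBump k t) := by
    intro l
    refine ⟨contDiff_const.add (contDiff_const.mul (powBump_contDiff k)), fun t ht => ?_,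
      fun t ht => ?_⟩
    · simp only
      rw [powBump_zero k (le_abs.2 (Or.inr (by linarith)))]; ring
    · simp only
      rw [powBump_zero k (le_abs.2 (Or.inl ht))]; ring
  have hD : ∀ l t, iteratedDeriv k (fun t => c + l * powBump k t) t =
      l * iteratedDeriv k (powBump k) t := by
    intro l t
    rw [iteratedDeriv_const_add (f := fun t => l * powBump k t) hk c,
      iteratedDeriv_const_mul_field]
  have hb := (powBump_contDiff k).continuous
  have hbk := contDiff_continuous_iter (powBump_contDiff k) le_rfl
  let E : ℝ → ℝ := fun l => ∫ t in (-2:ℝ)..2,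
    (W (c + l * powBump k t) + (l * iteratedDeriv k (powBump k) t) ^ 2)
  have hEc : Continuous E := by
    apply intervalIntegral.continuous_parametric_intervalIntegral_of_continuous'
    simp only [Function.uncurry_def]
    fun_prop
  let K : ℝ := ∫ t in (-2:ℝ)..2, (iteratedDeriv k (powBump k) t) ^ 2
  have hK : 0 < K := by
    refine intervalIntegral.integral_pos (by norm_num) (hbk.pow 2).continuousOn
      (fun t _ => sq_nonneg _) ⟨0, by norm_num, ?_⟩
    have := powBump_deriv_ne k
    positivity
  have hElb : ∀ l, l ^ 2 * K ≤ E l := by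
    intro l
    simp only [K, E]
    rw [← intervalIntegral.integral_const_mul]
    refine intervalIntegral.integral_mono_on (by norm_num) ?_ ?_ ?_
    · exact (by fun_prop : Continuous fun t =>
        l ^ 2 * (iteratedDeriv k (powBump k) t) ^ 2).intervalIntegrable _ _
    · exact (by fun_prop : Continuous fun t => W (c + l * powBump k t) +
        (l * iteratedDeriv k (powBump k) t) ^ 2).intervalIntegrable _ _
    · intro t _
      rw [mul_pow]
      linarith [hWnn (c + l * powBump k t)]
  have hE0 : E 0 = 0 := by simp [E, hc]
  obtain ⟨l, hl⟩ : m.toReal ∈ range E := by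
    refine mem_range_of_exists_le_of_exists_ge hEc ⟨0, by rw [hE0]; exact ENNReal.toReal_nonneg⟩
      ⟨Real.sqrt (m.toReal / K), le_trans (le_of_eq ?_) (hElb _)⟩
    rw [Real.sq_sqrt (by positivity)]
    field_simp
  refine ⟨2, two_pos, _, hprof l, ?_⟩
  rw [(hprof l).energy_eq hk hWc hWnn zero_le_two hc hc]
  simp_rw [hD]
  change ENNReal.ofReal (E l) = m
  rw [hl, ENNReal.ofReal_toReal hm]

/-- For every ordered pair of wells, equal or not, there are compactly localized profiles joining
them with energy in `[m_k, m_k + η]`. -/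
theorem exists_profile {k : ℕ} (hk : 1 ≤ k) {W : ℝ → ℝ} (hWc : Continuous W)
    (hWnn : ∀ z, 0 ≤ W z) (hWm : W (-1) = 0) (hWp : W 1 = 0) {η : ℝ} (hη : 0 < η) {a b : ℝ}
    (ha : a = -1 ∨ a = 1) (hb : b = -1 ∨ b = 1) :
    ∃ T > (0:ℝ), ∃ p, IsProfile k a b T p ∧ mK k W ≤ transitionEnergy k W p ∧
      transitionEnergy k W p ≤ mK k W + ENNReal.ofReal η := by
  have hfin := mK_ne_top hk hWc hWnn hWm hWp
  have hc : ∀ c, W c = 0 → ∃ T > (0:ℝ), ∃ p, IsProfile k c c T p ∧ mK k W ≤ transitionEnergy k W p ∧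
      transitionEnergy k W p ≤ mK k W + ENNReal.ofReal η := by
    intro c hc
    obtain ⟨T, hT, p, hp, hE⟩ := exists_profile_const hk hWc hWnn hc hfin
    exact ⟨T, hT, p, hp, hE.ge, hE.le.trans le_self_add⟩
  have hup := exists_profile_up hk hWc hWnn hWm hWp hη
  rcases ha with rfl | rfl <;> rcases hb with rfl | rfl
  · exact hc _ hWm
  · exact hup
  · obtain ⟨T, hT, p, hp, h1, h2⟩ := hup
    refine ⟨T, hT, fun t => p (-t), ⟨hp.1.comp contDiff_neg, fun t ht => hp.2.2 _ (by linarith),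
      fun t ht => hp.2.1 _ (by linarith)⟩, ?_⟩
    rw [transitionEnergy_comp_neg]
    exact ⟨h1, h2⟩
  · exact hc _ hWp

/-! ### Rescaling -/

theorem IsProfile.mono {k : ℕ} {a b T T' : ℝ} {p : ℝ → ℝ} (hp : IsProfile k a b T p)
    (h : T ≤ T') : IsProfile k a b T' p :=
  ⟨hp.1, fun t ht => hp.2.1 t (by linarith), fun t ht => hp.2.2 t (by linarith)⟩

theorem IsProfile.bounded {k : ℕ} {a b T : ℝ} {p : ℝ → ℝ} (hp : IsProfile k a b T p)
    (hT : 0 ≤ T) : ∃ M, ∀ t, |p t| ≤ M := by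
  obtain ⟨M, hM⟩ := isCompact_Icc.exists_bound_of_continuousOn (s := Icc (-T) T)
    hp.1.continuous.continuousOn
  refine ⟨M, fun t => ?_⟩
  rcases le_total t (-T) with h | h
  · rw [hp.2.1 t h, ← hp.2.1 (-T) le_rfl]
    exact hM _ ⟨le_rfl, by linarith⟩
  rcases le_total T t with h' | h'
  · rw [hp.2.2 t h', ← hp.2.2 T le_rfl]
    exact hM _ ⟨by linarith, le_rfl⟩
  · exact hM t ⟨h, h'⟩

/-- The energy density of `F_ε` at `t`. -/
noncomputable def scaledDensity (k : ℕ) (W : ℝ → ℝ) (ε : ℝ) (u : ℝ → ℝ) (t : ℝ) : ℝ≥0∞ :=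
  ENNReal.ofReal ((1 / ε) * W (u t) + ε ^ (2 * k - 1) * (iteratedDeriv k u t) ^ 2)

/-- The exponents of `ε` in `F_ε` are those for which the rescaling `t ↦ (t - s) / ε` preserves
the energy. -/
theorem scaledDensity_rescale {k : ℕ} (hk : 1 ≤ k) {W : ℝ → ℝ} {ε : ℝ} (hε : 0 < ε) (s : ℝ)
    {p : ℝ → ℝ} (hp : ContDiff ℝ k p) (t : ℝ) :
    scaledDensity k W ε (fun t => p ((t - s) / ε)) t = ENNReal.ofReal (1 / ε) *
      ENNReal.ofReal (W (p (ε⁻¹ * (t - s))) + (iteratedDeriv k p (ε⁻¹ * (t - s))) ^ 2) := by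
  have hD : iteratedDeriv k (fun t => p ((t - s) / ε)) t =
      ε⁻¹ ^ k * iteratedDeriv k p (ε⁻¹ * (t - s)) := by
    have h1 := iteratedDeriv_comp_sub_const k (fun x => p (ε⁻¹ * x)) s
    have h2 := iteratedDeriv_comp_const_mul hp ε⁻¹
    have h3 : (fun t => p ((t - s) / ε)) = fun t => p (ε⁻¹ * (t - s)) := by
      funext t; rw [div_eq_inv_mul]
    rw [h3, h1, h2]
  simp only [scaledDensity]
  rw [hD, ← ENNReal.ofReal_mul (by positivity), div_eq_inv_mul (t - s) ε]
  congr 1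
  have : ε ^ (2 * k - 1) * (ε⁻¹ ^ k) ^ 2 = 1 / ε := by
    obtain ⟨j, rfl⟩ : ∃ j, k = j + 1 := ⟨k - 1, by omega⟩
    have e : 2 * (j + 1) - 1 = 2 * j + 1 := by omega
    have e' : 2 * j + 1 + 1 = (j + 1) * 2 := by ring
    rw [e, eq_div_iff hε.ne', ← pow_mul, inv_pow, mul_right_comm, ← pow_succ, e',
      mul_inv_cancel₀ (by positivity)]
  rw [mul_pow, ← mul_assoc, this]
  ring

theorem lintegral_scaledDensity {k : ℕ} (hk : 1 ≤ k) {W : ℝ → ℝ} (hWc : Continuous W) {ε : ℝ}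
    (hε : 0 < ε) (s : ℝ) {p : ℝ → ℝ} (hp : ContDiff ℝ k p) :
    ∫⁻ t, scaledDensity k W ε (fun t => p ((t - s) / ε)) t = transitionEnergy k W p := by
  simp_rw [scaledDensity_rescale hk hε s hp]
  let g : ℝ → ℝ≥0∞ := fun t => ENNReal.ofReal (W (p t) + (iteratedDeriv k p t) ^ 2)
  have hgm : Measurable g :=
    ((hWc.comp hp.continuous).add
      ((contDiff_continuous_iter hp le_rfl).pow 2)).measurable.ennreal_ofReal
  change ∫⁻ t, ENNReal.ofReal (1 / ε) * g (ε⁻¹ * (t - s)) = ∫⁻ t, g t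
  have hgm' : Measurable fun t => g (ε⁻¹ * (t - s)) := hgm.comp (by fun_prop)
  rw [lintegral_const_mul _ hgm',
    lintegral_sub_right_eq_self (fun t => g (ε⁻¹ * t)) s,
    ← lintegral_map (μ := volume) hgm (measurable_const_mul ε⁻¹),
    Real.map_volume_mul_left (inv_ne_zero hε.ne'), lintegral_smul_measure, smul_eq_mul,
    ← mul_assoc, ← ENNReal.ofReal_mul (by positivity), inv_inv, abs_of_pos hε,
    one_div_mul_cancel hε.ne', ENNReal.ofReal_one, one_mul]

/-! ### Step functions -/

/-- `v` is constant on intervals containing none of the points of `S`. -/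
theorem PMJump.eq_of_preconnected {v : ℝ → ℝ} {S : Finset ℝ} (hv : PMJump v S) {I : Set ℝ}
    (hI : IsPreconnected I) (hI1 : I ⊆ Ioo 0 1) (hIS : ∀ t ∈ I, t ∉ S) {x y : ℝ} (hx : x ∈ I)
    (hy : y ∈ I) : v x = v y := by
  have hd : IsDiscrete ({-1, 1} : Set ℝ) := (Set.toFinite _).isDiscrete
  have hc : ContinuousOn v I := fun t ht =>
    (continuousAt_const.congr ((hv.2.2.1 t (hI1 ht) (hIS t ht)).mono
      fun s hs => hs.symm)).continuousWithinAt
  obtain ⟨c, _, hcc⟩ := hI.eqOn_const_of_mapsTo hd hc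
    (fun t ht => by simpa using hv.2.1 t (hI1 ht)) ⟨1, by simp⟩
  rw [hcc hx, hcc hy]; rfl

/-- Structure of a `±1`-valued step function: at a scale `δ` the points of `S` are separated from
each other and from the end points, and `v` has one-sided values `a s`, `b s` near each of them.
The function `v'` extends `v` from `(0, 1)` to the line without further jumps. -/
theorem PMJump.exists_structure {v : ℝ → ℝ} {S : Finset ℝ} (hv : PMJump v S) :
    ∃ δ > (0:ℝ), ∃ a b v' : ℝ → ℝ,
      (∀ s ∈ S, 3 * δ ≤ s ∧ s ≤ 1 - 3 * δ) ∧
      (∀ s ∈ S, ∀ s' ∈ S, s ≠ s' → 4 * δ ≤ |s - s'|) ∧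
      (∀ t, t ∉ S → ∀ᶠ x in 𝓝 t, v' x = v' t) ∧
      (∀ t ∈ Ioo (0:ℝ) 1, v' t = v t) ∧
      (∀ s ∈ S, ∀ t ∈ Ioo (s - 3 * δ) s, v' t = a s) ∧
      (∀ s ∈ S, ∀ t ∈ Ioo s (s + 3 * δ), v' t = b s) ∧
      (∀ t, v' t = -1 ∨ v' t = 1) ∧
      (∀ s ∈ S, a s = -1 ∨ a s = 1) ∧ (∀ s ∈ S, b s = -1 ∨ b s = 1) := by
  obtain ⟨δ, ⟨hA, hB, hδ8⟩, hδ⟩ : ∃ δ : ℝ, ((∀ s ∈ S, 3 * δ ≤ s ∧ s ≤ 1 - 3 * δ) ∧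
      (∀ s ∈ S, ∀ s' ∈ S, s ≠ s' → 4 * δ ≤ |s - s'|) ∧ δ < 1 / 8) ∧ 0 < δ := by
    have h : ∀ c : ℝ, 0 < c → ∀ᶠ δ in 𝓝 (0:ℝ), δ < c := fun c hc => Iio_mem_nhds hc
    have hall : ∀ᶠ δ in 𝓝 (0:ℝ), (∀ s ∈ S, 3 * δ ≤ s ∧ s ≤ 1 - 3 * δ) ∧
        (∀ s ∈ S, ∀ s' ∈ S, s ≠ s' → 4 * δ ≤ |s - s'|) ∧ δ < 1 / 8 := by
      refine Filter.Eventually.and ?_ (Filter.Eventually.and ?_ (h _ (by norm_num)))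
      · rw [Finset.eventually_all]
        intro s hs
        have hs1 := hv.1 hs
        filter_upwards [h (s / 3) (by linarith [hs1.1]), h ((1 - s) / 3) (by linarith [hs1.2])]
          with δ h1 h2
        constructor <;> linarith
      · rw [Finset.eventually_all]
        intro s hs
        rw [Finset.eventually_all]
        intro s' hs'
        by_cases hne : s = s'
        · exact Eventually.of_forall fun _ h => absurd hne h
        · filter_upwards [h (|s - s'| / 4) (by have := abs_pos.2 (sub_ne_zero.2 hne); linarith)]
            with δ h1 _
          linarith
    exact ((hall.filter_mono nhdsWithin_le_nhds).and
      (self_mem_nhdsWithin (s := Ioi (0:ℝ)))).exists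
  let v' : ℝ → ℝ := fun t => v (max δ (min t (1 - δ)))
  have hmem : ∀ t : ℝ, max δ (min t (1 - δ)) ∈ Ioo (0:ℝ) 1 := fun t =>
    ⟨lt_max_of_lt_left hδ, max_lt (by linarith) (min_lt_of_right_lt (by linarith))⟩
  have hleft : ∀ t < 3 * δ, v' t = v δ := by
    intro t ht
    have hI : ∀ x ∈ Ioo 0 (3 * δ), x ∉ S := fun x hx hxS => by linarith [(hA x hxS).1, hx.2]
    refine hv.eq_of_preconnected isPreconnected_Ioo
      (Ioo_subset_Ioo_right (by linarith)) hI ⟨(hmem t).1, ?_⟩ ⟨hδ, by linarith⟩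
    exact max_lt (by linarith) (min_lt_of_left_lt ht)
  have hright : ∀ t > 1 - 3 * δ, v' t = v (1 - δ) := by
    intro t ht
    have hI : ∀ x ∈ Ioo (1 - 3 * δ) 1, x ∉ S := fun x hx hxS => by linarith [(hA x hxS).2, hx.1]
    refine hv.eq_of_preconnected isPreconnected_Ioo
      (Ioo_subset_Ioo_left (by linarith)) hI ⟨?_, (hmem t).2⟩ ⟨by linarith, by linarith⟩
    exact lt_max_of_lt_right (lt_min ht (by linarith))
  have hD : ∀ t ∈ Ioo (0:ℝ) 1, v' t = v t := by
    intro t ht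
    rcases lt_or_ge t δ with h | h
    · rw [hleft t (by linarith)]
      exact hv.eq_of_preconnected (I := Ioo 0 (3 * δ)) isPreconnected_Ioo
        (Ioo_subset_Ioo_right (by linarith)) (fun x hx hxS => by linarith [(hA x hxS).1, hx.2])
        ⟨hδ, by linarith⟩ ⟨ht.1, by linarith⟩
    rcases lt_or_ge (1 - δ) t with h' | h'
    · rw [hright t (by linarith)]
      exact hv.eq_of_preconnected (I := Ioo (1 - 3 * δ) 1) isPreconnected_Ioo
        (Ioo_subset_Ioo_left (by linarith)) (fun x hx hxS => by linarith [(hA x hxS).2, hx.1])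
        ⟨by linarith, by linarith⟩ ⟨by linarith, ht.2⟩
    · simp only [v', min_eq_left h', max_eq_right h]
  refine ⟨δ, hδ, fun s => v (s - δ), fun s => v (s + δ), v', hA, hB, ?_, hD, ?_, ?_,
    fun t => hv.2.1 _ (hmem t), ?_, ?_⟩
  · intro t htS
    rcases lt_or_ge t (2 * δ) with h | h
    · filter_upwards [Iio_mem_nhds h] with x hx
      have hx' : x < 2 * δ := hx
      rw [hleft x (by linarith), hleft t (by linarith)]
    rcases lt_or_ge (1 - 2 * δ) t with h' | h'
    · filter_upwards [Ioi_mem_nhds h'] with x hx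
      have hx' : 1 - 2 * δ < x := hx
      rw [hright x (by linarith), hright t (by linarith)]
    · have ht1 : t ∈ Ioo (0:ℝ) 1 := ⟨by linarith, by linarith⟩
      filter_upwards [hv.2.2.1 t ht1 htS, Ioo_mem_nhds ht1.1 ht1.2] with x hx hx1
      rw [hD x hx1, hD t ht1, hx]
  · intro s hs t ht
    have h := hA s hs
    rw [hD t ⟨by linarith [ht.1], by linarith [ht.2]⟩]
    refine hv.eq_of_preconnected (I := Ioo (s - 3 * δ) s) isPreconnected_Ioo
      (Ioo_subset_Ioo (by linarith) (by linarith)) (fun x hx hxS => ?_) ht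
      ⟨by linarith, by linarith⟩
    have h4 := hB s hs x hxS hx.2.ne'
    rw [abs_of_pos (by linarith [hx.2])] at h4
    linarith [hx.1]
  · intro s hs t ht
    have h := hA s hs
    rw [hD t ⟨by linarith [ht.1], by linarith [ht.2]⟩]
    refine hv.eq_of_preconnected (I := Ioo s (s + 3 * δ)) isPreconnected_Ioo
      (Ioo_subset_Ioo (by linarith) (by linarith)) (fun x hx hxS => ?_) ht
      ⟨by linarith, by linarith⟩
    have h4 := hB s hs x hxS hx.1.ne
    rw [abs_of_neg (by linarith [hx.1])] at h4
    linarith [hx.2]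
  · intro s hs
    have h := hA s hs
    exact hv.2.1 _ ⟨by linarith, by linarith⟩
  · intro s hs
    have h := hA s hs
    exact hv.2.1 _ ⟨by linarith, by linarith⟩

/-! ### Gluing -/

open Classical in
/-- The profiles `p s`, rescaled by `ε` and centred at the points `s ∈ S`, inserted into the
background `v'`. -/
noncomputable def glue (S : Finset ℝ) (δ ε : ℝ) (p : ℝ → ℝ → ℝ) (v' : ℝ → ℝ) (t : ℝ) : ℝ :=
  if h : ∃ s ∈ S, |t - s| < 2 * δ then p h.choose ((t - h.choose) / ε) else v' t

theorem glue_near {S : Finset ℝ} {δ ε : ℝ} {p : ℝ → ℝ → ℝ} {v' : ℝ → ℝ}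
    (hB : ∀ s ∈ S, ∀ s' ∈ S, s ≠ s' → 4 * δ ≤ |s - s'|) {s t : ℝ} (hs : s ∈ S)
    (ht : |t - s| < 2 * δ) : glue S δ ε p v' t = p s ((t - s) / ε) := by
  have h : ∃ s ∈ S, |t - s| < 2 * δ := ⟨s, hs, ht⟩
  have hc : h.choose = s := by
    by_contra hne
    have h1 := hB _ h.choose_spec.1 s hs hne
    have h2 := abs_sub_le h.choose t s
    rw [abs_sub_comm h.choose t] at h2
    linarith [h.choose_spec.2]
  rw [glue, dif_pos h, hc]

theorem glue_far {k : ℕ} {S : Finset ℝ} {δ ε T : ℝ} {p : ℝ → ℝ → ℝ} {v' a b : ℝ → ℝ} (hε : 0 < ε)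
    (hB : ∀ s ∈ S, ∀ s' ∈ S, s ≠ s' → 4 * δ ≤ |s - s'|)
    (ha : ∀ s ∈ S, ∀ t ∈ Ioo (s - 3 * δ) s, v' t = a s)
    (hb : ∀ s ∈ S, ∀ t ∈ Ioo s (s + 3 * δ), v' t = b s)
    (hp : ∀ s ∈ S, IsProfile k (a s) (b s) T (p s)) (hT : 0 < T) {t : ℝ}
    (ht : ∀ s ∈ S, T * ε < |t - s|) : glue S δ ε p v' t = v' t := by
  by_cases h : ∃ s ∈ S, |t - s| < 2 * δ
  · obtain ⟨s, hs, hst⟩ := h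
    rw [glue_near hB hs hst]
    have h1 := ht s hs
    have hTε : 0 < T * ε := by positivity
    have h2 := abs_lt.1 hst
    rcases lt_abs.1 h1 with h3 | h3
    · rw [hb s hs t ⟨by linarith, by linarith [h2.2]⟩]
      exact (hp s hs).2.2 _ (by rw [ge_iff_le, le_div_iff₀ hε]; exact h3.le)
    · rw [ha s hs t ⟨by linarith [h2.1], by linarith⟩]
      exact (hp s hs).2.1 _ (by rw [div_le_iff₀ hε]; linarith)
  · rw [glue, dif_neg h]

/-- For fixed `η`, gluing profiles with energy in `[m_k, m_k + η]` gives, at every small scale `ε`,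
a function close to `v` with energy in `[m_k #S, (m_k + η) #S]`. -/
theorem exists_recovery {k : ℕ} (hk : 1 ≤ k) {W : ℝ → ℝ} (hWc : Continuous W)
    (hWnn : ∀ z, 0 ≤ W z) (hWm : W (-1) = 0) (hWp : W 1 = 0) {v : ℝ → ℝ} {S : Finset ℝ}
    (hv : PMJump v S) {η : ℝ} (hη : 0 < η) :
    ∀ᶠ ε in 𝓝[>] (0:ℝ), ∃ u : ℝ → ℝ, ContDiff ℝ k u ∧
      ∫⁻ t in Ioo (0:ℝ) 1, ENNReal.ofReal |u t - v t| ≤ ENNReal.ofReal η ∧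
      mK k W * (S.card : ℝ≥0∞) ≤ Fe k W ε u ∧
      Fe k W ε u ≤ (mK k W + ENNReal.ofReal η) * (S.card : ℝ≥0∞) := by
  obtain ⟨δ, hδ, a, b, v', hA, hB, hloc, hvv, ha, hb, hv1, ha1, hb1⟩ := hv.exists_structure
  -- Profiles at all points of `S`, with a common transition length `T` and a common bound `M`.
  have hex : ∀ s, ∃ Tp : ℝ × (ℝ → ℝ) × ℝ, s ∈ S → 0 < Tp.1 ∧ IsProfile k (a s) (b s) Tp.1 Tp.2.1 ∧
      mK k W ≤ transitionEnergy k W Tp.2.1 ∧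
      transitionEnergy k W Tp.2.1 ≤ mK k W + ENNReal.ofReal η ∧ ∀ t, |Tp.2.1 t| ≤ Tp.2.2 := by
    intro s
    by_cases hs : s ∈ S
    · obtain ⟨T, hT, p, hp, h1, h2⟩ :=
        exists_profile hk hWc hWnn hWm hWp hη (ha1 s hs) (hb1 s hs)
      obtain ⟨M, hM⟩ := hp.bounded hT.le
      exact ⟨(T, p, M), fun _ => ⟨hT, hp, h1, h2, hM⟩⟩
    · exact ⟨(0, 0, 0), fun h => absurd h hs⟩
  choose Tp hTp using hex
  let p : ℝ → ℝ → ℝ := fun s => (Tp s).2.1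
  let T : ℝ := 1 + ∑ s ∈ S, |(Tp s).1|
  let M : ℝ := ∑ s ∈ S, |(Tp s).2.2|
  have hT : 0 < T := by positivity
  have hM0 : 0 ≤ M := by positivity
  have hp : ∀ s ∈ S, IsProfile k (a s) (b s) T (p s) := fun s hs =>
    (hTp s hs).2.1.mono (by
      have := Finset.single_le_sum (f := fun s => |(Tp s).1|) (fun _ _ => abs_nonneg _) hs
      have h2 := le_abs_self (Tp s).1
      simp only [T]
      linarith)
  have hM : ∀ s ∈ S, ∀ t, |p s t| ≤ M := fun s hs t => by
    have := Finset.single_le_sum (f := fun s => |(Tp s).2.2|) (fun _ _ => abs_nonneg _) hs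
    exact ((hTp s hs).2.2.2.2 t).trans ((le_abs_self _).trans this)
  have hev : ∀ c : ℝ, ∀ d > (0:ℝ), ∀ᶠ ε in 𝓝[>] (0:ℝ), c * ε < d := by
    intro c d hd
    have hc : Continuous fun ε : ℝ => c * ε := by fun_prop
    exact ((hc.tendsto 0).eventually (Iio_mem_nhds (by simpa using hd))).filter_mono
      nhdsWithin_le_nhds
  filter_upwards [self_mem_nhdsWithin, hev T δ hδ, hev (S.card * ((M + 1) * (2 * T))) η hη]
    with ε hε hTε hεη
  have hε : 0 < ε := hε
  have hTε0 : 0 < T * ε := by positivity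
  let u := glue S δ ε p v'
  have hfar : ∀ t, (∀ s ∈ S, T * ε < |t - s|) → u t = v' t := fun t ht =>
    glue_far hε hB ha hb hp hT ht
  have hnear : ∀ s ∈ S, ∀ t, |t - s| < 2 * δ → u =ᶠ[𝓝 t] fun t => p s ((t - s) / ε) := by
    intro s hs t ht
    have ho : IsOpen {x : ℝ | |x - s| < 2 * δ} := isOpen_lt (by fun_prop) (by fun_prop)
    filter_upwards [ho.mem_nhds ht] with x hx using glue_near hB hs hx
  have hconst : ∀ t, (∀ s ∈ S, 2 * δ ≤ |t - s|) → u =ᶠ[𝓝 t] fun _ => v' t := by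
    intro t ht
    have ho : ∀ᶠ x in 𝓝 t, ∀ s ∈ S, T * ε < |x - s| := by
      rw [Finset.eventually_all]
      intro s hs
      have ho : IsOpen {x : ℝ | T * ε < |x - s|} := isOpen_lt (by fun_prop) (by fun_prop)
      exact ho.mem_nhds (show T * ε < |t - s| by linarith [ht s hs])
    have htS : t ∉ S := fun h => by
      have := ht t h
      rw [sub_self, abs_zero] at this
      linarith
    filter_upwards [ho, hloc t htS] with x hx hx2
    rw [hfar x hx, hx2]
  have hWv : ∀ t, W (v' t) = 0 := fun t => by rcases hv1 t with h | h <;> rw [h] <;> assumption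
  -- The density of `u` is the sum of the densities of the rescaled profiles.
  let F : ℝ → ℝ → ℝ≥0∞ := fun s => scaledDensity k W ε (fun t => p s ((t - s) / ε))
  have hF0 : ∀ s ∈ S, ∀ t, T * ε < |t - s| → F s t = 0 := by
    intro s hs t ht
    have haz : W (a s) = 0 := by rcases ha1 s hs with h | h <;> rw [h] <;> assumption
    have hbz : W (b s) = 0 := by rcases hb1 s hs with h | h <;> rw [h] <;> assumption
    obtain ⟨h1, h2⟩ := (hp s hs).density_eq_zero hk haz hbz (t := ε⁻¹ * (t - s)) (by
      rw [abs_mul, abs_of_pos (inv_pos.2 hε), inv_mul_eq_div, lt_div_iff₀ hε]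
      exact ht)
    simp only [F]
    rw [scaledDensity_rescale hk hε s (hp s hs).1, h1, h2]
    simp
  have hdens : ∀ t, scaledDensity k W ε u t = ∑ s ∈ S, F s t := by
    intro t
    by_cases h : ∃ s ∈ S, |t - s| < 2 * δ
    · obtain ⟨s, hs, hst⟩ := h
      rw [Finset.sum_eq_single_of_mem s hs]
      · have := hnear s hs t hst
        simp only [F, scaledDensity]
        rw [this.eq_of_nhds, this.iteratedDeriv_eq]
      · intro s' hs' hne
        apply hF0 s' hs'
        have h1 := hB s' hs' s hs hne
        have h2 := abs_sub_le s' t s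
        rw [abs_sub_comm s' t] at h2
        linarith
    · push Not at h
      obtain ⟨h1, h2⟩ := density_zero hk (hWv t) (hconst t h)
      rw [Finset.sum_eq_zero fun s hs => hF0 s hs t (by linarith [h s hs])]
      simp only [scaledDensity]
      rw [h1, h2]
      simp
  have hFc : ∀ s ∈ S, Measurable (F s) := by
    intro s hs
    have h1 : F s = fun t => _ := funext fun t => scaledDensity_rescale hk hε s (hp s hs).1 t
    rw [h1]
    have h2 := ((hp s hs).density_continuous hWc).measurable
    have h3 : Measurable fun t : ℝ => ε⁻¹ * (t - s) := by fun_prop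
    exact (h2.comp h3).ennreal_ofReal.const_mul _
  have hFe : Fe k W ε u = ∑ s ∈ S, transitionEnergy k W (p s) := by
    change ∫⁻ t in Ioo (0:ℝ) 1, scaledDensity k W ε u t = _
    simp_rw [hdens]
    rw [lintegral_finsetSum' _ fun s hs => (hFc s hs).aemeasurable]
    refine Finset.sum_congr rfl fun s hs => ?_
    rw [← lintegral_scaledDensity hk hWc hε s (hp s hs).1]
    apply setLIntegral_eq_of_support_subset
    intro t ht
    have h1 : |t - s| ≤ T * ε := by
      by_contra h
      exact ht (hF0 s hs t (not_le.1 h))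
    have h2 := abs_le.1 h1
    have h3 := hA s hs
    exact ⟨by linarith [h2.1], by linarith [h2.2]⟩
  refine ⟨u, ?_, ?_, ?_, ?_⟩
  · rw [contDiff_iff_contDiffAt]
    intro t
    by_cases h : ∃ s ∈ S, |t - s| < 2 * δ
    · obtain ⟨s, hs, hst⟩ := h
      refine ContDiffAt.congr_of_eventuallyEq ?_ (hnear s hs t hst)
      exact ((hp s hs).1.comp ((contDiff_id.sub contDiff_const).div_const ε)).contDiffAt
    · push Not at h
      exact contDiffAt_const.congr_of_eventuallyEq (hconst t h)
  · -- `u` and `v` differ, by at most `M + 1`, only on the layers `|t - s| ≤ T ε`.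
    have hpt : ∀ t ∈ Ioo (0:ℝ) 1, ENNReal.ofReal |u t - v t| ≤
        ∑ s ∈ S, (Icc (s - T * ε) (s + T * ε)).indicator (fun _ => ENNReal.ofReal (M + 1)) t := by
      intro t ht
      by_cases h : ∃ s ∈ S, |t - s| ≤ T * ε
      · obtain ⟨s, hs, hst⟩ := h
        have hm : t ∈ Icc (s - T * ε) (s + T * ε) := by
          have := abs_le.1 hst
          exact ⟨by linarith [this.1], by linarith [this.2]⟩
        refine le_trans ?_ (Finset.single_le_sum (f := fun s =>
          (Icc (s - T * ε) (s + T * ε)).indicator (fun _ => ENNReal.ofReal (M + 1)) t)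
          (fun _ _ => zero_le) hs)
        rw [indicator_of_mem hm]
        apply ENNReal.ofReal_le_ofReal
        have h1 : u t = p s ((t - s) / ε) := glue_near hB hs (by linarith)
        have h2 : |v t| = 1 := by rcases hv.2.1 t ht with h | h <;> rw [h] <;> simp
        have h3 := abs_sub (u t) (v t)
        rw [h1] at h3 ⊢
        linarith [hM s hs ((t - s) / ε)]
      · push Not at h
        rw [hfar t h, hvv t ht]
        simp
    calc ∫⁻ t in Ioo (0:ℝ) 1, ENNReal.ofReal |u t - v t|
        ≤ ∫⁻ t in Ioo (0:ℝ) 1, ∑ s ∈ S,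
            (Icc (s - T * ε) (s + T * ε)).indicator (fun _ => ENNReal.ofReal (M + 1)) t :=
          setLIntegral_mono' measurableSet_Ioo hpt
      _ ≤ ∫⁻ t, ∑ s ∈ S,
            (Icc (s - T * ε) (s + T * ε)).indicator (fun _ => ENNReal.ofReal (M + 1)) t :=
          setLIntegral_le_lintegral _ _
      _ = ∑ s ∈ S, ENNReal.ofReal ((M + 1) * (2 * T * ε)) := by
          rw [lintegral_finsetSum _ fun s _ => measurable_const.indicator measurableSet_Icc]
          refine Finset.sum_congr rfl fun s _ => ?_
          rw [lintegral_indicator measurableSet_Icc, setLIntegral_const, Real.volume_Icc,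
            ← ENNReal.ofReal_mul (by positivity)]
          congr 1; ring
      _ ≤ ENNReal.ofReal η := by
          rw [Finset.sum_const, nsmul_eq_mul, ← ENNReal.ofReal_natCast,
            ← ENNReal.ofReal_mul (by positivity)]
          apply ENNReal.ofReal_le_ofReal
          linarith
  · rw [hFe, mul_comm, ← nsmul_eq_mul, ← Finset.sum_const]
    exact Finset.sum_le_sum fun s hs => (hTp s hs).2.2.1
  · rw [hFe, mul_comm, ← nsmul_eq_mul, ← Finset.sum_const]
    exact Finset.sum_le_sum fun s hs => (hTp s hs).2.2.2.1

/-! ### Diagonal argument -/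

/-- Diagonal selection: properties `P n` holding eventually for each `n` hold eventually along some
`n = N ε → ∞`. -/
theorem exists_diagonal {P : ℕ → ℝ → Prop} (h : ∀ n, ∀ᶠ ε in 𝓝[>] (0:ℝ), P n ε) :
    ∃ N : ℝ → ℕ, Tendsto N (𝓝[>] (0:ℝ)) atTop ∧ ∀ᶠ ε in 𝓝[>] (0:ℝ), P (N ε) ε := by
  classical
  refine ⟨fun ε => Nat.findGreatest (P · ε) ⌊ε⁻¹⌋₊, ?_, ?_⟩
  · rw [tendsto_atTop]
    intro n
    filter_upwards [h n, tendsto_inv_nhdsGT_zero.eventually (eventually_ge_atTop (n:ℝ))] with ε h1 h2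
    exact Nat.le_findGreatest (Nat.le_floor h2) h1
  · filter_upwards [h 0] with ε h0
    exact Nat.findGreatest_spec (P := (P · ε)) (Nat.zero_le _) h0

/-- Upper bound: for every `u ∈ BV((0,1);{-1,1})` with jump set `S` there exists a
recovery family `u_ε ∈ H^k(0,1)` with `u_ε → u` in `L¹(0,1)` and
`limsup_{ε→0} F_ε(u_ε) = m_k · #S(u)`. -/
theorem statement2 (k : ℕ) (hk : 1 ≤ k) (W : ℝ → ℝ) (αW βW : ℝ)
    (hα : 0 < αW) (hβ : 0 < βW) (hWc : Continuous W) (hWnn : ∀ z, 0 ≤ W z)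
    (hWm : W (-1) = 0) (hWp : W 1 = 0)
    (hWlb : ∀ z, αW * min (min ((z + 1) ^ 2) ((z - 1) ^ 2)) βW ≤ W z)
    (v : ℝ → ℝ) (S : Finset ℝ) (hv : PMJump v S) :
    ∃ uf : ℝ → ℝ → ℝ, (∀ ε > (0:ℝ), ContDiff ℝ k (uf ε)) ∧
      Tendsto (fun ε => ∫⁻ t in Set.Ioo (0:ℝ) 1, ENNReal.ofReal |uf ε t - v t|)
        (𝓝[>] (0:ℝ)) (𝓝 0) ∧
      Filter.limsup (fun ε => Fe k W ε (uf ε)) (𝓝[>] (0:ℝ)) = mK k W * (S.card : ℝ≥0∞) := by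
  have hfin := mK_ne_top hk hWc hWnn hWm hWp
  have hη : ∀ n : ℕ, (0:ℝ) < 1 / ((n:ℝ) + 1) := fun n => by positivity
  obtain ⟨N, hN, hP⟩ := exists_diagonal fun n =>
    exists_recovery hk hWc hWnn hWm hWp hv (hη n)
  let G : ℝ → (ℝ → ℝ) → Prop := fun ε u => ContDiff ℝ k u ∧
      ∫⁻ t in Ioo (0:ℝ) 1, ENNReal.ofReal |u t - v t| ≤ ENNReal.ofReal (1 / ((N ε : ℝ) + 1)) ∧
      mK k W * (S.card : ℝ≥0∞) ≤ Fe k W ε u ∧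
      Fe k W ε u ≤ (mK k W + ENNReal.ofReal (1 / ((N ε : ℝ) + 1))) * (S.card : ℝ≥0∞)
  -- The family is given the value `0` at those `ε` where no recovery function is available.
  have hch : ∀ ε, ∃ u : ℝ → ℝ, ContDiff ℝ k u ∧ ((∃ u', G ε u') → G ε u) := by
    intro ε
    by_cases h : ∃ u', G ε u'
    · obtain ⟨u, hu⟩ := h
      exact ⟨u, hu.1, fun _ => hu⟩
    · exact ⟨fun _ => 0, contDiff_const, fun h' => absurd h' h⟩
  choose uf huf hG using hch
  have hev : ∀ᶠ ε in 𝓝[>] (0:ℝ), G ε (uf ε) := by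
    filter_upwards [hP] with ε h using hG ε h
  have hz : Tendsto (fun ε => ENNReal.ofReal (1 / ((N ε : ℝ) + 1))) (𝓝[>] (0:ℝ)) (𝓝 0) := by
    have h := (tendsto_one_div_add_atTop_nhds_zero_nat (𝕜 := ℝ)).comp hN
    simpa using ENNReal.tendsto_ofReal h
  refine ⟨uf, fun ε _ => huf ε, ?_, Tendsto.limsup_eq ?_⟩
  · exact tendsto_of_tendsto_of_tendsto_of_le_of_le' tendsto_const_nhds hz
      (Eventually.of_forall fun _ => zero_le) (hev.mono fun ε h => h.2.1)
  · have hup : Tendsto (fun ε => (mK k W + ENNReal.ofReal (1 / ((N ε : ℝ) + 1))) *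
        (S.card : ℝ≥0∞)) (𝓝[>] (0:ℝ)) (𝓝 (mK k W * (S.card : ℝ≥0∞))) := by
      have h := ENNReal.Tendsto.mul_const (b := (S.card : ℝ≥0∞)) (tendsto_const_nhds.add hz)
        (Or.inr (ENNReal.natCast_ne_top _)) (a := mK k W + 0)
      rwa [add_zero] at h
    exact tendsto_of_tendsto_of_tendsto_of_le_of_le' tendsto_const_nhds hup
      (hev.mono fun ε h => h.2.2.1) (hev.mono fun ε h => h.2.2.2)
end

section
/- Let k ≥ 1 be an integer and let W : ℝ → [0,∞) be continuous with W(-1) = W(1) = 0 and W(z) ≥ α_W · min{(z+1)², (z-1)², β_W} for some α_W, β_W > 0. For ε > 0 and u ∈ H^k(0,1) set F_ε(u) = ∫₀¹ ( (1/ε)·W(u) + ε^{2k-1}·(u^{(k)})² ) dt, and for a family {u_ε} set S = sup_{ε>0} F_ε(u_ε). Fix η ∈ (0, √β_W), an integer N ≥ 1, and assume S < +∞. Let A_ε^η = { t ∈ (0,1) : ||u_ε(t)| - 1| < η }. Then there exists a constant R_k(η, N, S) > 0 such that for every ε > 0 and every interval I satisfying (i) I ⊂ A_ε^η and (ii) the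 set { t ∈ I : |u_ε^{(ℓ)}(t)| < 1/(N·ε^ℓ) for all ℓ ∈ {1,…,k-1} } has Lebesgue measure zero, one has |I| ≤ R_k(η, N, S) · ε. -/
/-!
After the blow-up `v x = u (ε x + a)` the energy of `u` on `(a, b)` becomes
`∫ (W(v) + (v^{(k)})²)` on an interval of length `L = (b - a) / ε`, and it is still at most `S`.
It therefore suffices to find `δ > 0`, independent of `ε` and `v`, such that every unit interval
carries energy at least `δ`: then `⌊L⌋ δ ≤ S`, which bounds `L`.

The existence of `δ` is `derivatives_small_of_energy_small`: if the energy on a unit interval is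
at most `δ`, then all derivatives of order `1, …, k - 1` are smaller than `1 / N` on the whole
interval, which contradicts the hypothesis that the set of such points is null. To see this, pick
`3 · 2 ^ k` points, separated by a fixed gap, at which `W(v)` is small; there `v` is close to `1` or
to `-1`. Among three consecutive points two lie near the same well, so the mean value theorem gives
`2 ^ k` separated points where the derivative of `v` is small (`SmallAt.of_wells`). Using the mean value theorem on
disjoint pairs (`SmallAt.deriv`) halves the number of points and produces in turn, for every
`1 ≤ ℓ < k`, a point with small `v^{(ℓ)}`. Finally `v^{(k-1)}` has small oscillation because
`∫ (v^{(k)})²` is small, and integrating downwards in `ℓ` gives smallness of all `v^{(ℓ)}`,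
`1 ≤ ℓ < k`, everywhere on the interval.
-/

open MeasureTheory Filter Topology Set
open scoped ENNReal NNReal

/-- There are `M` points of `[p, q]`, consecutive ones at distance at least `g`, at which
`|h| ≤ σ`. Only the values `x i` with `i < M` matter. -/
def SmallAt (M : ℕ) (g σ p q : ℝ) (h : ℝ → ℝ) : Prop :=
  ∃ x : ℕ → ℝ, (∀ i < M, x i ∈ Icc p q ∧ |h (x i)| ≤ σ) ∧ ∀ i, i + 1 < M → x i + g ≤ x (i + 1)

lemma exists_deriv_small {h : ℝ → ℝ} (hd : Differentiable ℝ h) {x y g s τ : ℝ} (hg : 0 < g)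
    (hxy : x + g ≤ y) (hx : |h x - s| ≤ τ) (hy : |h y - s| ≤ τ) :
    ∃ z ∈ Ioo x y, |deriv h z| ≤ 2 / g * τ := by
  have hlt : x < y := by linarith
  obtain ⟨z, hz, hz'⟩ := exists_deriv_eq_slope h hlt hd.continuous.continuousOn
    hd.differentiableOn
  refine ⟨z, hz, ?_⟩
  have hτ : 0 ≤ τ := (abs_nonneg _).trans hx
  rw [hz', abs_div, abs_of_pos (sub_pos.2 hlt), div_le_iff₀ (sub_pos.2 hlt)]
  have h1 : |h y - h x| ≤ 2 * τ := by
    rw [abs_le] at *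
    constructor <;> linarith [hx.1, hx.2, hy.1, hy.2]
  have h2 : 2 / g * τ * g ≤ 2 / g * τ * (y - x) := by
    apply mul_le_mul_of_nonneg_left (by linarith) (by positivity)
  have h3 : 2 / g * τ * g = 2 * τ := by field_simp
  linarith

lemma SmallAt.deriv {M : ℕ} {g σ p q : ℝ} {h : ℝ → ℝ} (hd : Differentiable ℝ h) (hg : 0 < g)
    (H : SmallAt (2 * M) g σ p q h) : SmallAt M g (2 / g * σ) p q (deriv h) := by
  obtain ⟨x, hx, hgap⟩ := H
  have key : ∀ i, ∃ z, i < M → z ∈ Ioo (x (2 * i)) (x (2 * i + 1)) ∧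
      |_root_.deriv h z| ≤ 2 / g * σ := by
    intro i
    by_cases hi : i < M
    · obtain ⟨z, hz, hz'⟩ := exists_deriv_small (s := 0) hd hg (hgap (2 * i) (by omega))
        (by simpa using (hx (2 * i) (by omega)).2) (by simpa using (hx (2 * i + 1) (by omega)).2)
      exact ⟨z, fun _ => ⟨hz, hz'⟩⟩
    · exact ⟨0, fun h => absurd h hi⟩
  choose y hy using key
  refine ⟨y, fun i hi => ⟨⟨?_, ?_⟩, (hy i hi).2⟩, fun i hi => ?_⟩
  · exact (hx (2 * i) (by omega)).1.1.trans (hy i hi).1.1.le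
  · exact (hy i hi).1.2.le.trans (hx (2 * i + 1) (by omega)).1.2
  · have h1 := (hy i (by omega)).1.2
    have h2 := (hy (i + 1) hi).1.1
    have h3 := hgap (2 * i + 1) (by omega)
    have h4 : 2 * i + 1 + 1 = 2 * (i + 1) := by ring
    rw [h4] at h3
    linarith

/-- Of three points near the wells `±1`, two are near the same well, so `3 * M` separated points
near the wells yield `M` separated points where the derivative is small. -/
lemma SmallAt.of_wells {M : ℕ} {g τ p q : ℝ} {f : ℝ → ℝ} (hd : Differentiable ℝ f) (hg : 0 < g)
    (H : SmallAt (3 * M) g τ p q (fun t => |f t| - 1)) :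
    SmallAt M g (2 / g * τ) p q (_root_.deriv f) := by
  obtain ⟨x, hx, hgap⟩ := H
  have well : ∀ i < 3 * M, |f (x i) - 1| ≤ τ ∨ |f (x i) - (-1)| ≤ τ := by
    intro i hi
    have h := (hx i hi).2
    rcases abs_cases (f (x i)) with h' | h'
    · left; simpa only [h'.1] using h
    · right
      simp only [h'.1] at h
      rw [abs_sub_comm]
      convert h using 2
      ring
  have key : ∀ i, ∃ z, i < M → z ∈ Ioo (x (3 * i)) (x (3 * i + 2)) ∧
      |_root_.deriv f z| ≤ 2 / g * τ := by
    intro i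
    by_cases hi : i < M
    · have g1 := hgap (3 * i) (by omega)
      have g2 := hgap (3 * i + 1) (by omega)
      have g2' : x (3 * i + 1) + g ≤ x (3 * i + 2) := g2
      have pair : ∀ s a b, a + g ≤ b → x (3 * i) ≤ a → b ≤ x (3 * i + 2) →
          |f a - s| ≤ τ → |f b - s| ≤ τ → ∃ z, i < M → z ∈ Ioo (x (3 * i)) (x (3 * i + 2)) ∧
            |_root_.deriv f z| ≤ 2 / g * τ := by
        intro s a b hab ha hb h1 h2
        obtain ⟨z, hz, hz'⟩ := exists_deriv_small hd hg hab h1 h2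
        exact ⟨z, fun _ => ⟨⟨ha.trans_lt hz.1, hz.2.trans_le hb⟩, hz'⟩⟩
      rcases well (3 * i) (by omega) with h0 | h0 <;>
      rcases well (3 * i + 1) (by omega) with h1 | h1 <;>
      rcases well (3 * i + 2) (by omega) with h2 | h2
      all_goals first
        | exact pair _ _ _ g1 (by linarith) (by linarith) h0 h1
        | exact pair _ _ _ g2' (by linarith) (by linarith) h1 h2
        | exact pair _ _ _ (by linarith) (by linarith) (by linarith) h0 h2
    · exact ⟨0, fun h => absurd h hi⟩
  choose y hy using key
  refine ⟨y, fun i hi => ⟨⟨?_, ?_⟩, (hy i hi).2⟩, fun i hi => ?_⟩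
  · exact (hx (3 * i) (by omega)).1.1.trans (hy i hi).1.1.le
  · exact (hy i hi).1.2.le.trans (hx (3 * i + 2) (by omega)).1.2
  · have h1 := (hy i (by omega)).1.2
    have h2 := (hy (i + 1) hi).1.1
    have h3 := hgap (3 * i + 2) (by omega)
    have h4 : 3 * i + 2 + 1 = 3 * (i + 1) := by ring
    rw [h4] at h3
    linarith

lemma smallAt_iteratedDeriv {k : ℕ} {g τ p q : ℝ} {f : ℝ → ℝ} (hf : ContDiff ℝ k f) (hg : 0 < g)
    (H : SmallAt (3 * 2 ^ k) g τ p q (fun t => |f t| - 1)) (ℓ : ℕ) (hℓ : ℓ < k) :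
    SmallAt (2 ^ (k - 1 - ℓ)) g ((2 / g) ^ (ℓ + 1) * τ) p q (iteratedDeriv (ℓ + 1) f) := by
  have hdiff : ∀ m < k, Differentiable ℝ (iteratedDeriv m f) := fun m hm =>
    hf.differentiable_iteratedDeriv m (by exact_mod_cast hm)
  induction ℓ with
  | zero =>
    have h := SmallAt.of_wells (by simpa using hdiff 0 hℓ) hg H
    obtain ⟨x, hx, hgap⟩ := h
    have hle : 2 ^ (k - 1 - 0) ≤ 2 ^ k := Nat.pow_le_pow_right (by norm_num) (by omega)
    refine ⟨x, fun i hi => ?_, fun i hi => hgap i (by omega)⟩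
    simpa [iteratedDeriv_one] using hx i (by omega)
  | succ n ih =>
    have h := ih (by omega)
    have e : 2 ^ (k - 1 - n) = 2 * 2 ^ (k - 1 - (n + 1)) := by
      rw [← pow_succ']; congr 1; omega
    rw [e] at h
    have h2 := SmallAt.deriv (hdiff _ hℓ) hg h
    rw [iteratedDeriv_succ]
    convert h2 using 1
    ring

lemma exists_le_of_integral_le {P : ℝ → ℝ} (hP : Continuous P) {p q D : ℝ} (hpq : p < q)
    (h : ∫ x in p..q, P x ≤ D) : ∃ x ∈ Ioo p q, P x ≤ D / (q - p) := by
  by_contra! hc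
  have h1 : ∫ x in p..q, D / (q - p) < ∫ x in p..q, P x := by
    apply intervalIntegral.integral_lt_integral_of_continuousOn_of_le_of_exists_lt hpq
      continuousOn_const hP.continuousOn
    · intro x hx
      have hcl : Icc p q ⊆ closure (Ioo p q) := by rw [closure_Ioo hpq.ne]
      exact closure_minimal (fun y hy => (hc y hy).le)
        (isClosed_le continuous_const hP) (hcl (Ioc_subset_Icc_self hx))
    · exact ⟨(p + q) / 2, ⟨by linarith, by linarith⟩,
        hc _ ⟨by linarith, by linarith⟩⟩
  rw [intervalIntegral.integral_const, smul_eq_mul,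
    mul_div_cancel₀ _ (sub_pos.2 hpq).ne'] at h1
  linarith

lemma abs_sub_le_of_integral_sq {h : ℝ → ℝ} (hd : Differentiable ℝ h) (hc : Continuous (deriv h))
    {c τ : ℝ} (hτ : 0 < τ) (hi : ∫ x in c..(c + 1), (deriv h x) ^ 2 ≤ τ ^ 2) {x y : ℝ}
    (hx : x ∈ Icc c (c + 1)) (hy : y ∈ Icc c (c + 1)) : |h y - h x| ≤ 2 * τ := by
  wlog hxy : x ≤ y generalizing x y
  · rw [abs_sub_comm]; exact this hy hx (by linarith)
  rw [← intervalIntegral.integral_deriv_eq_sub (fun t _ => hd t) (hc.intervalIntegrable _ _)]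
  calc |∫ t in x..y, deriv h t| ≤ ∫ t in x..y, |deriv h t| :=
        intervalIntegral.abs_integral_le_integral_abs hxy
    _ ≤ ∫ t in c..(c + 1), |deriv h t| := by
        apply intervalIntegral.integral_mono_interval hx.1 hxy hy.2
        · exact Eventually.of_forall fun t => abs_nonneg _
        · exact hc.abs.intervalIntegrable _ _
    _ ≤ ∫ t in c..(c + 1), (τ + (deriv h t) ^ 2 / τ) := by
        apply intervalIntegral.integral_mono_on (by linarith)
          (hc.abs.intervalIntegrable _ _)
          ((by fun_prop : Continuous fun t => τ + (deriv h t) ^ 2 / τ).intervalIntegrable _ _)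
        intro t _
        -- `|z| ≤ τ + z² / τ` replaces the Cauchy-Schwarz inequality.
        have : τ + (deriv h t) ^ 2 / τ - |deriv h t|
            = ((τ - |deriv h t|) ^ 2 + τ * |deriv h t|) / τ := by
          field_simp
          rw [← sq_abs (deriv h t)]
          ring
        have h2 : 0 ≤ ((τ - |deriv h t|) ^ 2 + τ * |deriv h t|) / τ := by positivity
        linarith
    _ = τ + (∫ t in c..(c + 1), (deriv h t) ^ 2) / τ := by
        rw [intervalIntegral.integral_add (by simp)
          ((by fun_prop : Continuous fun t => (deriv h t) ^ 2 / τ).intervalIntegrable _ _),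
          intervalIntegral.integral_const, intervalIntegral.integral_div]
        simp
    _ ≤ 2 * τ := by
        have : (∫ t in c..(c + 1), (deriv h t) ^ 2) / τ ≤ τ := by
          rw [div_le_iff₀ hτ]; nlinarith
        linarith

/-- Rigidity on a unit interval: there is an energy threshold `δ`, uniform in `f`, below which all
intermediate derivatives are smaller than `ρ` on the whole interval. Here `P` plays the role of
`W ∘ f`. -/
lemma derivatives_small_of_energy_small (k : ℕ) (hk : 1 ≤ k) {α ρ : ℝ} (hα : 0 < α) (hρ : 0 < ρ) :
    ∃ δ : ℝ, 0 < δ ∧ ∀ f P : ℝ → ℝ, ContDiff ℝ k f → Continuous P → (∀ x, 0 ≤ P x) → ∀ c : ℝ,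
      (∀ x ∈ Ioo c (c + 1), α * (|f x| - 1) ^ 2 ≤ P x) →
      ∫ x in c..(c + 1), (P x + (iteratedDeriv k f x) ^ 2) ≤ δ →
      ∀ ℓ, 1 ≤ ℓ → ℓ ≤ k - 1 → ∀ x ∈ Icc c (c + 1), |iteratedDeriv ℓ f x| < ρ := by
  -- `m` subintervals, of which every other one is used: `3 * 2 ^ k` points with gap `1 / m`.
  set m : ℝ := 2 * (3 * 2 ^ k) with hm
  have hm1 : 1 ≤ m := by
    have : (1 : ℝ) ≤ 2 ^ k := one_le_pow₀ (by norm_num)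
    linarith
  have hm0 : 0 < m := by linarith
  set g : ℝ := 1 / m with hg
  have hg0 : 0 < g := by positivity
  have hg1 : 1 ≤ 2 / g := by
    rw [hg]; field_simp; linarith
  set A : ℝ := (2 / g) ^ k with hA
  have hA0 : 0 < A := by positivity
  have hk0 : (0 : ℝ) < k := by exact_mod_cast hk
  set τ : ℝ := ρ / (2 * k * (A + 2)) with hτd
  have hτ : 0 < τ := by positivity
  set C : ℝ := A * τ + 2 * τ with hC
  have hC0 : 0 < C := by positivity
  have hkC : k * C < ρ := by
    have : k * C = ρ / 2 := by
      rw [hC, hτd]; field_simp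
    linarith
  refine ⟨min (α * τ ^ 2 / m) (τ ^ 2), by positivity, ?_⟩
  intro f P hf hP hP0 c hw hE
  have hkc : Continuous (iteratedDeriv k f) := hf.continuous_iteratedDeriv k le_rfl
  have hEc : Continuous fun x => P x + (iteratedDeriv k f x) ^ 2 := by fun_prop
  have hE1 : ∫ x in c..(c + 1), P x ≤ α * τ ^ 2 / m :=
    (intervalIntegral.integral_mono_on (by linarith) (hP.intervalIntegrable _ _)
      (hEc.intervalIntegrable _ _) (fun x _ => by nlinarith [sq_nonneg (iteratedDeriv k f x)])).trans
      (hE.trans (min_le_left _ _))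
  have hE2 : ∫ x in c..(c + 1), (iteratedDeriv k f x) ^ 2 ≤ τ ^ 2 :=
    (intervalIntegral.integral_mono_on (by linarith) 
      ((by fun_prop : Continuous fun x => (iteratedDeriv k f x) ^ 2).intervalIntegrable _ _)
      (hEc.intervalIntegrable _ _) (fun x _ => by linarith [hP0 x])).trans
      (hE.trans (min_le_right _ _))
  have pts : SmallAt (3 * 2 ^ k) g τ c (c + 1) (fun t => |f t| - 1) := by
    have key : ∀ i : ℕ, ∃ x, i < 3 * 2 ^ k →
        x ∈ Ioo (c + 2 * i * g) (c + (2 * i + 1) * g) ∧ x ∈ Ioo c (c + 1) ∧ |(|f x|) - 1| ≤ τ := by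
      intro i
      by_cases hi : i < 3 * 2 ^ k
      · have hi' : (i : ℝ) + 1 ≤ 3 * 2 ^ k := by exact_mod_cast hi
        have hl : 0 ≤ 2 * i * g := by positivity
        have hr : (2 * i + 1) * g ≤ 1 := by
          rw [hg, mul_one_div, div_le_one hm0]; linarith
        have hlr : c + 2 * i * g < c + (2 * i + 1) * g := by linarith
        have hint : ∫ x in (c + 2 * i * g)..(c + (2 * i + 1) * g), P x ≤ α * τ ^ 2 / m := by
          refine le_trans ?_ hE1
          exact intervalIntegral.integral_mono_interval (by linarith) hlr.le (by linarith)
            (Eventually.of_forall hP0) (hP.intervalIntegrable _ _)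
        obtain ⟨x, hx, hPx⟩ := exists_le_of_integral_le hP hlr hint
        have hx' : x ∈ Ioo c (c + 1) := ⟨by linarith [hx.1], by linarith [hx.2]⟩
        refine ⟨x, fun _ => ⟨hx, hx', ?_⟩⟩
        have e : α * τ ^ 2 / m / (c + (2 * i + 1) * g - (c + 2 * i * g)) = α * τ ^ 2 := by
          have : c + (2 * i + 1) * g - (c + 2 * i * g) = 1 / m := by rw [hg]; ring
          rw [this]; field_simp
        rw [e] at hPx
        have h2 := le_of_mul_le_mul_left ((hw x hx').trans hPx) hα
        exact abs_le_of_sq_le_sq h2 hτ.le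
      · exact ⟨0, fun h => absurd h hi⟩
    choose x hx using key
    refine ⟨x, fun i hi => ⟨Ioo_subset_Icc_self (hx i hi).2.1, (hx i hi).2.2⟩, fun i hi => ?_⟩
    have h1 := (hx i (by omega)).1.2
    have h2 := (hx (i + 1) hi).1.1
    push_cast at h2
    linarith
  have pt : ∀ ℓ, 1 ≤ ℓ → ℓ ≤ k - 1 → ∃ z ∈ Icc c (c + 1), |iteratedDeriv ℓ f z| ≤ A * τ := by
    intro ℓ h1 h2
    obtain ⟨x, hx, -⟩ := smallAt_iteratedDeriv hf hg0 pts (ℓ - 1) (by omega)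
    have h0 := hx 0 (by positivity)
    rw [Nat.sub_add_cancel h1] at h0
    refine ⟨x 0, h0.1, h0.2.trans ?_⟩
    exact mul_le_mul_of_nonneg_right (pow_le_pow_right₀ hg1 (by omega)) hτ.le
  have hdiff : ∀ n < k, Differentiable ℝ (iteratedDeriv n f) := fun n hn =>
    hf.differentiable_iteratedDeriv n (by exact_mod_cast hn)
  -- Downward induction on the order `ℓ = k - 1 - j` of the derivative.
  have main : ∀ j ℓ, ℓ + j = k - 1 → 1 ≤ ℓ → ∀ x ∈ Icc c (c + 1),
      |iteratedDeriv ℓ f x| ≤ (j + 1) * C := by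
    intro j
    induction j with
    | zero =>
      intro ℓ hj hl x hx
      obtain ⟨z, hz, hz'⟩ := pt ℓ hl (by omega)
      have hs : iteratedDeriv k f = deriv (iteratedDeriv ℓ f) := by
        rw [← iteratedDeriv_succ]; congr 1; omega
      have h := abs_sub_le_of_integral_sq (hdiff ℓ (by omega)) (hs ▸ hkc) hτ (hs ▸ hE2) hz hx
      have := abs_sub_abs_le_abs_sub (iteratedDeriv ℓ f x) (iteratedDeriv ℓ f z)
      simp only [Nat.cast_zero, zero_add, one_mul]
      linarith
    | succ j ih =>
      intro ℓ hj hl x hx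
      obtain ⟨z, hz, hz'⟩ := pt ℓ hl (by omega)
      have hb := ih (ℓ + 1) (by omega) (by omega)
      rw [iteratedDeriv_succ] at hb
      have h := (convex_Icc c (c + 1)).norm_image_sub_le_of_norm_deriv_le
        (fun t _ => hdiff ℓ (by omega) t) hb hz hx
      have hxz : ‖x - z‖ ≤ 1 := by
        rw [Real.norm_eq_abs, abs_le]
        constructor <;> linarith [hx.1, hx.2, hz.1, hz.2]
      have h3 : (j + 1) * C * ‖x - z‖ ≤ (j + 1) * C := mul_le_of_le_one_right (by positivity) hxz
      rw [Real.norm_eq_abs] at h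
      have := abs_sub_abs_le_abs_sub (iteratedDeriv ℓ f x) (iteratedDeriv ℓ f z)
      push_cast
      have : A * τ ≤ C := by linarith
      linarith
  intro ℓ h1 h2 x hx
  refine (main (k - 1 - ℓ) ℓ (by omega) h1 x hx).trans_lt (lt_of_le_of_lt ?_ hkC)
  apply mul_le_mul_of_nonneg_right _ hC0.le
  have : k - 1 - ℓ + 1 ≤ k := by omega
  exact_mod_cast this

lemma iteratedDeriv_comp_affine {n : ℕ} {f : ℝ → ℝ} (h : ContDiff ℝ n f) (c d x : ℝ) :
    iteratedDeriv n (fun x => f (c * x + d)) x = c ^ n * iteratedDeriv n f (c * x + d) := by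
  have h1 := iteratedDeriv_comp_const_mul (n := n) (f := fun z => f (z + d))
    (h.comp (contDiff_id.add contDiff_const)) c
  rw [h1, iteratedDeriv_comp_add_const]

/-- The energy bound in the blown-up variable `x = (t - a) / ε`, as an interval integral. -/
lemma rescaled_energy_le {k : ℕ} (hk : 1 ≤ k) {W : ℝ → ℝ} (hWc : Continuous W)
    (hWnn : ∀ z, 0 ≤ W z) {u : ℝ → ℝ} (hu : ContDiff ℝ k u) {ε : ℝ} (hε : 0 < ε) {S : ℝ≥0∞}
    (hS : S ≠ ⊤) (hF : Fe k W ε u ≤ S) {a L : ℝ} (hL : 0 ≤ L)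
    (hsub : Ioo a (a + ε * L) ⊆ Ioo 0 1) :
    ∫ x in 0..L, (W (u (ε * x + a)) + (iteratedDeriv k (fun x => u (ε * x + a)) x) ^ 2)
      ≤ S.toReal := by
  set G : ℝ → ℝ := fun t => (1 / ε) * W (u t) + ε ^ (2 * k - 1) * (iteratedDeriv k u t) ^ 2
    with hG
  have hkc : Continuous (iteratedDeriv k u) := hu.continuous_iteratedDeriv k le_rfl
  have huc : Continuous u := hu.continuous
  have hGc : Continuous G := by fun_prop
  have hG0 : ∀ t, 0 ≤ G t := fun t => by
    have := hWnn (u t)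
    positivity
  have e1 : ∫ x in 0..L, (W (u (ε * x + a)) + (iteratedDeriv k (fun x => u (ε * x + a)) x) ^ 2)
      = ∫ t in a..(a + ε * L), G t := by
    have h := intervalIntegral.mul_integral_comp_mul_add (a := 0) (b := L) (f := G) ε a
    rw [mul_zero, zero_add, add_comm (ε * L) a] at h
    rw [← h, ← intervalIntegral.integral_const_mul]
    congr 1
    ext x
    rw [iteratedDeriv_comp_affine hu, hG]
    have : ε ^ (2 * k - 1) * ε = (ε ^ k) ^ 2 := by
      rw [← pow_succ, ← pow_mul]; congr 1; omega
    have h2 : (ε ^ k * iteratedDeriv k u (ε * x + a)) ^ 2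
        = ε ^ (2 * k - 1) * ε * (iteratedDeriv k u (ε * x + a)) ^ 2 := by
      rw [this]; ring
    rw [h2]
    field_simp
  have hle : a ≤ a + ε * L := by nlinarith
  rw [e1, intervalIntegral.integral_of_le hle, integral_Ioc_eq_integral_Ioo,
    integral_eq_lintegral_of_nonneg_ae (Eventually.of_forall hG0) hGc.aestronglyMeasurable]
  apply ENNReal.toReal_mono hS
  exact (lintegral_mono_set hsub).trans hF

/-- Lemma 3.1: if `{u_ε}` has equibounded energy `S`, there is a constant
`R = R_k(η, N, S) > 0` such that any interval `I = (a,b)` contained in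
`A_ε^η = {t ∈ (0,1) : ||u_ε(t)| - 1| < η}` on which the set of points where all the
derivatives `u_ε^{(ℓ)}`, `1 ≤ ℓ ≤ k-1`, are smaller than `1/(N ε^ℓ)` is Lebesgue-null,
satisfies `|I| ≤ R ε`. -/
theorem statement5 (k N : ℕ) (hk : 1 ≤ k) (hN : 1 ≤ N) (W : ℝ → ℝ) (αW βW : ℝ)
    (hα : 0 < αW) (hβ : 0 < βW) (hWc : Continuous W) (hWnn : ∀ z, 0 ≤ W z)
    (hWm : W (-1) = 0) (hWp : W 1 = 0)
    (hWlb : ∀ z, αW * min (min ((z + 1) ^ 2) ((z - 1) ^ 2)) βW ≤ W z)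
    (η : ℝ) (hη : 0 < η) (hη' : η < Real.sqrt βW)
    (uf : ℝ → ℝ → ℝ) (huf : ∀ ε > (0:ℝ), ContDiff ℝ k (uf ε))
    (S : ℝ≥0∞) (hStop : S ≠ ⊤) (hS : ∀ ε > (0:ℝ), Fe k W ε (uf ε) ≤ S) :
    ∃ R : ℝ, 0 < R ∧ ∀ ε > (0:ℝ), ∀ a b : ℝ,
      Set.Ioo a b ⊆ {t ∈ Set.Ioo (0:ℝ) 1 | abs (abs (uf ε t) - 1) < η} →
      volume {t ∈ Set.Ioo a b |
          ∀ ℓ : ℕ, 1 ≤ ℓ → ℓ ≤ k - 1 → |iteratedDeriv ℓ (uf ε) t| < 1 / (N * ε ^ ℓ)} = 0 →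
      b - a ≤ R * ε := by
  have hsqβ : η ^ 2 < βW := by
    have h := Real.sq_sqrt hβ.le
    nlinarith
  have hN0 : (0 : ℝ) < N := by exact_mod_cast hN
  obtain ⟨δ, hδ, H⟩ := derivatives_small_of_energy_small k hk hα (one_div_pos.2 hN0)
  have hR : 0 < S.toReal / δ + 1 := by positivity
  refine ⟨S.toReal / δ + 1, hR, ?_⟩
  intro ε hε a b hsub hnull
  by_contra! hlt
  set L : ℝ := (b - a) / ε with hLd
  have hL : S.toReal / δ + 1 < L := by rwa [hLd, lt_div_iff₀ hε]
  have hεL : ε * L = b - a := by rw [hLd]; field_simp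
  set v : ℝ → ℝ := fun x => uf ε (ε * x + a) with hv
  have hvC : ContDiff ℝ k v := (huf ε hε).comp ((contDiff_const.mul contDiff_id).add contDiff_const)
  have hkc : Continuous (iteratedDeriv k v) := hvC.continuous_iteratedDeriv k le_rfl
  have hvc : Continuous v := hvC.continuous
  have hEc : Continuous fun x => W (v x) + (iteratedDeriv k v x) ^ 2 := by fun_prop
  set n : ℕ := ⌊L⌋₊ with hn
  have hL0 : 0 ≤ L := (hR.trans hL).le
  have hnL : (n : ℝ) ≤ L := Nat.floor_le hL0
  have hnS : S.toReal < n * δ := by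
    have h1 := Nat.lt_floor_add_one L
    rw [← div_lt_iff₀ hδ]
    linarith
  have hmem : ∀ x ∈ Ioo 0 L, ε * x + a ∈ Ioo a b := fun x hx => by
    have h1 := mul_pos hε hx.1
    have h2 := mul_lt_mul_of_pos_left hx.2 hε
    constructor <;> linarith
  have hpot : ∀ x ∈ Ioo 0 L, αW * (|v x| - 1) ^ 2 ≤ W (v x) := by
    intro x hx
    have h1 := (hsub (hmem x hx)).2
    refine le_trans (mul_le_mul_of_nonneg_left ?_ hα.le) (hWlb (v x))
    have hsm : (|v x| - 1) ^ 2 < βW := by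
      rw [← sq_abs]
      refine lt_of_le_of_lt ?_ hsqβ
      exact pow_le_pow_left₀ (abs_nonneg _) h1.le 2
    refine le_min (le_min ?_ ?_) hsm.le
    · nlinarith [neg_abs_le (v x), sq_abs (v x)]
    · nlinarith [le_abs_self (v x), sq_abs (v x)]
  have htot : ∫ x in 0..(n : ℝ), (W (v x) + (iteratedDeriv k v x) ^ 2) ≤ S.toReal := by
    refine rescaled_energy_le hk hWc hWnn (huf ε hε) hε hStop (hS ε hε) (Nat.cast_nonneg n) ?_
    intro t ht
    have h1 : ε * n ≤ ε * L := mul_le_mul_of_nonneg_left hnL hε.le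
    exact (hsub ⟨ht.1, by linarith [ht.2]⟩).1
  have hpiece : ∀ j ∈ Finset.range n,
      δ ≤ ∫ x in (j : ℝ)..((j + 1 : ℕ) : ℝ), (W (v x) + (iteratedDeriv k v x) ^ 2) := by
    intro j hj
    have hjn : ((j + 1 : ℕ) : ℝ) ≤ n := by exact_mod_cast Finset.mem_range.1 hj
    push_cast at hjn ⊢
    have hj0 : (0 : ℝ) ≤ j := Nat.cast_nonneg j
    by_contra! hsmall
    have hder := H v (fun x => W (v x)) hvC (hWc.comp hvc) (fun x => hWnn _) j
      (fun x hx => hpot x ⟨by linarith [hx.1], by linarith [hx.2]⟩) hsmall.le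
    -- The image of `(j, j + 1)` under the blow-down is an open interval inside a null set.
    have hsubset : Ioo (ε * j + a) (ε * (j + 1) + a) ⊆ {t ∈ Set.Ioo a b |
        ∀ ℓ : ℕ, 1 ≤ ℓ → ℓ ≤ k - 1 → |iteratedDeriv ℓ (uf ε) t| < 1 / (N * ε ^ ℓ)} := by
      intro t ht
      obtain ⟨x, rfl⟩ : ∃ x, t = ε * x + a := ⟨(t - a) / ε, by field_simp; ring⟩
      have hx1 : (j : ℝ) < x := lt_of_mul_lt_mul_left (by linarith [ht.1]) hε.le
      have hx2 : x < j + 1 := lt_of_mul_lt_mul_left (by linarith [ht.2]) hε.le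
      refine ⟨hmem x ⟨by linarith, by linarith⟩, fun ℓ h1 h2 => ?_⟩
      have h3 := hder ℓ h1 h2 x ⟨hx1.le, hx2.le⟩
      rw [hv, iteratedDeriv_comp_affine ((huf ε hε).of_le (by exact_mod_cast (by omega : ℓ ≤ k))),
        abs_mul, abs_of_pos (pow_pos hε ℓ)] at h3
      rw [lt_div_iff₀ (by positivity)]
      rw [lt_div_iff₀ hN0] at h3
      linarith
    have h0 := measure_mono_null hsubset hnull
    rw [Real.volume_Ioo, ENNReal.ofReal_eq_zero] at h0
    linarith
  have hsum := intervalIntegral.sum_integral_adjacent_intervals (μ := volume) (n := n)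
    (a := fun j : ℕ => (j : ℝ)) (f := fun x => W (v x) + (iteratedDeriv k v x) ^ 2)
    (fun j _ => hEc.intervalIntegrable _ _)
  have hge := Finset.card_nsmul_le_sum _ _ _ hpiece
  rw [Finset.card_range, nsmul_eq_mul, hsum, Nat.cast_zero] at hge
  linarith
end

section
/- Let k ≥ 1 be an integer and let W : ℝ → [0,∞) be continuous with W(-1) = W(1) = 0 and W(z) ≥ α_W · min{(z+1)², (z-1)², β_W} for some α_W, β_W > 0. For ε > 0 and u ∈ H^k(0,1) set F_ε(u) = ∫₀¹ ( (1/ε)·W(u) + ε^{2k-1}·(u^{(k)})² ) dt. Fix η ∈ (0, √β_W), an integer N ≥ 1, and a family {u_ε} ⊂ H^k(0,1) with sup_{ε>0} F_ε(u_ε) = S < +∞. Define A_ε^η(N) = { t ∈ (0,1) : ||u_ε(t)| - 1| < η and |u_ε^{(ℓ)}(t)| < 1/(N·ε^ℓ) for all ℓ ∈ {1,…,k-1} }. Let ε_r → 0 as r → +∞ and let {I_{ε_r}} be a family of subintervals of (0,1) such that |I_{ε_r}|/ε_r → +∞. Then there exists r₀ ∈ ℕ such that |I_{ε_r} ∩ A_{ε_r}^η(N)|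 > 0 for all r ≥ r₀, where |·| denotes Lebesgue measure. -/
/-!
Rescaled by `ε`, the interval `(a, b)` becomes arbitrarily long while its total energy stays
bounded, so it contains a block `[c, c + 3 ^ k * H]`, with `H = h * ε` and `h` a large constant,
whose energy is below any prescribed `δ`. The potential term forces a point with `||u| - 1| < η` in
each of the `3 ^ k` cells of length `H` of the block, as otherwise a single cell costs at least
`αW * η ^ 2 * h > δ`.

On such a block all intermediate derivatives are `O(h⁻¹ ε^{-ℓ})`: iterating the mean value theorem
on triples of cells gives one point where `u^{(ℓ)} = O(H^{-ℓ})` (`exists_iteratedDeriv_le`), and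
integrating downwards from the `L²` bound on `u^{(k)}` propagates this to the whole block
(`exists_const_iteratedDeriv_le`). It is therefore irrelevant whether `u` is near `1` or near `-1`
in a given cell: `|u| ≤ 1 + η` at one point of each cell suffices, and the smallness of the
derivatives comes from `h` being large. A cell point with `||u| - 1| < η` then lies in `AetaN`,
and the set is open since `u` is `C^k`, hence it has positive measure.
-/

open MeasureTheory Filter Topology Set
open scoped ENNReal NNReal

/-- The set `A_ε^η(N)` of points of `(0,1)` where `u_ε` is `η`-close to `±1` and all the
derivatives up to order `k-1` are small. -/
def AetaN (k N : ℕ) (η ε : ℝ) (u : ℝ → ℝ) : Set ℝ :=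
  {t ∈ Set.Ioo (0:ℝ) 1 | abs (abs (u t) - 1) < η ∧
    ∀ ℓ : ℕ, 1 ≤ ℓ → ℓ ≤ k - 1 → |iteratedDeriv ℓ u t| < 1 / (N * ε ^ ℓ)}

/-- If every one of `3 ^ j` consecutive cells of length `H` contains a point where `|f| ≤ B`, then
`f^{(j)}` is at most `(2 / H) ^ j * B` somewhere. The first and last cells of a triple are at
distance `H`, so the mean value theorem yields a point in each triple where `|f'| ≤ 2 * B / H`,
and the triples are the new cells. -/
lemma exists_iteratedDeriv_le (j : ℕ) : ∀ (f : ℝ → ℝ) (c H B : ℝ), ContDiff ℝ j f → 0 < H →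
    (∀ i : ℕ, i < 3 ^ j → ∃ x ∈ Icc (c + i * H) (c + (i + 1) * H), |f x| ≤ B) →
    ∃ x ∈ Icc c (c + 3 ^ j * H), |iteratedDeriv j f x| ≤ (2 / H) ^ j * B := by
  induction j with
  | zero =>
    intro f c H B _ _ h
    obtain ⟨x, hx, hB⟩ := h 0 (by norm_num)
    exact ⟨x, by simpa using hx, by simpa using hB⟩
  | succ j ih =>
    intro f c H B hf hH h
    have hf1 : ContDiff ℝ j (deriv f) := by
      have := hf
      rw [show ((j + 1 : ℕ) : WithTop ℕ∞) = (j : WithTop ℕ∞) + 1 by push_cast; rfl,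
        contDiff_succ_iff_deriv] at this
      exact this.2.2
    have hd : Differentiable ℝ f := hf.differentiable (by simp)
    have hB : 0 ≤ B := by
      obtain ⟨x, -, hx⟩ := h 0 (by positivity)
      exact (abs_nonneg _).trans hx
    obtain ⟨x, hx, hxB⟩ := ih (deriv f) c (3 * H) (2 * B / H) hf1 (by positivity) (by
      intro i hi
      have h3 : 3 * i + 2 < 3 ^ (j + 1) := by rw [pow_succ]; omega
      obtain ⟨x, hx, hxB⟩ := h (3 * i) (by omega)
      obtain ⟨y, hy, hyB⟩ := h (3 * i + 2) h3
      push_cast at hx hy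
      have hxy : H ≤ y - x := by nlinarith [hx.2, hy.1]
      obtain ⟨z, hz, hzd⟩ := exists_deriv_eq_slope f (show x < y by linarith)
        hd.continuous.continuousOn hd.differentiableOn
      refine ⟨z, ⟨by nlinarith [hx.1, hz.1], by nlinarith [hy.2, hz.2]⟩, ?_⟩
      rw [hzd, abs_div, abs_of_pos (show 0 < y - x by linarith)]
      have : |f y - f x| ≤ 2 * B := (abs_sub _ _).trans (by linarith)
      gcongr)
    refine ⟨x, ?_, ?_⟩
    · convert hx using 2
      ring
    · rw [iteratedDeriv_succ']
      refine hxB.trans ?_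
      have : (2 / (3 * H)) ^ j ≤ (2 / H) ^ j := by
        gcongr
        linarith
      calc (2 / (3 * H)) ^ j * (2 * B / H) ≤ (2 / H) ^ j * (2 * B / H) := by gcongr
        _ = (2 / H) ^ (j + 1) * B := by ring

/-- The constants are built by descending induction on `ℓ = k - 1 - d`: `g = f^{(ℓ)}` is `O(H^{-ℓ})`
at one point, and its oscillation over the block is at most the integral of `|f^{(ℓ + 1)}|`. -/
lemma exists_const_iteratedDeriv_le_aux (k d : ℕ) : ∃ C : ℝ, 0 < C ∧
    ∀ (f : ℝ → ℝ) (c H B : ℝ) (ℓ : ℕ), ℓ + d + 1 = k → ContDiff ℝ k f → 0 < H → 0 < B →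
    (∀ i : ℕ, i < 3 ^ k → ∃ x ∈ Icc (c + i * H) (c + (i + 1) * H), |f x| ≤ B) →
    (∫ t in c..(c + 3 ^ k * H), (iteratedDeriv k f t) ^ 2) * (3 ^ k * H ^ (2 * k - 1)) ≤ B ^ 2 →
    ∀ t ∈ Icc c (c + 3 ^ k * H), |iteratedDeriv ℓ f t| ≤ C * B / H ^ ℓ := by
  have start : ∀ (f : ℝ → ℝ) (c H B : ℝ) (ℓ : ℕ), ℓ < k → ContDiff ℝ k f → 0 < H → 0 < B →
      (∀ i : ℕ, i < 3 ^ k → ∃ x ∈ Icc (c + i * H) (c + (i + 1) * H), |f x| ≤ B) →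
      ∃ x ∈ Icc c (c + 3 ^ k * H), |iteratedDeriv ℓ f x| ≤ 2 ^ k * B / H ^ ℓ := by
    intro f c H B ℓ hℓ hf hH hB h
    obtain ⟨x, hx, hxB⟩ := exists_iteratedDeriv_le ℓ f c H B
      (hf.of_le (by exact_mod_cast hℓ.le)) hH
      (fun i hi => h i (hi.trans_le (Nat.pow_le_pow_right (by norm_num) hℓ.le)))
    refine ⟨x, ⟨hx.1, hx.2.trans ?_⟩, hxB.trans ?_⟩
    · gcongr
      norm_num
    · rw [div_pow, div_mul_eq_mul_div]
      gcongr
      norm_num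
  have step : ∀ (f : ℝ → ℝ) (ℓ : ℕ), ℓ < k → ContDiff ℝ k f → ∀ x y,
      ∫ t in x..y, iteratedDeriv (ℓ + 1) f t = iteratedDeriv ℓ f y - iteratedDeriv ℓ f x := by
    intro f ℓ hℓ hf x y
    have hd : Differentiable ℝ (iteratedDeriv ℓ f) :=
      hf.differentiable_iteratedDeriv ℓ (by exact_mod_cast hℓ)
    apply intervalIntegral.integral_eq_sub_of_hasDerivAt
    · intro t _
      rw [iteratedDeriv_succ]
      exact (hd t).hasDerivAt
    · exact (hf.continuous_iteratedDeriv (ℓ + 1) (by exact_mod_cast hℓ)).intervalIntegrable _ _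
  induction d with
  | zero =>
    refine ⟨2 ^ k + 1, by positivity, ?_⟩
    intro f c H B ℓ hℓ hf hH hB h hint t ht
    obtain ⟨x, hx, hxB⟩ := start f c H B ℓ (by omega) hf hH hB h
    have hst := step f ℓ (by omega) hf x t
    obtain rfl : k = ℓ + 1 := by omega
    have hcont : Continuous (iteratedDeriv (ℓ + 1) f) :=
      hf.continuous_iteratedDeriv (ℓ + 1) le_rfl
    set g := iteratedDeriv (ℓ + 1) f with hg
    set T : ℝ := 3 ^ (ℓ + 1) * H with hT
    have hTpos : 0 < T := by positivity
    -- The value of `μ` optimal for Young's inequality `|g| ≤ μ / 2 + g ^ 2 / (2 * μ)`.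
    set μ : ℝ := B / (T * H ^ ℓ) with hμ
    have hμpos : 0 < μ := by positivity
    have hyoung : ∫ s in c..(c + T), |g s| ≤ ∫ s in c..(c + T), (μ / 2 + (g s) ^ 2 * (1 / (2 * μ))) := by
      apply intervalIntegral.integral_mono_on (by linarith)
      · exact hcont.abs.intervalIntegrable _ _
      · exact Continuous.intervalIntegrable (by fun_prop) _ _
      · intro s _
        rw [← sq_abs (g s)]
        have : μ / 2 + |g s| ^ 2 * (1 / (2 * μ)) - |g s| = (|g s| - μ) ^ 2 / (2 * μ) := by
          field_simp
          ring
        have : 0 ≤ (|g s| - μ) ^ 2 / (2 * μ) := by positivity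
        linarith
    rw [intervalIntegral.integral_add (by simp)
      (Continuous.intervalIntegrable (by fun_prop) _ _), intervalIntegral.integral_const,
      intervalIntegral.integral_mul_const, smul_eq_mul] at hyoung
    have hQ : ∫ s in c..(c + T), (g s) ^ 2 ≤ B ^ 2 / (T * H ^ (2 * ℓ)) := by
      rw [le_div_iff₀ (by positivity)]
      refine le_of_eq_of_le ?_ hint
      rw [hT, show 2 * (ℓ + 1) - 1 = 2 * ℓ + 1 by omega]
      ring
    have hL1 : ∫ s in c..(c + T), |g s| ≤ B / H ^ ℓ := by
      refine hyoung.trans ?_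
      calc (c + T - c) * (μ / 2) + (∫ s in c..(c + T), (g s) ^ 2) * (1 / (2 * μ))
          ≤ (c + T - c) * (μ / 2) + B ^ 2 / (T * H ^ (2 * ℓ)) * (1 / (2 * μ)) := by gcongr
        _ = B / H ^ ℓ := by
          rw [hμ]
          field_simp
          ring
    have hosc : |∫ s in x..t, g s| ≤ ∫ s in c..(c + T), |g s| := by
      rw [← Real.norm_eq_abs]
      refine intervalIntegral.norm_integral_le_integral_norm_uIoc.trans ?_
      rw [intervalIntegral.integral_of_le (by linarith)]
      apply setIntegral_mono_set
      · exact (hcont.abs.intervalIntegrable c (c + T)).1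
      · exact Eventually.of_forall fun s => abs_nonneg _
      · apply LE.le.eventuallyLE
        intro s hs
        rw [mem_uIoc] at hs
        rcases hs with hs | hs
        · exact ⟨hx.1.trans_lt hs.1, hs.2.trans ht.2⟩
        · exact ⟨ht.1.trans_lt hs.1, hs.2.trans hx.2⟩
    have h1 : iteratedDeriv ℓ f t = iteratedDeriv ℓ f x + ∫ s in x..t, g s := by
      rw [hst]; ring
    rw [h1]
    calc _ ≤ |iteratedDeriv ℓ f x| + |∫ s in x..t, g s| := abs_add_le _ _
      _ ≤ 2 ^ (ℓ + 1) * B / H ^ ℓ + B / H ^ ℓ := by linarith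
      _ = _ := by ring
  | succ d ih =>
    obtain ⟨C, hC, ih⟩ := ih
    refine ⟨2 ^ k + 3 ^ k * C, by positivity, ?_⟩
    intro f c H B ℓ hℓ hf hH hB h hint t ht
    obtain ⟨x, hx, hxB⟩ := start f c H B ℓ (by omega) hf hH hB h
    have hst := step f ℓ (by omega) hf x t
    have hd := ih f c H B (ℓ + 1) (by omega) hf hH hB h hint
    have hosc : ‖∫ s in x..t, iteratedDeriv (ℓ + 1) f s‖ ≤ C * B / H ^ (ℓ + 1) * |t - x| := by
      apply intervalIntegral.norm_integral_le_of_norm_le_const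
      intro s hs
      refine hd s ?_
      rw [mem_uIoc] at hs
      rcases hs with hs | hs
      · exact ⟨(hx.1.trans_lt hs.1).le, hs.2.trans ht.2⟩
      · exact ⟨(ht.1.trans_lt hs.1).le, hs.2.trans hx.2⟩
    have htx : |t - x| ≤ 3 ^ k * H :=
      abs_le.2 ⟨by linarith [ht.1, hx.2], by linarith [ht.2, hx.1]⟩
    have h1 : iteratedDeriv ℓ f t = iteratedDeriv ℓ f x
        + ∫ s in x..t, iteratedDeriv (ℓ + 1) f s := by
      rw [hst]; ring
    rw [h1]
    calc _ ≤ |iteratedDeriv ℓ f x| + |∫ s in x..t, iteratedDeriv (ℓ + 1) f s| := abs_add_le _ _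
      _ ≤ 2 ^ k * B / H ^ ℓ + C * B / H ^ (ℓ + 1) * (3 ^ k * H) := by
        refine add_le_add hxB (hosc.trans ?_)
        gcongr
      _ = _ := by
        field_simp
        ring

/-- Scale-invariant interpolation estimate on a block of `3 ^ k` cells of length `H`, with a
constant depending only on `k`. -/
lemma exists_const_iteratedDeriv_le (k : ℕ) : ∃ C : ℝ, 0 < C ∧
    ∀ (f : ℝ → ℝ) (c H B : ℝ) (ℓ : ℕ), ℓ < k → ContDiff ℝ k f → 0 < H → 0 < B →
    (∀ i : ℕ, i < 3 ^ k → ∃ x ∈ Icc (c + i * H) (c + (i + 1) * H), |f x| ≤ B) →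
    (∫ t in c..(c + 3 ^ k * H), (iteratedDeriv k f t) ^ 2) * (3 ^ k * H ^ (2 * k - 1)) ≤ B ^ 2 →
    ∀ t ∈ Icc c (c + 3 ^ k * H), |iteratedDeriv ℓ f t| ≤ C * B / H ^ ℓ := by
  choose C hC h using exists_const_iteratedDeriv_le_aux k
  refine ⟨∑ d ∈ Finset.range (k + 1), C d, Finset.sum_pos (fun d _ => hC d) (by simp), ?_⟩
  intro f c H B ℓ hℓ hf hH hB h1 h2 t ht
  refine (h (k - 1 - ℓ) f c H B ℓ (by omega) hf hH hB h1 h2 t ht).trans ?_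
  have : C (k - 1 - ℓ) ≤ ∑ d ∈ Finset.range (k + 1), C d :=
    Finset.single_le_sum (f := C) (fun d _ => (hC d).le) (by simp; omega)
  gcongr

/-- Pigeonhole over `n` consecutive intervals of length `T`. -/
lemma exists_block_integral_le (g : ℝ → ℝ) (hg : Continuous g) (a T δ E : ℝ) (n : ℕ)
    (hE : ∫ t in a..(a + n * T), g t ≤ E) (hn : E < n * δ) :
    ∃ i < n, ∫ t in (a + i * T)..(a + i * T + T), g t ≤ δ := by
  by_contra! hcon
  have hsum := intervalIntegral.sum_integral_adjacent_intervals (f := g) (μ := volume)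
    (a := fun i : ℕ => a + i * T) (n := n) (fun i _ => hg.intervalIntegrable _ _)
  have : ∑ _i ∈ Finset.range n, δ ≤
      ∑ i ∈ Finset.range n, ∫ t in (a + i * T)..(a + ((i + 1 : ℕ) : ℝ) * T), g t := by
    apply Finset.sum_le_sum
    intro i hi
    have := (hcon i (Finset.mem_range.1 hi)).le
    rwa [show a + ((i + 1 : ℕ) : ℝ) * T = a + i * T + T by push_cast; ring]
  rw [hsum] at this
  simp at this
  linarith

/-- Lemma 3.2: if `{u_ε}` has equibounded energy and `{I_{ε_r}}` is a family of
subintervals of `(0,1)` with `|I_{ε_r}|/ε_r → +∞`, then for `r` large enough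
`|I_{ε_r} ∩ A_{ε_r}^η(N)| > 0`. -/
theorem statement6 (k N : ℕ) (hk : 1 ≤ k) (hN : 1 ≤ N) (W : ℝ → ℝ) (αW βW : ℝ)
    (hα : 0 < αW) (hβ : 0 < βW) (hWc : Continuous W) (hWnn : ∀ z, 0 ≤ W z)
    (hWm : W (-1) = 0) (hWp : W 1 = 0)
    (hWlb : ∀ z, αW * min (min ((z + 1) ^ 2) ((z - 1) ^ 2)) βW ≤ W z)
    (η : ℝ) (hη : 0 < η) (hη' : η < Real.sqrt βW)
    (uf : ℝ → ℝ → ℝ) (huf : ∀ ε > (0:ℝ), ContDiff ℝ k (uf ε))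
    (S : ℝ≥0∞) (hStop : S ≠ ⊤) (hS : ∀ ε > (0:ℝ), Fe k W ε (uf ε) ≤ S)
    (εr : ℕ → ℝ) (hεpos : ∀ r, 0 < εr r) (hεlim : Tendsto εr atTop (𝓝 0))
    (a b : ℕ → ℝ) (hab : ∀ r, Set.Ioo (a r) (b r) ⊆ Set.Ioo (0:ℝ) 1)
    (hlen : Tendsto (fun r => (b r - a r) / εr r) atTop atTop) :
    ∃ r₀ : ℕ, ∀ r ≥ r₀,
      0 < volume (Set.Ioo (a r) (b r) ∩ AetaN k N η (εr r) (uf (εr r))) := by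
  obtain ⟨C, hC, hCb⟩ := exists_const_iteratedDeriv_le k
  have hN0 : (0 : ℝ) < N := by exact_mod_cast hN
  set B : ℝ := 1 + η with hBdef
  have hB : 0 < B := by positivity
  -- `h` exceeds `C * B * N`, so that `C * B / h < 1 / N`.
  set h : ℝ := C * B * N + 1 with hhdef
  have hh1 : 1 ≤ h := by
    have : 0 < C * B * N := by positivity
    linarith
  have hh : 0 < h := by linarith
  set M : ℝ := 3 ^ k with hM
  have hMpos : 0 < M := by positivity
  set δ : ℝ := min (αW * η ^ 2 * h / 2) (B ^ 2 / (M * h ^ (2 * k - 1))) with hδdef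
  have hδ : 0 < δ := lt_min (by positivity) (by positivity)
  obtain ⟨n, hn⟩ := exists_nat_gt (S.toReal / δ)
  rw [div_lt_iff₀ hδ] at hn
  have hηβ : η ^ 2 ≤ βW := by
    rw [← Real.sq_sqrt hβ.le]
    gcongr
  have hWη : ∀ z, ¬ |(|z| - 1)| < η → αW * η ^ 2 ≤ W z := by
    intro z hz
    refine le_trans ?_ (hWlb z)
    gcongr
    have h1 : η ^ 2 ≤ (|z| - 1) ^ 2 := by
      rw [← sq_abs (|z| - 1)]
      gcongr
      linarith
    refine le_min (le_min ?_ ?_) hηβ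
    · nlinarith [neg_abs_le z, sq_abs z]
    · nlinarith [le_abs_self z, sq_abs z]
  obtain ⟨r₀, hr₀⟩ := eventually_atTop.1 (hlen.eventually_ge_atTop (max 1 (n * (M * h))))
  refine ⟨r₀, fun r hr => ?_⟩
  have hlenr := hr₀ r hr
  have hε := hεpos r
  set ε := εr r
  set u := uf ε
  have hu : ContDiff ℝ k u := huf ε hε
  have habr := hab r
  set a' := a r
  set b' := b r
  have hab1 : a' < b' := by
    have h1 := (le_max_left _ _).trans hlenr
    rw [le_div_iff₀ hε] at h1
    linarith
  set H : ℝ := h * ε with hHdef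
  have hH : 0 < H := by positivity
  have hnT : n * (M * H) ≤ b' - a' := by
    have h1 := (le_max_right _ _).trans hlenr
    rw [le_div_iff₀ hε] at h1
    rw [hHdef]
    linarith
  obtain ⟨ha0, hb1⟩ := (Ioo_subset_Ioo_iff hab1).1 habr
  set g : ℝ → ℝ := fun t => (1 / ε) * W (u t) + ε ^ (2 * k - 1) * (iteratedDeriv k u t) ^ 2
    with hgdef
  have huk : Continuous (iteratedDeriv k u) := hu.continuous_iteratedDeriv k le_rfl
  have hucont : Continuous u := hu.continuous
  have hgc : Continuous g := by fun_prop
  have hg0 : ∀ t, 0 ≤ g t := fun t => by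
    have := hWnn (u t)
    positivity
  have hgS : ∫ t in (0:ℝ)..1, g t ≤ S.toReal := by
    have h1 : ENNReal.ofReal (∫ t in Ioo (0:ℝ) 1, g t) ≤ S := by
      rw [ofReal_integral_eq_lintegral_ofReal]
      · exact hS ε hε
      · exact (hgc.integrableOn_Icc (a := 0) (b := 1)).mono_set Ioo_subset_Icc_self
      · exact Eventually.of_forall hg0
    rw [intervalIntegral.integral_of_le zero_le_one, integral_Ioc_eq_integral_Ioo]
    exact (ENNReal.ofReal_le_iff_le_toReal hStop).1 h1
  have hmono : ∀ x y z w : ℝ, x ≤ y → y ≤ z → z ≤ w →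
      ∫ t in y..z, g t ≤ ∫ t in x..w, g t := fun x y z w h1 h2 h3 =>
    intervalIntegral.integral_mono_interval h1 h2 h3 (Eventually.of_forall hg0)
      (hgc.intervalIntegrable _ _)
  obtain ⟨i, hi, hiδ⟩ := exists_block_integral_le g hgc a' (M * H) δ S.toReal n
    ((hmono 0 a' _ 1 ha0 (by simp; positivity) (by linarith)).trans hgS) hn
  set c : ℝ := a' + i * (M * H) with hc
  have hac : a' ≤ c := by
    have : 0 ≤ i * (M * H) := by positivity
    linarith
  have hcb : c + M * H ≤ b' := by
    have h1 : ((i : ℝ) + 1) * (M * H) ≤ n * (M * H) := by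
      gcongr
      exact_mod_cast hi
    linarith
  have hcell : ∀ j : ℕ, j < 3 ^ k → ∃ x ∈ Ioo (c + j * H) (c + (j + 1) * H), |(|u x| - 1)| < η := by
    intro j hj
    by_contra! hcon
    have hjM : ((j : ℝ) + 1) * H ≤ M * H := by
      gcongr
      rw [hM]
      exact_mod_cast hj
    have hlt : c + j * H ≤ c + (j + 1) * H := by linarith
    have h1 : ∫ _t in (c + j * H)..(c + (j + 1) * H), 1 / ε * (αW * η ^ 2) ≤
        ∫ t in (c + j * H)..(c + (j + 1) * H), g t := by
      apply intervalIntegral.integral_mono_on_of_le_Ioo hlt (by simp)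
        (hgc.intervalIntegrable _ _)
      intro x hx
      have h2 := hWη (u x) (not_lt.2 (hcon x hx))
      have h3 : 1 / ε * (αW * η ^ 2) ≤ 1 / ε * W (u x) := by gcongr
      have h4 : 0 ≤ ε ^ (2 * k - 1) * (iteratedDeriv k u x) ^ 2 := by positivity
      simp only [hgdef]
      linarith
    have h2 := hmono c (c + j * H) (c + (j + 1) * H) (c + M * H)
      (by have : 0 ≤ j * H := by positivity
          linarith) hlt (by linarith)
    rw [intervalIntegral.integral_const, smul_eq_mul] at h1
    have h3 : (c + (j + 1) * H - (c + j * H)) * (1 / ε * (αW * η ^ 2)) = αW * η ^ 2 * h := by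
      rw [hHdef]
      field_simp
      ring
    have h4 : δ ≤ αW * η ^ 2 * h / 2 := min_le_left _ _
    have h5 : 0 < αW * η ^ 2 * h := by positivity
    linarith
  have hL2 : (∫ t in c..(c + M * H), (iteratedDeriv k u t) ^ 2) * (M * H ^ (2 * k - 1))
      ≤ B ^ 2 := by
    have h1 : ∫ t in c..(c + M * H), ε ^ (2 * k - 1) * (iteratedDeriv k u t) ^ 2 ≤ δ := by
      refine le_trans ?_ hiδ
      apply intervalIntegral.integral_mono_on (by linarith [mul_pos hMpos hH])
        (Continuous.intervalIntegrable (by fun_prop) _ _) (hgc.intervalIntegrable _ _)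
      intro t _
      have h2 : 0 ≤ 1 / ε * W (u t) := mul_nonneg (by positivity) (hWnn _)
      simp only [hgdef]
      linarith
    rw [intervalIntegral.integral_const_mul] at h1
    have h2 : δ ≤ B ^ 2 / (M * h ^ (2 * k - 1)) := min_le_right _ _
    have h3 := h1.trans h2
    rw [le_div_iff₀ (by positivity)] at h3
    refine le_of_eq_of_le ?_ h3
    rw [hHdef, mul_pow]
    ring
  have hgood : ∀ j : ℕ, j < 3 ^ k → ∃ x ∈ Icc (c + j * H) (c + (j + 1) * H), |u x| ≤ B := by
    intro j hj
    obtain ⟨x, hx, hxη⟩ := hcell j hj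
    exact ⟨x, Ioo_subset_Icc_self hx, by linarith [(abs_lt.1 hxη).2]⟩
  obtain ⟨t, ht, htη⟩ := hcell 0 (by positivity)
  simp only [Nat.cast_zero, zero_mul, add_zero, zero_add, one_mul] at ht
  have hHM : H ≤ M * H := by
    have : (1 : ℝ) ≤ M := one_le_pow₀ (by norm_num)
    nlinarith
  have htab : t ∈ Ioo a' b' := ⟨by linarith [ht.1], by linarith [ht.2]⟩
  have hder : ∀ ℓ ∈ Finset.Icc 1 (k - 1), |iteratedDeriv ℓ u t| < 1 / (N * ε ^ ℓ) := by
    intro ℓ hℓ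
    rw [Finset.mem_Icc] at hℓ
    refine (hCb u c H B ℓ (by omega) hu hH hB hgood hL2 t
      ⟨ht.1.le, by linarith [ht.2]⟩).trans_lt ?_
    rw [hHdef, mul_pow, div_lt_div_iff₀ (by positivity) (by positivity)]
    have h1 : h ≤ h ^ ℓ := le_self_pow₀ hh1 (by omega)
    have h2 : C * B * N < h ^ ℓ := by linarith
    calc C * B * (N * ε ^ ℓ) = C * B * N * ε ^ ℓ := by ring
      _ < h ^ ℓ * ε ^ ℓ := by gcongr
      _ = 1 * (h ^ ℓ * ε ^ ℓ) := by ring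
  have hev : ∀ᶠ s in 𝓝 t, ∀ ℓ ∈ Finset.Icc 1 (k - 1),
      |iteratedDeriv ℓ u s| < 1 / (N * ε ^ ℓ) := by
    rw [Filter.eventually_all_finset]
    intro ℓ hℓ
    have hℓ' := Finset.mem_Icc.1 hℓ
    have hcts : Continuous (iteratedDeriv ℓ u) :=
      hu.continuous_iteratedDeriv ℓ (by exact_mod_cast (show ℓ ≤ k by omega))
    exact hcts.abs.continuousAt.eventually_lt_const (hder ℓ hℓ)
  have hevu : ∀ᶠ s in 𝓝 t, |(|u s| - 1)| < η :=
    (show Continuous fun s => |(|u s| - 1)| by fun_prop).continuousAt.eventually_lt_const htη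
  apply Measure.measure_pos_of_mem_nhds volume (x := t)
  filter_upwards [hev, hevu, isOpen_Ioo.mem_nhds htab] with s h1 h2 h3
  exact ⟨h3, habr h3, h2, fun ℓ hℓ1 hℓ2 => h1 ℓ (Finset.mem_Icc.2 ⟨hℓ1, hℓ2⟩)⟩
end

section
/- Let k ≥ 1 be an integer and let W : ℝ → [0,∞) be continuous with W(-1) = W(1) = 0 and W(z) ≥ α_W · min{(z+1)², (z-1)², β_W} for some α_W, β_W > 0. Define m_k = inf { ∫_{-∞}^{+∞} ( W(u) + (u^{(k)})² ) dt : u ∈ H^k_loc(ℝ), lim_{t→-∞} u(t) = -1, lim_{t→+∞} u(t) = +1 } and m̃_k = inf over T > 0 of inf { ∫_{-∞}^{+∞} ( W(u) + (u^{(k)})² ) dt : u ∈ H^k_loc(ℝ), u(t) = -1 for t ≤ -T, u(t) = 1 for t ≥ T }. Then m_k = m̃_k. -/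
/-! A profile `u` with finite energy has `u^{(k)} ∈ L²`. Together with `u → 1` this forces every
intermediate derivative `u^{(j)}`, `1 ≤ j < k`, to tend to `0` at `+∞`
(`tendsto_iteratedDeriv_zero`): every long enough interval contains a point where `u^{(j)}` is
small (mean value theorem applied repeatedly), and the oscillation of `u^{(j)}` on unit intervals
vanishes because the next derivative is either in `L²` (`j = k - 1`) or tends to `0`
(descending induction on `j`).

Hence `u` may be glued to the constant `1` on a far away unit interval `[T, T + 1]` with a fixed
cutoff: by Leibniz' rule the `k`-th derivative of the glued function is controlled there by
the small numbers `u - 1`, `u^{(j)}` and by `u^{(k)}`, whose `L²` norm on `[T, T + 1]` is small,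
and the potential term is small since `W` is continuous and `W 1 = 0`. So the gluing costs
arbitrarily little energy (`exists_glue`). The end `-∞` is reduced to the end `+∞` by the symmetry
`u(t) ↦ -u(-t)`, `W(z) ↦ W(-z)` (`transitionEnergy_reflect`). -/

open MeasureTheory Filter Topology Set
open scoped ENNReal NNReal

/-- The constant `m̃_k`: the infimum of the same energy among profiles which are
identically `-1` on `(-∞, -T]` and identically `1` on `[T, +∞)` for some `T > 0`. -/
noncomputable def mKtilde (k : ℕ) (W : ℝ → ℝ) : ℝ≥0∞ :=
  ⨅ u ∈ {u : ℝ → ℝ | ContDiff ℝ k u ∧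
      ∃ T > (0:ℝ), (∀ t ≤ -T, u t = -1) ∧ (∀ t, T ≤ t → u t = 1)},
    transitionEnergy k W u

/-! ### Decay of intermediate derivatives -/

/-- The point `ξ` exists by induction on `j`: apply the mean value theorem between such points for
the derivative of order `j - 1` in the first and in the last third of the interval. -/
lemma exists_small_iteratedDeriv (j : ℕ) (g : ℝ → ℝ) (hg : ContDiff ℝ j g)
    (h0 : Tendsto g atTop (𝓝 0)) :
    ∀ L > (0:ℝ), ∀ ε > (0:ℝ), ∀ᶠ t in atTop, ∃ ξ ∈ Icc t (t + L), |iteratedDeriv j g ξ| ≤ ε := by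
  induction j with
  | zero =>
    intro L hL ε hε
    filter_upwards [(Metric.tendsto_nhds.1 h0) ε hε] with t ht
    refine ⟨t, ⟨le_rfl, by linarith⟩, ?_⟩
    rw [Real.dist_eq, sub_zero] at ht
    simpa using ht.le
  | succ j ih =>
    intro L hL ε hε
    have hd : Differentiable ℝ (iteratedDeriv j g) :=
      ContDiff.differentiable_iteratedDeriv' j (by exact_mod_cast hg)
    have hj := ih (hg.of_le (by exact_mod_cast Nat.le_succ j)) (L / 3) (by positivity)
      (ε * L / 6) (by positivity)
    have hj2 := (tendsto_atTop_add_const_right atTop (2 * L / 3) tendsto_id).eventually hj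
    filter_upwards [hj, hj2] with t ⟨a, ha, ha'⟩ ⟨b, hb, hb'⟩
    simp only [id, mem_Icc] at ha hb
    have hab : a < b := by linarith
    obtain ⟨c, hc, hc'⟩ := exists_deriv_eq_slope (iteratedDeriv j g) hab hd.continuous.continuousOn
      hd.differentiableOn
    refine ⟨c, ⟨by linarith [hc.1], by linarith [hc.2]⟩, ?_⟩
    rw [iteratedDeriv_succ, hc', abs_div, abs_of_pos (sub_pos.2 hab), div_le_iff₀ (sub_pos.2 hab)]
    calc |iteratedDeriv j g b - iteratedDeriv j g a| ≤ ε * L / 6 + ε * L / 6 :=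
          (abs_sub _ _).trans (add_le_add hb' ha')
      _ = ε * (L / 3) := by ring
      _ ≤ ε * (b - a) := by gcongr; linarith

/-- A function of vanishing oscillation on unit intervals which is small somewhere on every
far away unit interval tends to `0`. -/
lemma tendsto_zero_of_osc (F : ℝ → ℝ)
    (hosc : ∀ ε > (0:ℝ), ∀ᶠ t in atTop, ∀ s ∈ Icc t (t + 1), |F s - F t| ≤ ε)
    (hs : ∀ ε > (0:ℝ), ∀ᶠ t in atTop, ∃ ξ ∈ Icc t (t + 1), |F ξ| ≤ ε) :
    Tendsto F atTop (𝓝 0) := by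
  rw [Metric.tendsto_nhds]
  intro ε hε
  filter_upwards [hosc (ε / 3) (by positivity), hs (ε / 3) (by positivity)] with t h1 ⟨ξ, h2, h3⟩
  have h4 := h1 ξ h2
  rw [Real.dist_eq, sub_zero]
  rw [abs_le] at h3 h4
  rw [abs_lt]
  constructor <;> linarith [h3.1, h3.2, h4.1, h4.2]

lemma tendsto_integral_unit (q : ℝ → ℝ) (hq : Integrable q) :
    Tendsto (fun t => ∫ s in t..(t + 1), q s) atTop (𝓝 0) := by
  have h1 := intervalIntegral_tendsto_integral_Ioi (μ := volume) 0 hq.integrableOn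
    (tendsto_id (x := (atTop : Filter ℝ)))
  have h2 := intervalIntegral_tendsto_integral_Ioi (μ := volume) 0 hq.integrableOn
    (tendsto_atTop_add_const_right atTop (1 : ℝ) (tendsto_id (x := (atTop : Filter ℝ))))
  have h3 := h2.sub h1
  rw [sub_self] at h3
  refine h3.congr fun t => ?_
  exact intervalIntegral.integral_interval_sub_left hq.intervalIntegrable hq.intervalIntegrable

lemma tendsto_iteratedDeriv_zero (k : ℕ) (g : ℝ → ℝ) (hg : ContDiff ℝ k g)
    (h0 : Tendsto g atTop (𝓝 0)) (hint : Integrable (fun t => (iteratedDeriv k g t) ^ 2)) :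
    ∀ j < k, Tendsto (iteratedDeriv j g) atTop (𝓝 0) := by
  have key : ∀ j < k, (∀ ε > (0:ℝ), ∀ᶠ t in atTop, ∀ s ∈ Icc t (t + 1),
      |iteratedDeriv j g s - iteratedDeriv j g t| ≤ ε) →
      Tendsto (iteratedDeriv j g) atTop (𝓝 0) := fun j hj h =>
    tendsto_zero_of_osc _ h (exists_small_iteratedDeriv j g
      (hg.of_le (by exact_mod_cast hj.le)) h0 1 one_pos)
  have hdiff : ∀ j < k, Differentiable ℝ (iteratedDeriv j g) := fun j hj =>
    hg.differentiable_iteratedDeriv j (by exact_mod_cast hj)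
  have main : ∀ n < k, Tendsto (iteratedDeriv (k - 1 - n) g) atTop (𝓝 0) := by
    intro n
    induction n with
    | zero =>
      intro hk
      refine key _ (by omega) fun ε hε => ?_
      have hc := hg.continuous_iteratedDeriv k le_rfl
      filter_upwards [(Metric.tendsto_nhds.1 (tendsto_integral_unit _ hint)) (ε * ε / 4)
        (by positivity)] with t ht s hs
      rw [Real.dist_eq, sub_zero, abs_lt] at ht
      -- Young's inequality `|x| ≤ ε / 2 + 2 x² / ε` replaces the Cauchy-Schwarz inequality.
      have hB : ∀ x, ‖deriv (iteratedDeriv (k - 1 - 0) g) x‖ ≤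
          ε / 2 + 2 / ε * (iteratedDeriv k g x) ^ 2 := by
        intro x
        rw [← iteratedDeriv_succ, show k - 1 - 0 + 1 = k by omega, Real.norm_eq_abs,
          ← sq_abs (iteratedDeriv k g x)]
        set y := |iteratedDeriv k g x|
        have : ε / 2 + 2 / ε * y ^ 2 - y = (2 * (y - ε / 4) ^ 2 + 3 * ε ^ 2 / 8) / ε := by
          field_simp
          ring
        have h2 : 0 ≤ (2 * (y - ε / 4) ^ 2 + 3 * ε ^ 2 / 8) / ε := by positivity
        linarith
      have hBc : Continuous fun x => ε / 2 + 2 / ε * (iteratedDeriv k g x) ^ 2 := by fun_prop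
      have := norm_sub_le_integral_of_norm_deriv_le_of_le (f := iteratedDeriv (k - 1 - 0) g) hs.1
        (hdiff _ (by omega)).continuous.continuousOn (hdiff _ (by omega)).differentiableOn
        (.of_forall fun x _ => hB x) (hBc.intervalIntegrable _ _)
      rw [← Real.norm_eq_abs]
      refine this.trans ?_
      calc ∫ x in t..s, (ε / 2 + 2 / ε * (iteratedDeriv k g x) ^ 2)
          ≤ ∫ x in t..(t + 1), (ε / 2 + 2 / ε * (iteratedDeriv k g x) ^ 2) := by
            refine intervalIntegral.integral_mono_interval le_rfl hs.1 hs.2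
              (.of_forall fun x => ?_) (hBc.intervalIntegrable _ _)
            simp only [Pi.zero_apply]
            positivity
        _ = ε / 2 + 2 / ε * ∫ x in t..(t + 1), (iteratedDeriv k g x) ^ 2 := by
            rw [intervalIntegral.integral_add (by simp) ((by fun_prop : Continuous
              fun x => 2 / ε * (iteratedDeriv k g x) ^ 2).intervalIntegrable _ _)]
            simp
        _ ≤ ε / 2 + 2 / ε * (ε * ε / 4) := by gcongr; exact ht.2.le
        _ = ε := by field_simp; ring
    | succ n ih =>
      intro hn
      have hi := ih (by omega)
      refine key _ (by omega) fun ε hε => ?_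
      obtain ⟨T, hT⟩ := eventually_atTop.1 ((Metric.tendsto_nhds.1 hi) ε hε)
      filter_upwards [eventually_ge_atTop T] with t ht s hs
      have := (convex_Icc t (t + 1)).norm_image_sub_le_of_norm_deriv_le
        (f := iteratedDeriv (k - 1 - (n + 1)) g) (C := ε)
        (fun x _ => (hdiff _ (by omega)) x) (fun x hx => by
          rw [← iteratedDeriv_succ, show k - 1 - (n + 1) + 1 = k - 1 - n by omega]
          have := hT x (ht.trans hx.1)
          rw [dist_zero_right] at this
          exact this.le) (left_mem_Icc.2 (by linarith)) hs
      rw [← Real.norm_eq_abs]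
      refine this.trans ?_
      rw [Real.norm_eq_abs, abs_of_nonneg (by linarith [hs.1])]
      nlinarith [hs.2]
  intro j hj
  have := main (k - 1 - j) (by omega)
  rwa [show k - 1 - (k - 1 - j) = j by omega] at this

/-! ### Gluing and reflection -/

/-- A profile of finite energy tending to `1` at `+∞` can be made identically `1` near `+∞`, without
changing it on a prescribed half-line `(-∞, T₀]`, at an arbitrarily small energy cost. -/
lemma exists_glue (k : ℕ) (hk : 1 ≤ k) (W : ℝ → ℝ) (hWc : Continuous W) (hWnn : ∀ z, 0 ≤ W z)
    (hWp : W 1 = 0) (u : ℝ → ℝ) (hu : ContDiff ℝ k u) (hlim : Tendsto u atTop (𝓝 1))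
    (hE : transitionEnergy k W u ≠ ⊤) (ε : ℝ) (hε : 0 < ε) (T₀ : ℝ) :
    ∃ T ≥ T₀, ∃ v : ℝ → ℝ, ContDiff ℝ k v ∧ (∀ t ≤ T, v t = u t) ∧ (∀ t, T + 1 ≤ t → v t = 1) ∧
      transitionEnergy k W v ≤ transitionEnergy k W u + ENNReal.ofReal ε := by
  set g : ℝ → ℝ := fun t => -1 + u t with hgdef
  have hg : ContDiff ℝ k g := contDiff_const.add hu
  have hg0 : Tendsto g atTop (𝓝 0) := by simpa using hlim.const_add (-1)
  have hgk : iteratedDeriv k g = iteratedDeriv k u := by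
    ext x; exact iteratedDeriv_const_add (by omega) _
  have hhc : Continuous (iteratedDeriv k g) := hg.continuous_iteratedDeriv k le_rfl
  have hint : Integrable (fun t => (iteratedDeriv k g t) ^ 2) := by
    refine ⟨(hhc.pow 2).aestronglyMeasurable, ?_⟩
    rw [hasFiniteIntegral_iff_ofReal (.of_forall fun t => sq_nonneg _), hgk]
    refine lt_of_le_of_lt (lintegral_mono fun t => ?_) hE.lt_top
    exact ENNReal.ofReal_le_ofReal (by linarith [hWnn (u t)])
  have hder := tendsto_iteratedDeriv_zero k g hg hg0 hint
  set ψ : ℝ → ℝ := fun s => 1 - Real.smoothTransition s with hψdef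
  have hψ : ∀ n : ℕ, ContDiff ℝ n ψ := fun n =>
    contDiff_const.sub (Real.smoothTransition.contDiff (n := n))
  have hψc : Continuous fun s => ∑ i ∈ Finset.range (k + 1), (k.choose i : ℝ) *
      |iteratedDeriv i ψ s| := by
    refine continuous_finsetSum _ fun i _ => continuous_const.mul ?_
    exact ((hψ i).continuous_iteratedDeriv i le_rfl).abs
  obtain ⟨M₀, hM₀⟩ := (isCompact_Icc (a := (0:ℝ)) (b := 1)).bddAbove_image hψc.continuousOn
  obtain ⟨M, hM1, hM⟩ : ∃ M : ℝ, 1 ≤ M ∧ ∀ s ∈ Icc (0:ℝ) 1,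
      ∑ i ∈ Finset.range (k + 1), (k.choose i : ℝ) * |iteratedDeriv i ψ s| ≤ M :=
    ⟨max 1 M₀, le_max_left _ _, fun s hs => (hM₀ ⟨s, hs, rfl⟩).trans (le_max_right _ _)⟩
  set K : ℝ := 2 * M ^ 2 with hK
  have hK0 : 0 < K := by positivity
  set δ : ℝ := √(ε / (3 * K)) with hδ
  have hδ0 : 0 < δ := Real.sqrt_pos.2 (by positivity)
  have hδ2 : K * δ ^ 2 = ε / 3 := by
    rw [hδ, Real.sq_sqrt (by positivity)]; field_simp
  obtain ⟨η, hη, hWη⟩ := Metric.continuousAt_iff.1 (hWc.continuousAt (x := 1)) (ε / 3)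
    (by positivity)
  have ev1 : ∀ᶠ t in atTop, ∀ j ∈ Finset.range k, |iteratedDeriv j g t| ≤ δ := by
    rw [Filter.eventually_all_finset]
    intro j hj
    filter_upwards [(Metric.tendsto_nhds.1 (hder j (Finset.mem_range.1 hj))) δ hδ0] with t ht
    rw [Real.dist_eq, sub_zero] at ht
    exact ht.le
  have ev2 : ∀ᶠ t in atTop, |g t| < η := by
    filter_upwards [(Metric.tendsto_nhds.1 hg0) η hη] with t ht
    rwa [Real.dist_eq, sub_zero] at ht
  obtain ⟨T₁, hT₁⟩ := eventually_atTop.1 (ev1.and ev2)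
  have ev3 : ∀ᶠ t in atTop, ∫ s in t..(t + 1), (iteratedDeriv k g s) ^ 2 ≤ ε / (3 * K) := by
    filter_upwards [(Metric.tendsto_nhds.1 (tendsto_integral_unit _ hint)) (ε / (3 * K))
      (by positivity)] with t ht
    rw [Real.dist_eq, sub_zero, abs_lt] at ht
    exact ht.2.le
  obtain ⟨T, hT3, hTT₁, hTT₀⟩ := (ev3.and ((eventually_ge_atTop T₁).and
    (eventually_ge_atTop T₀))).exists
  have hψT : ContDiff ℝ k fun t => ψ (t - T) := (hψ k).comp (contDiff_id.sub contDiff_const)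
  set v : ℝ → ℝ := fun t => 1 + ((fun t => ψ (t - T)) * g) t with hvdef
  have hv1 : ∀ t ≤ T, v t = u t := fun t ht => by
    simp [hvdef, hψdef, hgdef, Real.smoothTransition.zero_of_nonpos (sub_nonpos.2 ht)]
  have hv2 : ∀ t, T + 1 ≤ t → v t = 1 := fun t ht => by
    simp [hvdef, hψdef, Real.smoothTransition.one_of_one_le (by linarith : 1 ≤ t - T)]
  refine ⟨T, hTT₀, v, contDiff_const.add (hψT.mul hg), hv1, hv2, ?_⟩
  have hbound : ∀ t ∈ Icc T (T + 1), W (v t) + (iteratedDeriv k v t) ^ 2 ≤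
      2 * ε / 3 + K * (iteratedDeriv k g t) ^ 2 := by
    intro t ht
    obtain ⟨hd, hgη⟩ := hT₁ t (hTT₁.trans ht.1)
    have hWv : W (v t) ≤ ε / 3 := by
      have h1 : dist (v t) 1 < η := by
        rw [Real.dist_eq]
        have h2 : v t - 1 = ψ (t - T) * g t := by simp [hvdef]
        rw [h2, abs_mul]
        have h3 : |ψ (t - T)| ≤ 1 := by
          rw [abs_le]
          constructor <;> simp only [hψdef] <;>
            linarith [Real.smoothTransition.le_one (t - T), Real.smoothTransition.nonneg (t - T)]
        calc |ψ (t - T)| * |g t| ≤ 1 * |g t| := by gcongr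
          _ < η := by rwa [one_mul]
      have h4 := hWη h1
      rw [hWp, Real.dist_eq, sub_zero, abs_lt] at h4
      exact h4.2.le
    have hvk : |iteratedDeriv k v t| ≤ M * (δ + |iteratedDeriv k g t|) := by
      rw [hvdef, iteratedDeriv_const_add (by omega),
        iteratedDeriv_mul hψT.contDiffAt hg.contDiffAt]
      refine (Finset.abs_sum_le_sum_abs _ _).trans ?_
      refine le_trans ?_ (mul_le_mul_of_nonneg_right
        (hM (t - T) ⟨by linarith [ht.1], by linarith [ht.2]⟩) (by positivity))
      rw [Finset.sum_mul]
      refine Finset.sum_le_sum fun i hi => ?_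
      rw [iteratedDeriv_comp_sub_const, abs_mul, abs_mul, Nat.abs_cast]
      gcongr
      rcases Nat.eq_zero_or_pos i with rfl | hi0
      · simp [hδ0.le]
      · have := hd (k - i) (Finset.mem_range.2 (by omega))
        linarith [abs_nonneg (iteratedDeriv k g t)]
    have hsq : (iteratedDeriv k v t) ^ 2 ≤ K * δ ^ 2 + K * (iteratedDeriv k g t) ^ 2 := by
      rw [← sq_abs, ← sq_abs (iteratedDeriv k g t)]
      calc |iteratedDeriv k v t| ^ 2 ≤ (M * (δ + |iteratedDeriv k g t|)) ^ 2 := by gcongr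
        _ ≤ K * δ ^ 2 + K * |iteratedDeriv k g t| ^ 2 := by
          rw [hK]
          nlinarith [mul_nonneg (sq_nonneg M) (sq_nonneg (δ - |iteratedDeriv k g t|))]
    linarith
  set B : ℝ → ℝ := fun t => 2 * ε / 3 + K * (iteratedDeriv k g t) ^ 2 with hB
  have hBc : Continuous B := by rw [hB]; fun_prop
  have hpt : ∀ t, ENNReal.ofReal (W (v t) + (iteratedDeriv k v t) ^ 2) ≤
      ENNReal.ofReal (W (u t) + (iteratedDeriv k u t) ^ 2) +
        (Icc T (T + 1)).indicator (fun t => ENNReal.ofReal (B t)) t := by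
    intro t
    rcases lt_or_ge t T with h | h
    · rw [hv1 t h.le, (show EqOn v u (Iio T) from fun s hs => hv1 s
        (mem_Iio.1 hs).le).iteratedDeriv_of_isOpen isOpen_Iio k h]
      exact le_self_add
    rcases lt_or_ge (T + 1) t with h' | h'
    · rw [hv2 t h'.le, hWp, (show EqOn v (fun _ => (1:ℝ)) (Ioi (T + 1)) from fun s hs => hv2 s
        (mem_Ioi.1 hs).le).iteratedDeriv_of_isOpen isOpen_Ioi k h', iteratedDeriv_const,
        if_neg (by omega)]
      simp
    · rw [indicator_of_mem (show t ∈ Icc T (T + 1) from ⟨h, h'⟩)]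
      exact (ENNReal.ofReal_le_ofReal (hbound t ⟨h, h'⟩)).trans le_add_self
  calc transitionEnergy k W v ≤ ∫⁻ t, (ENNReal.ofReal (W (u t) + (iteratedDeriv k u t) ^ 2) +
        (Icc T (T + 1)).indicator (fun t => ENNReal.ofReal (B t)) t) := lintegral_mono hpt
    _ = transitionEnergy k W u + ∫⁻ t in Icc T (T + 1), ENNReal.ofReal (B t) := by
      rw [lintegral_add_right _ (hBc.measurable.ennreal_ofReal.indicator measurableSet_Icc),
        lintegral_indicator measurableSet_Icc, transitionEnergy]
    _ ≤ transitionEnergy k W u + ENNReal.ofReal ε := by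
      gcongr
      rw [← ofReal_integral_eq_lintegral_ofReal hBc.integrableOn_Icc
        (.of_forall fun t => by simp only [hB, Pi.zero_apply]; positivity),
        integral_Icc_eq_integral_Ioc, ← intervalIntegral.integral_of_le (by linarith)]
      refine ENNReal.ofReal_le_ofReal ?_
      rw [hB, intervalIntegral.integral_add (by simp) ((by fun_prop : Continuous
        fun x => K * (iteratedDeriv k g x) ^ 2).intervalIntegrable _ _)]
      simp only [intervalIntegral.integral_const, add_sub_cancel_left, one_smul,
        intervalIntegral.integral_const_mul]
      have : K * ∫ s in T..(T + 1), (iteratedDeriv k g s) ^ 2 ≤ K * (ε / (3 * K)) := by gcongr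
      have h2 : K * (ε / (3 * K)) = ε / 3 := by field_simp
      linarith

lemma transitionEnergy_reflect (k : ℕ) (W : ℝ → ℝ) (u : ℝ → ℝ) :
    transitionEnergy k (fun z => W (-z)) (fun t => -u (-t)) = transitionEnergy k W u := by
  have h : ∀ t, ENNReal.ofReal (W (- -u (-t)) + (iteratedDeriv k (fun t => -u (-t)) t) ^ 2) =
      (fun t => ENNReal.ofReal (W (u t) + (iteratedDeriv k u t) ^ 2)) (-t) := by
    intro t
    rw [iteratedDeriv_fun_neg, iteratedDeriv_comp_neg, smul_eq_mul, neg_neg, neg_sq, mul_pow,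
      ← pow_mul, mul_comm k 2, pow_mul, neg_one_sq, one_pow, one_mul]
  unfold transitionEnergy
  simp_rw [h]
  exact lintegral_neg_eq_self (μ := volume)
    (f := fun t => ENNReal.ofReal (W (u t) + (iteratedDeriv k u t) ^ 2))

/-- Proposition 4.1: `m_k = m̃_k`. -/
theorem statement7 (k : ℕ) (hk : 1 ≤ k) (W : ℝ → ℝ) (αW βW : ℝ)
    (hα : 0 < αW) (hβ : 0 < βW) (hWc : Continuous W) (hWnn : ∀ z, 0 ≤ W z)
    (hWm : W (-1) = 0) (hWp : W 1 = 0)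
    (hWlb : ∀ z, αW * min (min ((z + 1) ^ 2) ((z - 1) ^ 2)) βW ≤ W z) :
    mK k W = mKtilde k W := by
  refine le_antisymm ?_ ?_
  · refine le_iInf₂ fun u ⟨hu, T, _, hm, hp⟩ => iInf₂_le u ⟨hu, ?_, ?_⟩
    · exact tendsto_const_nhds.congr' ((eventually_le_atBot (-T)).mono fun t ht => (hm t ht).symm)
    · exact tendsto_const_nhds.congr' ((eventually_ge_atTop T).mono fun t ht => (hp t ht).symm)
  · refine le_iInf₂ fun u ⟨hu, hm, hp⟩ => ?_
    by_cases hE : transitionEnergy k W u = ⊤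
    · rw [hE]; exact le_top
    refine ENNReal.le_of_forall_pos_le_add fun ε hε _ => ?_
    have hε2 : (0:ℝ) < (ε:ℝ) / 2 := by positivity
    obtain ⟨T, hT, v, hv, hvu, hv1, hEv⟩ :=
      exists_glue k hk W hWc hWnn hWp u hu hp hE (ε / 2) hε2 1
    have hvm : Tendsto v atBot (𝓝 (-1)) :=
      hm.congr' ((eventually_le_atBot T).mono fun t ht => (hvu t ht).symm)
    have hvE : transitionEnergy k W v ≠ ⊤ :=
      ne_top_of_le_ne_top (ENNReal.add_ne_top.2 ⟨hE, ENNReal.ofReal_ne_top⟩) hEv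
    obtain ⟨S, hS, w, hw, hwv, hw1, hEw⟩ :=
      exists_glue k hk (fun z => W (-z)) (hWc.comp continuous_neg) (fun z => hWnn _) hWm
        (fun t => -v (-t)) (hv.comp contDiff_neg).neg
        (by simpa using (hvm.comp tendsto_neg_atTop_atBot).neg)
        (by rwa [transitionEnergy_reflect]) (ε / 2) hε2 1
    have hmem : ∃ R > (0:ℝ), (∀ t ≤ -R, -w (-t) = -1) ∧ (∀ t, R ≤ t → -w (-t) = 1) := by
      refine ⟨max (T + 1) (S + 1), lt_max_of_lt_left (by linarith), fun t ht => ?_, fun t ht => ?_⟩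
      · rw [hw1 (-t) (by linarith [le_max_right (T + 1) (S + 1)])]
      · have h1 := (le_max_left (T + 1) (S + 1)).trans ht
        rw [hwv (-t) (by linarith), neg_neg, neg_neg, hv1 t h1]
    have h := transitionEnergy_reflect k (fun z => W (-z)) w
    simp only [neg_neg] at h
    rw [transitionEnergy_reflect] at hEw
    calc mKtilde k W ≤ transitionEnergy k W fun t => -w (-t) :=
          iInf₂_le (fun t => -w (-t)) ⟨(hw.comp contDiff_neg).neg, hmem⟩
      _ = transitionEnergy k (fun z => W (-z)) w := h
      _ ≤ transitionEnergy k W v + ENNReal.ofReal (ε / 2) := hEw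
      _ ≤ transitionEnergy k W u + ENNReal.ofReal (ε / 2) + ENNReal.ofReal (ε / 2) := by gcongr
      _ = transitionEnergy k W u + ε := by
        rw [add_assoc, ← ENNReal.ofReal_add hε2.le hε2.le, add_halves, ENNReal.ofReal_coe_nnreal]
end
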